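/- Suppose the lattice operator H is stable and admits a lattice Green's function 𝒢. Let p, α ∈ ℕ₀, c > 0, and let u ∈ 𝓗¹ satisfy |H[u](ℓ)| ≤ c⟨ℓ⟩^{−d−p}(log⟨ℓ⟩)^α for all ℓ ∈ Λ. Let 𝒮 ⊂ Λ be a lattice basis. Then there exist symmetric arrays b^{(i,k)} ∈ (ℝ^𝒮)^{⊙i} for 0 ≤ i ≤ p−1 and 1 ≤ k ≤ N such that the remainder w := u − ∑_{i=0}^{p−1}∑_{k=1}^{N} b^{(i,k)} : D_𝒮^i 𝒢_k satisfies, for each j ∈ {1,2}, |D^j w(ℓ)| ≤ C⟨ℓ⟩^{2−d−p−j}(log⟨ℓ⟩)^{α+1} for all ℓ ∈ Λ and some constant C. For j ≥ 3 the same bound holds provided additionally |D^m H[u](ℓ)| ≤ c⟨ℓ⟩^{−d−p−m}(log⟨ℓ⟩)^α for all ℓ and m = 1,…,j−2. -/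

import Mathlib

noncomputable section

open scoped BigOperators
open MeasureTheory Filter Topology

namespace Defect

abbrev Vec (n : ℕ) : Type := Fin n → ℝ

/-- Euclidean norm of a vector in `ℝ^n`. -/
def enorm {n : ℕ} (v : Vec n) : ℝ := Real.sqrt (∑ i, (v i) ^ 2)

/-- `⟨x⟩ := |x| + 2`. -/
def ang {n : ℕ} (v : Vec n) : ℝ := enorm v + 2

def dotV {n : ℕ} (x y : Vec n) : ℝ := ∑ i, x i * y i

/-- Matrix-vector product for a plain `Fin N → Fin N → ℝ` matrix. -/
def mulV {N : ℕ} (M : Fin N → Fin N → ℝ) (v : Vec N) : Vec N := fun i => ∑ j, M i j * v j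

/-- Euclidean (Frobenius) norm of an `N × N` array. -/
def mnorm {N : ℕ} (M : Fin N → Fin N → ℝ) : ℝ := Real.sqrt (∑ i, ∑ j, (M i j) ^ 2)

/-- The lattice point `A z` for `z ∈ ℤ^d`. -/
def latticePt (d : ℕ) (A : Matrix (Fin d) (Fin d) ℝ) (z : Fin d → ℤ) : Vec d :=
  fun i => ∑ j, A i j * (z j : ℝ)

/-- The Bravais lattice `Λ = A ℤ^d`. -/
def Lattice (d : ℕ) (A : Matrix (Fin d) (Fin d) ℝ) : Set (Vec d) :=
  Set.range (latticePt d A)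

/-- First-order finite difference `D_ρ u (ℓ) = u(ℓ+ρ) - u(ℓ)`. -/
def D1 {d : ℕ} {M : Type} [AddCommGroup M] (ρ : Vec d) (u : Vec d → M) (ℓ : Vec d) : M :=
  u (ℓ + ρ) - u ℓ

/-- Iterated finite difference `D_{ρ₁} ⋯ D_{ρ_j} u (ℓ)` (closed form). -/
def Dmulti {d : ℕ} {M : Type} [AddCommGroup M] [Module ℝ M] {j : ℕ}
    (ρs : Fin j → Vec d) (u : Vec d → M) (ℓ : Vec d) : M :=
  ∑ S : Finset (Fin j), ((-1 : ℝ) ^ (j - S.card)) • u (ℓ + ∑ i ∈ S, ρs i)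

/-- `|Du(ℓ)|²`, the squared Euclidean norm of the stencil of first differences. -/
def Dnorm1Sq {d N : ℕ} (R : Finset (Vec d)) (u : Vec d → Vec N) (ℓ : Vec d) : ℝ :=
  ∑ ρ ∈ R, (enorm (D1 ρ u ℓ)) ^ 2

/-- `|D^j u(ℓ)|`, the Euclidean norm of the array `(D_{ρ⃗} u(ℓ))_{ρ⃗ ∈ R^j}`. -/
def DnormJ {d N : ℕ} (R : Finset (Vec d)) (j : ℕ) (u : Vec d → Vec N) (ℓ : Vec d) : ℝ :=
  Real.sqrt (∑ ρs : Fin j → {x // x ∈ R},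
    (enorm (Dmulti (fun i => (ρs i : Vec d)) u ℓ)) ^ 2)

/-- The linearized lattice operator
`H[u](ℓ) = ∑_{σ,ρ∈R} (C_{σρ} D_ρ u(ℓ-σ) - C_{σρ} D_ρ u(ℓ))`. -/
def Hop (d N : ℕ) (R : Finset (Vec d)) (C : Vec d → Vec d → Fin N → Fin N → ℝ)
    (u : Vec d → Vec N) (ℓ : Vec d) : Vec N :=
  ∑ σ ∈ R, ∑ ρ ∈ R, (mulV (C σ ρ) (D1 ρ u (ℓ - σ)) - mulV (C σ ρ) (D1 ρ u ℓ))

/-- `u ∈ 𝓗¹`. -/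
def InH1 {d N : ℕ} (A : Matrix (Fin d) (Fin d) ℝ) (R : Finset (Vec d))
    (u : Vec d → Vec N) : Prop :=
  Summable fun z : Fin d → ℤ => Dnorm1Sq R u (latticePt d A z)

/-- `u ∈ 𝓗ᶜ` : the stencil `Du` has bounded support on the lattice. -/
def InHc {d N : ℕ} (A : Matrix (Fin d) (Fin d) ℝ) (R : Finset (Vec d))
    (u : Vec d → Vec N) : Prop :=
  ∃ rad : ℝ, ∀ z : Fin d → ℤ, rad ≤ enorm (latticePt d A z) →
    ∀ ρ ∈ R, D1 ρ u (latticePt d A z) = 0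

/-- Stability of the lattice operator `H`. -/
def IsStable (d N : ℕ) (A : Matrix (Fin d) (Fin d) ℝ) (R : Finset (Vec d))
    (C : Vec d → Vec d → Fin N → Fin N → ℝ) : Prop :=
  ∃ c₀ : ℝ, 0 < c₀ ∧ ∀ u : Vec d → Vec N, InHc A R u →
    c₀ * (∑' z : Fin d → ℤ, Dnorm1Sq R u (latticePt d A z)) ≤
      ∑' z : Fin d → ℤ, ∑ σ ∈ R, ∑ ρ ∈ R,
        dotV (D1 σ u (latticePt d A z)) (mulV (C σ ρ) (D1 ρ u (latticePt d A z)))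

/-- `k`-th column of a matrix-valued function. -/
def col {d N : ℕ} (G : Vec d → Fin N → Fin N → ℝ) (k : Fin N) : Vec d → Vec N :=
  fun x i => G x i k

/-- `|D^j 𝒢(ℓ)|` for matrix-valued `𝒢`. -/
def DnormJmat {d N : ℕ} (R : Finset (Vec d)) (j : ℕ)
    (G : Vec d → Fin N → Fin N → ℝ) (ℓ : Vec d) : ℝ :=
  Real.sqrt (∑ k : Fin N, (DnormJ R j (col G k) ℓ) ^ 2)

/-- `𝒢` is a lattice Green's function for `H`. -/
def IsLatticeGreen (d N : ℕ) (A : Matrix (Fin d) (Fin d) ℝ) (R : Finset (Vec d))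
    (C : Vec d → Vec d → Fin N → Fin N → ℝ) (G : Vec d → Fin N → Fin N → ℝ) : Prop :=
  (∀ (k : Fin N) (z : Fin d → ℤ),
      Hop d N R C (col G k) (latticePt d A z) =
        if latticePt d A z = 0 then Pi.single k 1 else 0) ∧
  (∀ j : ℕ, 1 ≤ j → ∃ cj : ℝ, ∀ z : Fin d → ℤ,
      DnormJmat R j G (latticePt d A z) ≤
        cj * ang (latticePt d A z) ^ ((2 : ℝ) - d - j))

/-- A symmetric array `b ∈ (ℝ^{Fin d})^{⊙ i}`. -/
def SymArr {d i : ℕ} (b : (Fin i → Fin d) → ℝ) : Prop :=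
  ∀ (π : Equiv.Perm (Fin i)) (σv : Fin i → Fin d), b (σv ∘ π) = b σv

/-- `b : D_𝒮^i f`, a multipole term built from the basis `s`. -/
def multipole (d N : ℕ) (s : Fin d → Vec d) (i : ℕ) (b : (Fin i → Fin d) → ℝ)
    (f : Vec d → Vec N) : Vec d → Vec N :=
  fun ℓ => ∑ σv : Fin i → Fin d, b σv • Dmulti (fun m => s (σv m)) f ℓ

/-- Iterated partial derivative `∂_{j₁} ⋯ ∂_{j_i} f (x)`. -/
def pderivMulti {d : ℕ} (i : ℕ) (js : Fin i → Fin d) (f : Vec d → ℝ) (x : Vec d) : ℝ :=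
  iteratedFDeriv ℝ i f x (fun m => Pi.single (js m) (1 : ℝ))

/-- `a : ∇^i f (x)` for a tensor `a ∈ (ℝ^d)^{⊗ i}`. -/
def aContract {d : ℕ} (i : ℕ) (a : (Fin i → Fin d) → ℝ) (f : Vec d → ℝ) (x : Vec d) : ℝ :=
  ∑ js : Fin i → Fin d, a js * pderivMulti i js f x

/-- Elementary tensor `σ⃗^⊗` as an array. -/
def tensorPow {d k : ℕ} (σs : Fin k → Vec d) : (Fin k → Fin d) → ℝ :=
  fun js => ∏ m, σs m (js m)

/-- Symmetric tensor product `σ⃗^⊙`. -/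
def symTensor {d k : ℕ} (σs : Fin k → Vec d) : (Fin k → Fin d) → ℝ :=
  fun js => ((k.factorial : ℝ))⁻¹ * ∑ π : Equiv.Perm (Fin k), tensorPow (σs ∘ π) js

/-- A symmetric tensor (array invariant under index permutations). -/
def SymTensor {d k : ℕ} (T : (Fin k → Fin d) → ℝ) : Prop :=
  ∀ (π : Equiv.Perm (Fin k)) (js : Fin k → Fin d), T (js ∘ π) = T js

/-- `∂V/∂g_ρ (gs)` as a vector in `ℝ^N`. -/
def gradV {d N : ℕ} (R : Finset (Vec d)) (V : ({x // x ∈ R} → Vec N) → ℝ)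
    (ρ : {x // x ∈ R}) (gs : {x // x ∈ R} → Vec N) : Vec N :=
  fun i => fderiv ℝ V gs (Pi.single ρ (Pi.single i 1))

/-- The finite-difference stencil `Du(ℓ) = (D_ρ u(ℓ))_{ρ ∈ R}`. -/
def Dstencil {d N : ℕ} (R : Finset (Vec d)) (u : Vec d → Vec N) (ℓ : Vec d) :
    {x // x ∈ R} → Vec N :=
  fun ρ => D1 (ρ : Vec d) u ℓ

/-- `C_{σρ} = ∂²V/∂g_σ ∂g_ρ (0)`. -/
def CofV {d N : ℕ} (R : Finset (Vec d)) (V : ({x // x ∈ R} → Vec N) → ℝ)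
    (σ ρ : Vec d) (i j : Fin N) : ℝ :=
  if hσ : σ ∈ R then
    if hρ : ρ ∈ R then
      iteratedFDeriv ℝ 2 V 0
        ![Pi.single ⟨σ, hσ⟩ (Pi.single i 1), Pi.single ⟨ρ, hρ⟩ (Pi.single j 1)]
    else 0
  else 0

/-- Summand of the first variation `δE(u)[v]` at a site. -/
def deltaEsite {d N : ℕ} (R : Finset (Vec d)) (V : ({x // x ∈ R} → Vec N) → ℝ)
    (u v : Vec d → Vec N) (ℓ : Vec d) : ℝ :=
  ∑ ρ ∈ R.attach, dotV (gradV R V ρ (Dstencil R u ℓ)) (D1 (ρ : Vec d) v ℓ)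

/-- The pointwise atomistic force `δE(u)(ℓ)`. -/
def deltaEpt {d N : ℕ} (R : Finset (Vec d)) (V : ({x // x ∈ R} → Vec N) → ℝ)
    (u : Vec d → Vec N) (ℓ : Vec d) : Vec N :=
  ∑ ρ ∈ R.attach,
    (gradV R V ρ (Dstencil R u (ℓ - (ρ : Vec d))) - gradV R V ρ (Dstencil R u ℓ))

/-- Point symmetry of the site potential. -/
def PointSym {d N : ℕ} (R : Finset (Vec d)) (hRsym : ∀ ρ ∈ R, -ρ ∈ R)
    (V : ({x // x ∈ R} → Vec N) → ℝ) : Prop :=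
  ∀ gs : {x // x ∈ R} → Vec N,
    V (fun ρ => -(gs ⟨-(ρ : Vec d), hRsym _ ρ.2⟩)) = V gs

/-- The Cauchy–Born elasticity tensor `ℂ_{iajb}`. -/
def CB {d N : ℕ} (A : Matrix (Fin d) (Fin d) ℝ) (R : Finset (Vec d))
    (C : Vec d → Vec d → Fin N → Fin N → ℝ)
    (i : Fin N) (a : Fin d) (j : Fin N) (b : Fin d) : ℝ :=
  (|A.det|)⁻¹ * ∑ ρ ∈ R, ∑ σ ∈ R, C ρ σ i j * ρ a * σ b

/-! ### Integer lattice, weights, differences -/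

abbrev Zd (d : ℕ) : Type := Fin d → ℤ

def nr {d : ℕ} (z : Zd d) : ℕ := Finset.univ.sup fun i => (z i).natAbs

def aa {d : ℕ} (z : Zd d) : ℝ := (nr z : ℝ) + 2

def wt {d : ℕ} (z : Zd d) : ℝ := (aa z)⁻¹

def lg {d : ℕ} (z : Zd d) : ℝ := Real.log (aa z)

theorem le_nr {d : ℕ} (z : Zd d) (i : Fin d) : (z i).natAbs ≤ nr z :=
  Finset.le_sup (f := fun i => (z i).natAbs) (Finset.mem_univ i)

theorem nr_le {d : ℕ} {z : Zd d} {k : ℕ} : nr z ≤ k ↔ ∀ i, (z i).natAbs ≤ k := by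
  simp [nr, Finset.sup_le_iff]

theorem nr_zero {d : ℕ} : nr (0 : Zd d) = 0 := by
  apply Nat.le_zero.mp
  rw [nr_le]; simp

theorem nr_neg {d : ℕ} (z : Zd d) : nr (-z) = nr z := by
  simp [nr]

theorem nr_add {d : ℕ} (x y : Zd d) : nr (x + y) ≤ nr x + nr y := by
  rw [nr_le]
  intro i
  have h1 := le_nr x i
  have h2 := le_nr y i
  have := Int.natAbs_add_le (x i) (y i)
  simp only [Pi.add_apply]
  omega

theorem nr_sub {d : ℕ} (x y : Zd d) : nr (x - y) ≤ nr x + nr y := by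
  rw [sub_eq_add_neg]
  exact (nr_add _ _).trans (by rw [nr_neg])

theorem two_le_aa {d : ℕ} (z : Zd d) : 2 ≤ aa z := by
  unfold aa; have : (0:ℝ) ≤ nr z := Nat.cast_nonneg _
  linarith

theorem aa_pos {d : ℕ} (z : Zd d) : 0 < aa z := by linarith [two_le_aa z]

theorem wt_pos {d : ℕ} (z : Zd d) : 0 < wt z := inv_pos.mpr (aa_pos z)

theorem wt_le_one {d : ℕ} (z : Zd d) : wt z ≤ 1 :=
  inv_le_one_of_one_le₀ (by linarith [two_le_aa z])

theorem wt_mul_aa {d : ℕ} (z : Zd d) : wt z * aa z = 1 := inv_mul_cancel₀ (aa_pos z).ne'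

theorem aa_mul_wt {d : ℕ} (z : Zd d) : aa z * wt z = 1 := mul_inv_cancel₀ (aa_pos z).ne'

theorem log_two_le_lg {d : ℕ} (z : Zd d) : Real.log 2 ≤ lg z :=
  Real.log_le_log (by norm_num) (two_le_aa z)

theorem log_two_pos : 0 < Real.log 2 := Real.log_pos (by norm_num)

theorem lg_pos {d : ℕ} (z : Zd d) : 0 < lg z := log_two_pos.trans_le (log_two_le_lg z)

theorem aa_neg {d : ℕ} (z : Zd d) : aa (-z) = aa z := by simp [aa, nr_neg]
theorem wt_neg {d : ℕ} (z : Zd d) : wt (-z) = wt z := by simp [wt, aa_neg]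
theorem lg_neg {d : ℕ} (z : Zd d) : lg (-z) = lg z := by simp [lg, aa_neg]

/-- log of a multiple -/
theorem log_mul_le {K t : ℝ} (hK : 1 ≤ K) (ht : 2 ≤ t) :
    Real.log (K * t) ≤ (1 + Real.log K / Real.log 2) * Real.log t := by
  rw [Real.log_mul (by linarith) (by linarith)]
  have h2 : Real.log 2 ≤ Real.log t := Real.log_le_log (by norm_num) ht
  have h0 := log_two_pos
  have hk : 0 ≤ Real.log K := Real.log_nonneg hK
  have : Real.log K ≤ Real.log K / Real.log 2 * Real.log t := by
    rw [div_mul_eq_mul_div, le_div_iff₀ h0]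
    exact mul_le_mul_of_nonneg_left h2 hk
  linarith

theorem aa_add_le {d : ℕ} (z e : Zd d) : aa (z + e) ≤ (1 + nr e) * aa z := by
  have h : (nr (z + e) : ℝ) ≤ nr z + nr e := by exact_mod_cast nr_add z e
  have := two_le_aa z
  unfold aa at *
  have h1 : (0:ℝ) ≤ nr e := Nat.cast_nonneg _
  nlinarith

theorem wt_le_of_aa {d : ℕ} {x y : Zd d} {K : ℝ} (h : aa y ≤ K * aa x) :
    wt x ≤ K * wt y := by
  unfold wt
  have hx := aa_pos x
  have hy := aa_pos y
  rw [← div_eq_mul_inv, le_div_iff₀ hy, inv_mul_le_iff₀ hx, mul_comm]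
  exact h

theorem wt_add_le {d : ℕ} (z e : Zd d) : wt (z + e) ≤ (1 + nr e) * wt z := by
  apply wt_le_of_aa
  have := aa_add_le (z + e) (-e)
  simpa [nr_neg] using this

theorem lg_le_of_aa {d : ℕ} {x y : Zd d} {K : ℝ} (hK : 1 ≤ K) (h : aa y ≤ K * aa x) :
    lg y ≤ (1 + Real.log K / Real.log 2) * lg x :=
  (Real.log_le_log (aa_pos y) h).trans (log_mul_le hK (two_le_aa x))

theorem lg_add_le {d : ℕ} (z e : Zd d) :
    lg (z + e) ≤ (1 + Real.log (1 + nr e) / Real.log 2) * lg z :=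
  lg_le_of_aa (by simp) (aa_add_le z e)

/-- Forward difference operator. -/
def Df {d : ℕ} (e : Zd d) : (Zd d → ℝ) →ₗ[ℝ] (Zd d → ℝ) where
  toFun f := fun x => f (x + e) - f x
  map_add' f g := by funext x; simp only [Pi.add_apply]; ring
  map_smul' c f := by funext x; simp only [Pi.smul_apply, smul_eq_mul, RingHom.id_apply]; ring

theorem Df_apply {d : ℕ} (e : Zd d) (f : Zd d → ℝ) (x : Zd d) :
    Df e f x = f (x + e) - f x := rfl

/-- Shift operator. -/
def Sh {d : ℕ} (e : Zd d) : (Zd d → ℝ) →ₗ[ℝ] (Zd d → ℝ) where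
  toFun f := fun x => f (x + e)
  map_add' f g := rfl
  map_smul' c f := rfl

theorem Sh_apply {d : ℕ} (e : Zd d) (f : Zd d → ℝ) (x : Zd d) :
    Sh e f x = f (x + e) := rfl

theorem Df_comm {d : ℕ} (e e' : Zd d) (f : Zd d → ℝ) : Df e (Df e' f) = Df e' (Df e f) := by
  funext x; simp only [Df_apply]
  rw [add_right_comm x e e']; ring

theorem Df_Sh {d : ℕ} (e e' : Zd d) (f : Zd d → ℝ) : Df e (Sh e' f) = Sh e' (Df e f) := by
  funext x; simp only [Df_apply, Sh_apply]
  rw [add_right_comm x e e']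

/-- Iterated differences. -/
def Dl {d : ℕ} : List (Zd d) → (Zd d → ℝ) →ₗ[ℝ] (Zd d → ℝ)
  | [] => LinearMap.id
  | e :: l => Df e ∘ₗ Dl l

theorem Dl_nil {d : ℕ} (f : Zd d → ℝ) : Dl [] f = f := rfl
theorem Dl_cons {d : ℕ} (e : Zd d) (l : List (Zd d)) (f : Zd d → ℝ) :
    Dl (e :: l) f = Df e (Dl l f) := rfl

theorem Dl_append {d : ℕ} (l l' : List (Zd d)) (f : Zd d → ℝ) :
    Dl (l ++ l') f = Dl l (Dl l' f) := by
  induction l with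
  | nil => rfl
  | cons e l ih => simp only [List.cons_append, Dl_cons, ih]

theorem Dl_Df {d : ℕ} (l : List (Zd d)) (e : Zd d) (f : Zd d → ℝ) :
    Dl l (Df e f) = Df e (Dl l f) := by
  induction l with
  | nil => rfl
  | cons e' l ih => simp only [Dl_cons, ih, Df_comm]

theorem Dl_Sh {d : ℕ} (l : List (Zd d)) (e : Zd d) (f : Zd d → ℝ) :
    Dl l (Sh e f) = Sh e (Dl l f) := by
  induction l with
  | nil => rfl
  | cons e' l ih => simp only [Dl_cons, ih, Df_Sh]

theorem Dl_Dl_comm {d : ℕ} (l l' : List (Zd d)) (f : Zd d → ℝ) :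
    Dl l (Dl l' f) = Dl l' (Dl l f) := by
  induction l with
  | nil => rfl
  | cons e' l ih => simp only [Dl_cons, ih, Dl_Df]

theorem Dl_perm {d : ℕ} {l l' : List (Zd d)} (h : l.Perm l') (f : Zd d → ℝ) :
    Dl l f = Dl l' f := by
  induction h with
  | nil => rfl
  | cons x _ ih => simp only [Dl_cons, ih]
  | swap x y l => simp only [Dl_cons, Df_comm]
  | trans _ _ ih1 ih2 => rw [ih1, ih2]

theorem Df_refl {d : ℕ} (e : Zd d) (f : Zd d → ℝ) :
    Df e (fun x => f (-x)) = fun x => Df (-e) f (-x) := by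
  funext x; simp only [Df_apply]; rw [neg_add]

theorem Dl_refl {d : ℕ} (l : List (Zd d)) (f : Zd d → ℝ) :
    Dl l (fun x => f (-x)) = fun x => Dl (l.map (fun e => -e)) f (-x) := by
  induction l with
  | nil => rfl
  | cons e l ih => simp only [Dl_cons, ih, List.map_cons, Df_refl]

/-- Classes of functions stable under translation. -/
structure TInv {d : ℕ} (X : (Zd d → ℝ) → Prop) : Prop where
  zero : X 0
  add : ∀ f g, X f → X g → X (f + g)
  neg : ∀ f, X f → X (-f)
  sh : ∀ e f, X f → X (Sh e f)

theorem TInv.all_dir {d : ℕ} {X : (Zd d → ℝ) → Prop} (hX : TInv X) {R : Set (Zd d)}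
    (hR : AddSubgroup.closure R = ⊤) {f : Zd d → ℝ} (hf : ∀ ρ ∈ R, X (Df ρ f)) (e : Zd d) :
    X (Df e f) := by
  have he : e ∈ AddSubgroup.closure R := by rw [hR]; trivial
  induction he using AddSubgroup.closure_induction with
  | mem x hx => exact hf x hx
  | zero =>
    have : Df 0 f = 0 := by funext x; simp [Df_apply]
    rw [this]; exact hX.zero
  | add x y _ _ hx hy =>
    have : Df (x + y) f = Sh y (Df x f) + Df y f := by
      funext z; simp only [Df_apply, Sh_apply, Pi.add_apply]
      rw [add_right_comm z y x, add_assoc]; ring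
    rw [this]; exact hX.add _ _ (hX.sh _ _ hx) hy
  | neg x _ hx =>
    have : Df (-x) f = -(Sh (-x) (Df x f)) := by
      funext z; simp only [Df_apply, Sh_apply, Pi.neg_apply]
      rw [neg_add_cancel_right]; ring
    rw [this]; exact hX.neg _ (hX.sh _ _ hx)

theorem TInv.all_lists {d : ℕ} {X : (Zd d → ℝ) → Prop} (hX : TInv X) {R : Set (Zd d)}
    (hR : AddSubgroup.closure R = ⊤) (k : ℕ) : ∀ {f : Zd d → ℝ},
    (∀ l : List (Zd d), l.length = k → (∀ e ∈ l, e ∈ R) → X (Dl l f)) →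
    ∀ l : List (Zd d), l.length = k → X (Dl l f) := by
  induction k with
  | zero =>
    intro f hf l hl
    exact hf l hl (by rw [List.length_eq_zero_iff.mp hl]; simp)
  | succ k ih =>
    intro f hf l hl
    cases l with
    | nil => simp at hl
    | cons e l =>
      rw [Dl_cons]
      apply hX.all_dir hR
      intro ρ hρ
      rw [← Dl_Df]
      apply ih _ l (by simpa using hl)
      intro l' hl' hl'R
      rw [Dl_Df, ← Dl_cons]
      apply hf _ (by simpa using hl')
      intro e he
      rcases List.mem_cons.mp he with h | h
      · rw [h]; exact hρ
      · exact hl'R _ h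

/-- Decay class. -/
def Dec {d : ℕ} (n α : ℕ) (f : Zd d → ℝ) : Prop :=
  ∃ C : ℝ, 0 ≤ C ∧ ∀ z, |f z| ≤ C * wt z ^ n * lg z ^ α

theorem Dec.tinv {d : ℕ} (n α : ℕ) : TInv (Dec (d := d) n α) where
  zero := ⟨0, le_rfl, by simp⟩
  add := by
    rintro f g ⟨C, hC, hf⟩ ⟨C', hC', hg⟩
    refine ⟨C + C', by positivity, fun z => ?_⟩
    calc |(f + g) z| ≤ |f z| + |g z| := abs_add_le _ _
      _ ≤ _ := by linarith [hf z, hg z]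
  neg := by
    rintro f ⟨C, hC, hf⟩
    exact ⟨C, hC, by simpa using hf⟩
  sh := by
    rintro e f ⟨C, hC, hf⟩
    have hK : 0 ≤ 1 + Real.log (1 + (nr e : ℝ)) / Real.log 2 := by
      have : 0 ≤ Real.log (1 + (nr e : ℝ)) := Real.log_nonneg (by simp)
      have := log_two_pos
      positivity
    refine ⟨C * (1 + nr e) ^ n * (1 + Real.log (1 + nr e) / Real.log 2) ^ α, by positivity,
      fun z => ?_⟩
    rw [Sh_apply]
    refine (hf _).trans ?_
    have h1 : wt (z + e) ^ n ≤ ((1 + nr e) * wt z) ^ n :=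
      pow_le_pow_left₀ (wt_pos _).le (wt_add_le z e) n
    have h2 : lg (z + e) ^ α ≤ ((1 + Real.log (1 + nr e) / Real.log 2) * lg z) ^ α :=
      pow_le_pow_left₀ (lg_pos _).le (lg_add_le z e) α
    have := (wt_pos (z+e)).le
    have := (wt_pos (z)).le
    have := (lg_pos (z+e)).le
    calc C * wt (z + e) ^ n * lg (z + e) ^ α
        ≤ C * ((1 + nr e) * wt z) ^ n * ((1 + Real.log (1 + nr e) / Real.log 2) * lg z) ^ α := by
          gcongr
      _ = _ := by rw [mul_pow, mul_pow]; ring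

theorem Dec.smul {d : ℕ} {n α : ℕ} {f : Zd d → ℝ} (hf : Dec n α f) (c : ℝ) : Dec n α (c • f) := by
  obtain ⟨C, hC, hf⟩ := hf
  refine ⟨|c| * C, by positivity, fun z => ?_⟩
  simp only [Pi.smul_apply, smul_eq_mul, abs_mul]
  have := mul_le_mul_of_nonneg_left (hf z) (abs_nonneg c)
  linarith

theorem Dec.add {d : ℕ} {n α : ℕ} {f g : Zd d → ℝ} (hf : Dec n α f) (hg : Dec n α g) :
    Dec n α (f + g) := (Dec.tinv n α).add _ _ hf hg

theorem Dec.sub {d : ℕ} {n α : ℕ} {f g : Zd d → ℝ} (hf : Dec n α f) (hg : Dec n α g) :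
    Dec n α (f - g) := by
  rw [sub_eq_add_neg]; exact hf.add ((Dec.tinv n α).neg _ hg)

theorem Dec.df {d : ℕ} {n α : ℕ} {f : Zd d → ℝ} (hf : Dec n α f) (e : Zd d) :
    Dec n α (Df e f) := ((Dec.tinv n α).sh e _ hf).sub hf

theorem Dec.dl {d : ℕ} {n α : ℕ} {f : Zd d → ℝ} (hf : Dec n α f) (l : List (Zd d)) :
    Dec n α (Dl l f) := by
  induction l with
  | nil => exact hf
  | cons e l ih => exact ih.df e

theorem Dec.sum {d : ℕ} {n α : ℕ} {ι : Type*} {s : Finset ι} {f : ι → Zd d → ℝ}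
    (hf : ∀ i ∈ s, Dec n α (f i)) : Dec n α (∑ i ∈ s, f i) := by
  classical
  induction s using Finset.induction_on with
  | empty => simpa using (Dec.tinv n α).zero
  | insert a s ha ih =>
    rw [Finset.sum_insert ha]
    exact (hf a (by simp)).add (ih fun i hi => hf i (by simp [hi]))

theorem Dec.refl {d : ℕ} {n α : ℕ} {f : Zd d → ℝ} (hf : Dec n α f) :
    Dec n α (fun x => f (-x)) := by
  obtain ⟨C, hC, hf⟩ := hf
  refine ⟨C, hC, fun z => ?_⟩
  simpa [wt_neg, lg_neg] using hf (-z)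

theorem Dec.mono {d : ℕ} {n n' α : ℕ} (h : n' ≤ n) {f : Zd d → ℝ} (hf : Dec n α f) :
    Dec n' α f := by
  obtain ⟨C, hC, hf⟩ := hf
  refine ⟨C, hC, fun z => (hf z).trans ?_⟩
  have := (lg_pos z).le
  have := pow_le_pow_of_le_one (wt_pos z).le (wt_le_one z) h
  gcongr

theorem Dec.mono_log {d : ℕ} {n α : ℕ} (β : ℕ) {f : Zd d → ℝ} (hf : Dec n α f) :
    Dec n (α + β) f := by
  obtain ⟨C, hC, hf⟩ := hf
  refine ⟨C * (Real.log 2 ^ β)⁻¹, by have := log_two_pos; positivity, fun z => (hf z).trans ?_⟩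
  have h0 := lg_pos z
  have h2 := log_two_pos
  have h3 := wt_pos z
  have : Real.log 2 ^ β ≤ lg z ^ β := pow_le_pow_left₀ h2.le (log_two_le_lg z) β
  have h1 : 1 ≤ (Real.log 2 ^ β)⁻¹ * lg z ^ β := by
    rw [inv_mul_eq_div, one_le_div (by positivity)]; exact this
  calc C * wt z ^ n * lg z ^ α = (C * wt z ^ n * lg z ^ α) * 1 := by ring
    _ ≤ (C * wt z ^ n * lg z ^ α) * ((Real.log 2 ^ β)⁻¹ * lg z ^ β) := by gcongr
    _ = _ := by rw [pow_add]; ring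

theorem Dec.of_finite {d : ℕ} (n α : ℕ) {f : Zd d → ℝ} (hf : (Function.support f).Finite) :
    Dec n α f := by
  refine ⟨∑ z ∈ hf.toFinset, |f z| * (wt z ^ n * lg z ^ α)⁻¹, ?_, fun z => ?_⟩
  · apply Finset.sum_nonneg
    intro z _
    have := wt_pos z
    have := lg_pos z
    positivity
  · by_cases hz : f z = 0
    · rw [hz, abs_zero]
      have := wt_pos z
      have := lg_pos z
      have : 0 ≤ ∑ z ∈ hf.toFinset, |f z| * (wt z ^ n * lg z ^ α)⁻¹ := by
        apply Finset.sum_nonneg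
        intro z _
        have := wt_pos z
        have := lg_pos z
        positivity
      positivity
    · have h1 := wt_pos z
      have h2 := lg_pos z
      have : |f z| * (wt z ^ n * lg z ^ α)⁻¹ ≤
          ∑ z ∈ hf.toFinset, |f z| * (wt z ^ n * lg z ^ α)⁻¹ := by
        apply Finset.single_le_sum (f := fun z => |f z| * (wt z ^ n * lg z ^ α)⁻¹)
        · intro z _
          have := wt_pos z
          have := lg_pos z
          positivity
        · simpa using hz
      rw [mul_assoc, ← div_le_iff₀ (by positivity), div_eq_mul_inv]
      exact this

/-! ### Counting and sums -/

theorem card_le {d : ℕ} (F : Finset (Zd d)) {τ : ℝ} (hτ : 0 ≤ τ) :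
    ((F.filter fun m => aa m ≤ τ).card : ℝ) ≤ (3 * τ) ^ d := by
  classical
  by_cases h2 : τ < 2
  · have : F.filter (fun m => aa m ≤ τ) = ∅ := by
      apply Finset.filter_eq_empty_iff.mpr
      intro m _ hm
      linarith [two_le_aa m]
    rw [this]; simp; positivity
  · push Not at h2
    set n : ℕ := ⌊τ⌋₊ with hn
    have hsub : F.filter (fun m => aa m ≤ τ) ⊆
        Fintype.piFinset fun _ : Fin d => Finset.Icc (-(n:ℤ)) n := by
      intro m hm
      have hm := (Finset.mem_filter.mp hm).2
      rw [Fintype.mem_piFinset]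
      intro i
      have h1 : nr m ≤ n := by
        apply Nat.le_floor
        unfold aa at hm
        linarith
      have h3 := (le_nr m i).trans h1
      rw [Finset.mem_Icc]
      omega
    have hc := Finset.card_le_card hsub
    rw [Fintype.card_piFinset] at hc
    simp only [Int.card_Icc, Finset.prod_const, Finset.card_univ, Fintype.card_fin] at hc
    have h4 : ((n:ℤ) + 1 - -(n:ℤ)).toNat = 2 * n + 1 := by omega
    rw [h4] at hc
    have h5 : (n:ℝ) ≤ τ := Nat.floor_le hτ
    calc ((F.filter fun m => aa m ≤ τ).card : ℝ) ≤ ((2 * n + 1 : ℕ) : ℝ) ^ d := by exact_mod_cast hc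
      _ ≤ (3 * τ) ^ d := by
        apply pow_le_pow_left₀ (by positivity)
        push_cast; linarith

theorem swap_bound {ι : Type*} (F : Finset ι) (f : ι → ℝ) (K : ℕ) (g n : ℕ → ℝ)
    (P : ℕ → ι → Prop) [∀ k, DecidablePred (P k)] (hg : ∀ k, 0 ≤ g k)
    (hP : ∀ m ∈ F, ∃ k < K, P k m ∧ f m ≤ g k)
    (hn : ∀ k, ((F.filter (P k)).card : ℝ) ≤ n k) :
    ∑ m ∈ F, f m ≤ ∑ k ∈ Finset.range K, n k * g k := by
  calc ∑ m ∈ F, f m ≤ ∑ m ∈ F, ∑ k ∈ Finset.range K, if P k m then g k else 0 := by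
        apply Finset.sum_le_sum
        intro m hm
        obtain ⟨k, hk, h1, h2⟩ := hP m hm
        refine h2.trans ?_
        have := Finset.single_le_sum (f := fun k => if P k m then g k else 0)
          (s := Finset.range K) (fun i _ => by split_ifs; exacts [hg i, le_rfl])
          (Finset.mem_range.mpr hk)
        simpa [h1] using this
    _ = ∑ k ∈ Finset.range K, ((F.filter (P k)).card : ℝ) * g k := by
        rw [Finset.sum_comm]
        apply Finset.sum_congr rfl
        intro k _
        rw [← Finset.sum_filter, Finset.sum_const, nsmul_eq_mul]
    _ ≤ _ := by
        apply Finset.sum_le_sum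
        intro k _
        exact mul_le_mul_of_nonneg_right (hn k) (hg k)

theorem down_dyadic {d : ℕ} (m : Zd d) {τ : ℝ} (h : aa m ≤ τ) :
    ∃ k : ℕ, aa m ≤ τ / 2 ^ k ∧ wt m ≤ 2 ^ (k + 1) / τ := by
  have ha := aa_pos m
  have hτ : 0 < τ := ha.trans_le h
  obtain ⟨k, h1, h2⟩ := exists_nat_pow_near (x := τ / aa m) (y := (2:ℝ))
    ((one_le_div ha).mpr h) (by norm_num)
  refine ⟨k, ?_, ?_⟩
  · rw [le_div_iff₀ ha] at h1
    rw [le_div_iff₀ (by positivity)]; linarith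
  · rw [le_div_iff₀ hτ]
    unfold wt
    rw [inv_mul_eq_div]; exact h2.le

theorem pow_le_log {k : ℕ} {τ : ℝ} (hτ : 2 ≤ τ) (h : 2 ≤ τ / 2 ^ k) :
    k < ⌊Real.log τ / Real.log 2⌋₊ + 1 := by
  have h0 := log_two_pos
  rw [Nat.lt_succ_iff]
  apply Nat.le_floor
  rw [le_div_iff₀ h0]
  have h1 : (2:ℝ) ^ k ≤ τ := by
    rw [le_div_iff₀ (by positivity)] at h
    have : (0:ℝ) < 2 ^ k := by positivity
    linarith
  have := Real.log_le_log (by positivity) h1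
  rwa [Real.log_pow] at this

theorem S1 (d : ℕ) : ∃ C : ℝ, 0 ≤ C ∧ ∀ (F : Finset (Zd d)) (τ : ℝ), 2 ≤ τ →
    ∑ m ∈ F.filter (fun m => aa m ≤ τ), wt m ^ d ≤ C * Real.log τ := by
  classical
  have h0 := log_two_pos
  refine ⟨6 ^ d * (2 / Real.log 2), by positivity, fun F τ hτ => ?_⟩
  have hτ0 : 0 < τ := by linarith
  set K := ⌊Real.log τ / Real.log 2⌋₊ + 1 with hK
  have := swap_bound (F.filter (fun m => aa m ≤ τ)) (fun m => wt m ^ d) K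
    (fun k => (2 ^ (k + 1) / τ) ^ d) (fun k => (3 * (τ / 2 ^ k)) ^ d)
    (fun k m => aa m ≤ τ / 2 ^ k) (fun k => by positivity) ?_ (fun k => card_le _ (by positivity))
  · refine this.trans ?_
    have h6 : ∀ k : ℕ, (3 * (τ / 2 ^ k)) ^ d * (2 ^ (k + 1) / τ) ^ d = 6 ^ d := by
      intro k
      rw [← mul_pow]
      congr 1
      field_simp
      ring
    simp only [h6, Finset.sum_const, Finset.card_range, nsmul_eq_mul]
    have h7 : (K : ℝ) ≤ 2 / Real.log 2 * Real.log τ := by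
      have h8 : Real.log 2 ≤ Real.log τ := Real.log_le_log (by norm_num) hτ
      have h9 : 1 ≤ Real.log τ / Real.log 2 := (one_le_div h0).mpr h8
      have := Nat.floor_le (a := Real.log τ / Real.log 2) (by positivity)
      rw [hK]; push_cast
      have : 2 / Real.log 2 * Real.log τ = 2 * (Real.log τ / Real.log 2) := by ring
      linarith
    have : (0:ℝ) ≤ 6 ^ d := by positivity
    nlinarith
  · intro m hm
    obtain ⟨k, h1, h2⟩ := down_dyadic m (Finset.mem_filter.mp hm).2
    exact ⟨k, pow_le_log hτ ((two_le_aa m).trans h1), h1, pow_le_pow_left₀ (wt_pos m).le h2 d⟩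

theorem S2 (d : ℕ) : ∃ C : ℝ, 0 ≤ C ∧ ∀ (F : Finset (Zd (d + 1))) (τ : ℝ), 2 ≤ τ →
    ∑ m ∈ F.filter (fun m => aa m ≤ τ), wt m ^ d ≤ C * τ := by
  classical
  refine ⟨6 ^ d * 6, by positivity, fun F τ hτ => ?_⟩
  have hτ0 : 0 < τ := by linarith
  set K := ⌊Real.log τ / Real.log 2⌋₊ + 1 with hK
  have := swap_bound (F.filter (fun m => aa m ≤ τ)) (fun m => wt m ^ d) K
    (fun k => (2 ^ (k + 1) / τ) ^ d) (fun k => (3 * (τ / 2 ^ k)) ^ (d + 1))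
    (fun k m => aa m ≤ τ / 2 ^ k) (fun k => by positivity) ?_ (fun k => card_le _ (by positivity))
  · refine this.trans ?_
    have h6 : ∀ k : ℕ, (3 * (τ / 2 ^ k)) ^ (d + 1) * (2 ^ (k + 1) / τ) ^ d
        = 6 ^ d * 3 * τ * (1 / 2) ^ k := by
      intro k
      rw [pow_succ, mul_right_comm, ← mul_pow]
      have : 3 * (τ / 2 ^ k) * (2 ^ (k + 1) / τ) = 6 := by
        field_simp
        ring
      rw [this, one_div, inv_pow]
      ring
    simp only [h6]
    rw [← Finset.mul_sum]
    have h7 : ∑ k ∈ Finset.range K, ((1:ℝ) / 2) ^ k ≤ 2 := sum_geometric_two_le K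
    have : (0:ℝ) ≤ 6 ^ d * 3 * τ := by positivity
    nlinarith
  · intro m hm
    obtain ⟨k, h1, h2⟩ := down_dyadic m (Finset.mem_filter.mp hm).2
    exact ⟨k, pow_le_log hτ ((two_le_aa m).trans h1), h1, pow_le_pow_left₀ (wt_pos m).le h2 d⟩

theorem up_dyadic {d : ℕ} (m : Zd d) {τ : ℝ} (hτ : 2 ≤ τ) (h : τ ≤ aa m) :
    ∃ k : ℕ, aa m ≤ τ * 2 ^ (k + 1) ∧ wt m ≤ (τ * 2 ^ k)⁻¹ ∧ lg m ≤ (k + 2) * Real.log τ := by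
  have ha := aa_pos m
  have hτ0 : 0 < τ := by linarith
  obtain ⟨k, h1, h2⟩ := exists_nat_pow_near (x := aa m / τ) (y := (2:ℝ))
    ((one_le_div hτ0).mpr h) (by norm_num)
  have h3 : aa m ≤ τ * 2 ^ (k + 1) := by
    rw [div_lt_iff₀ hτ0] at h2; linarith
  refine ⟨k, h3, ?_, ?_⟩
  · unfold wt
    rw [le_div_iff₀ hτ0] at h1
    exact inv_anti₀ (by positivity) (by linarith)
  · have h4 := Real.log_le_log ha h3
    rw [Real.log_mul hτ0.ne' (by positivity), Real.log_pow] at h4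
    have h8 : Real.log 2 ≤ Real.log τ := Real.log_le_log (by norm_num) hτ
    unfold lg
    push_cast at h4
    have : ((k:ℝ) + 1) * Real.log 2 ≤ (k + 1) * Real.log τ := by gcongr
    linarith

theorem S3 (d α : ℕ) : ∃ C : ℝ, 0 ≤ C ∧ ∀ (F : Finset (Zd d)) (τ : ℝ), 2 ≤ τ →
    ∑ m ∈ F.filter (fun m => τ ≤ aa m), wt m ^ (d + 1) * lg m ^ α ≤
      C * τ⁻¹ * Real.log τ ^ α := by
  classical
  have hs : Summable fun k : ℕ => ((k:ℝ) + 2) ^ α * (1 / 2) ^ k := by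
    have := summable_pow_mul_geometric_of_norm_lt_one (R := ℝ) α (r := 1/2) (by norm_num)
    have h2 := ((summable_nat_add_iff 2).mpr this).mul_left 4
    refine h2.congr fun k => ?_
    push_cast
    rw [pow_add]; ring
  have hnn : ∀ k : ℕ, 0 ≤ ((k:ℝ) + 2) ^ α * (1 / 2) ^ k := fun k => by positivity
  refine ⟨6 ^ d * ∑' k : ℕ, ((k:ℝ) + 2) ^ α * (1 / 2) ^ k,
    mul_nonneg (by positivity) (tsum_nonneg hnn), fun F τ hτ => ?_⟩
  have hτ0 : 0 < τ := by linarith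
  have hl : 0 ≤ Real.log τ := Real.log_nonneg (by linarith)
  have hex : ∀ m ∈ F.filter (fun m => τ ≤ aa m), ∃ k : ℕ, aa m ≤ τ * 2 ^ (k + 1) ∧
      wt m ≤ (τ * 2 ^ k)⁻¹ ∧ lg m ≤ (k + 2) * Real.log τ :=
    fun m hm => up_dyadic m hτ (Finset.mem_filter.mp hm).2
  choose! κ hκ1 hκ2 hκ3 using hex
  set K := (F.filter (fun m => τ ≤ aa m)).sup κ + 1 with hK
  have := swap_bound (F.filter (fun m => τ ≤ aa m)) (fun m => wt m ^ (d + 1) * lg m ^ α) K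
    (fun k => ((τ * 2 ^ k)⁻¹) ^ (d + 1) * ((k + 2) * Real.log τ) ^ α)
    (fun k => (3 * (τ * 2 ^ (k + 1))) ^ d)
    (fun k m => aa m ≤ τ * 2 ^ (k + 1)) (fun k => by positivity) ?_
    (fun k => card_le _ (by positivity))
  · refine this.trans ?_
    have h6 : ∀ k : ℕ, (3 * (τ * 2 ^ (k + 1))) ^ d *
        (((τ * 2 ^ k)⁻¹) ^ (d + 1) * ((k + 2) * Real.log τ) ^ α)
        = 6 ^ d * τ⁻¹ * Real.log τ ^ α * (((k:ℝ) + 2) ^ α * (1 / 2) ^ k) := by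
      intro k
      have : 3 * (τ * 2 ^ (k + 1)) * (τ * 2 ^ k)⁻¹ = 6 := by
        field_simp
        ring
      rw [pow_succ ((τ * 2 ^ k)⁻¹), ← mul_assoc, ← mul_assoc, ← mul_pow, this, mul_inv,
        mul_pow, one_div, inv_pow]
      ring
    simp only [h6]
    rw [← Finset.mul_sum]
    have h7 := hs.sum_le_tsum (Finset.range K) (fun k _ => hnn k)
    have h8 : 0 ≤ 6 ^ d * τ⁻¹ * Real.log τ ^ α := by positivity
    calc _ ≤ 6 ^ d * τ⁻¹ * Real.log τ ^ α * ∑' k : ℕ, ((k:ℝ) + 2) ^ α * (1 / 2) ^ k := by gcongr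
      _ = _ := by ring
  · intro m hm
    refine ⟨κ m, Nat.lt_succ_iff.mpr (Finset.le_sup hm), hκ1 m hm, ?_⟩
    have := wt_pos m
    have := lg_pos m
    exact mul_le_mul (pow_le_pow_left₀ (wt_pos m).le (hκ2 m hm) _)
      (pow_le_pow_left₀ (lg_pos m).le (hκ3 m hm) _) (by positivity) (by positivity)

theorem summable_wt (d α : ℕ) : Summable fun m : Zd d => wt m ^ (d + 1) * lg m ^ α := by
  obtain ⟨C, hC, h⟩ := S3 d α
  have hnn : ∀ m : Zd d, 0 ≤ wt m ^ (d + 1) * lg m ^ α := fun m => by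
    have := wt_pos m
    have := lg_pos m
    positivity
  refine summable_of_sum_le hnn (c := C * 2⁻¹ * Real.log 2 ^ α) fun F => ?_
  have := h F 2 le_rfl
  rwa [Finset.filter_true_of_mem (fun m _ => two_le_aa m)] at this

theorem Dec.summable {d α : ℕ} {f : Zd d → ℝ} (hf : Dec (d + 1) α f) : Summable f := by
  obtain ⟨C, hC, hf⟩ := hf
  refine Summable.of_norm_bounded ((summable_wt d α).mul_left C) fun m => ?_
  rw [Real.norm_eq_abs, ← mul_assoc]
  exact hf m

theorem Dec.mul {d n n' α α' : ℕ} {f g : Zd d → ℝ} (hf : Dec n α f) (hg : Dec n' α' g) :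
    Dec (n + n') (α + α') (f * g) := by
  obtain ⟨C, hC, hf⟩ := hf
  obtain ⟨C', hC', hg⟩ := hg
  refine ⟨C * C', by positivity, fun z => ?_⟩
  have := wt_pos z
  have := lg_pos z
  rw [Pi.mul_apply, abs_mul]
  calc |f z| * |g z| ≤ (C * wt z ^ n * lg z ^ α) * (C' * wt z ^ n' * lg z ^ α') :=
        mul_le_mul (hf z) (hg z) (abs_nonneg _) (by positivity)
    _ = _ := by rw [pow_add, pow_add]; ring

theorem finite_aa_le {d : ℕ} (τ : ℝ) : {m : Zd d | aa m ≤ τ}.Finite := by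
  have : {m : Zd d | aa m ≤ τ} ⊆
      ↑(Fintype.piFinset fun _ : Fin d => Finset.Icc (-(⌊τ⌋₊:ℤ)) ⌊τ⌋₊) := by
    intro m hm
    rw [Finset.mem_coe, Fintype.mem_piFinset]
    intro i
    have h1 : nr m ≤ ⌊τ⌋₊ := by
      apply Nat.le_floor
      have hm : aa m ≤ τ := hm
      unfold aa at hm
      linarith
    have h3 := (le_nr m i).trans h1
    rw [Finset.mem_Icc]
    omega
  exact (Finset.finite_toSet _).subset this

theorem tendsto_aa {d : ℕ} : Tendsto (aa (d := d)) cofinite atTop := by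
  rw [tendsto_atTop]
  intro τ
  rw [eventually_cofinite]
  exact (finite_aa_le τ).subset fun m hm => le_of_lt (not_le.mp hm)

theorem Dec.tendsto {d n : ℕ} (hn : 1 ≤ n) {f : Zd d → ℝ} (hf : Dec n 0 f) :
    Tendsto f cofinite (𝓝 0) := by
  obtain ⟨C, hC, hf⟩ := hf.mono hn
  have h1 : Tendsto (fun z : Zd d => C * wt z) cofinite (𝓝 0) := by
    have := (tendsto_inv_atTop_zero.comp (tendsto_aa (d := d))).const_mul C
    simpa [wt] using this
  refine squeeze_zero_norm (fun z => ?_) h1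
  simpa using hf z

/-! ### Paths, discrete polynomials, Taylor expansion -/

def bs {d : ℕ} (i : Fin d) : Zd d := Pi.single i 1

theorem closure_bs (d : ℕ) : AddSubgroup.closure (Set.range (bs (d := d))) = ⊤ := by
  rw [eq_top_iff]
  intro z _
  have : z = ∑ i, z i • bs i := by
    funext j
    simp [bs, Finset.sum_apply, Pi.single_apply]
  rw [this]
  exact AddSubgroup.sum_mem _ fun i _ => AddSubgroup.zsmul_mem _
    (AddSubgroup.subset_closure (Set.mem_range_self i)) _

theorem update_add_bs {d : ℕ} (y : Zd d) (i : Fin d) (c : ℤ) :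
    Function.update y i c + bs i = Function.update y i (c + 1) := by
  funext j
  by_cases h : j = i
  · subst h; simp [bs]
  · simp [bs, h]

theorem nr_update {d : ℕ} {y : Zd d} {r : ℕ} (hy : nr y ≤ r) (i : Fin d) {c : ℤ}
    (hc : c.natAbs ≤ r) : nr (Function.update y i c) ≤ r := by
  rw [nr_le] at *
  intro j
  by_cases h : j = i
  · subst h; simpa using hc
  · simpa [h] using hy j

theorem seg_bound {d : ℕ} (ψ : Zd d → ℝ) (φ : ℕ → ℝ) (hφ : ∀ k, 0 ≤ φ k) (r : ℕ)
    (h : ∀ i y, nr y ≤ r → |Df (bs i) ψ y| ≤ φ (y i).natAbs) (y : Zd d) (hy : nr y ≤ r)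
    (i : Fin d) (c : ℤ) (hc : c.natAbs ≤ r) :
    |ψ (Function.update y i c) - ψ (Function.update y i 0)| ≤ ∑ k ∈ Finset.range (r + 1), φ k := by
  have hpos : ∀ k : ℕ, k ≤ r →
      |ψ (Function.update y i (k:ℤ)) - ψ (Function.update y i 0)| ≤ ∑ j ∈ Finset.range k, φ j := by
    intro k
    induction k with
    | zero => intro _; simp
    | succ k ih =>
      intro hk
      have h1 := ih (by omega)
      have h2 := h i (Function.update y i (k:ℤ)) (nr_update hy i (by simp; omega))
      rw [Df_apply, update_add_bs, Function.update_self, Int.natAbs_natCast] at h2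
      rw [Finset.sum_range_succ]
      push_cast
      calc _ = |(ψ (Function.update y i ((k:ℤ) + 1)) - ψ (Function.update y i (k:ℤ))) +
            (ψ (Function.update y i (k:ℤ)) - ψ (Function.update y i 0))| := by ring_nf
        _ ≤ _ := (abs_add_le _ _).trans (by linarith)
  have hneg : ∀ k : ℕ, k ≤ r →
      |ψ (Function.update y i (-(k:ℤ))) - ψ (Function.update y i 0)| ≤
        ∑ j ∈ Finset.range k, φ (j + 1) := by
    intro k
    induction k with
    | zero => intro _; simp
    | succ k ih =>
      intro hk
      have h1 := ih (by omega)
      have h2 := h i (Function.update y i (-((k + 1 : ℕ):ℤ))) (nr_update hy i (by simp; omega))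
      rw [Df_apply, update_add_bs, Function.update_self, Int.natAbs_neg, Int.natAbs_natCast] at h2
      have h3 : -((k + 1 : ℕ):ℤ) + 1 = -(k:ℤ) := by push_cast; ring
      rw [h3] at h2
      rw [Finset.sum_range_succ]
      have h4 : ψ (Function.update y i (-((k + 1 : ℕ):ℤ))) - ψ (Function.update y i 0) =
        -(ψ (Function.update y i (-(k:ℤ))) - ψ (Function.update y i (-((k + 1 : ℕ):ℤ)))) +
          (ψ (Function.update y i (-(k:ℤ))) - ψ (Function.update y i 0)) := by ring
      rw [h4]
      refine (abs_add_le _ _).trans ?_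
      rw [abs_neg]
      linarith
  rcases Int.natAbs_eq c with hc' | hc'
  · rw [hc']
    refine (hpos _ hc).trans ?_
    exact Finset.sum_le_sum_of_subset_of_nonneg (Finset.range_mono (by omega)) fun _ _ _ => hφ _
  · rw [hc']
    refine (hneg _ hc).trans ?_
    rw [Finset.sum_range_succ']
    have := Finset.sum_le_sum_of_subset_of_nonneg (Finset.range_mono hc)
      (fun j _ _ => hφ (j + 1))
    linarith [hφ 0]

theorem path_bound {d : ℕ} (ψ : Zd d → ℝ) (φ : ℕ → ℝ) (hφ : ∀ k, 0 ≤ φ k) (r : ℕ)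
    (h : ∀ i y, nr y ≤ r → |Df (bs i) ψ y| ≤ φ (y i).natAbs) (n : Zd d) (hn : nr n ≤ r) :
    |ψ n - ψ 0| ≤ d * ∑ k ∈ Finset.range (r + 1), φ k := by
  have key : ∀ t : ℕ, t ≤ d →
      |ψ (fun i => if i.val < t then n i else 0) - ψ 0| ≤ t * ∑ k ∈ Finset.range (r + 1), φ k := by
    intro t
    induction t with
    | zero =>
      intro _
      have : (fun i : Fin d => if i.val < 0 then n i else 0) = 0 := by funext i; simp
      rw [this]; simp
    | succ t ih =>
      intro ht
      have h1 := ih (by omega)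
      set y : Zd d := fun i => if i.val < t then n i else 0 with hy
      have hyr : nr y ≤ r := by
        rw [nr_le] at *
        intro i
        simp only [hy]
        split_ifs
        · exact hn i
        · simp
      have h2 := seg_bound ψ φ hφ r h y hyr ⟨t, by omega⟩ (n ⟨t, by omega⟩) ((le_nr _ _).trans hn)
      have e1 : Function.update y ⟨t, by omega⟩ 0 = y := by
        rw [Function.update_eq_self_iff]
        simp [hy]
      have e2 : Function.update y ⟨t, by omega⟩ (n ⟨t, by omega⟩) =
          fun i => if i.val < t + 1 then n i else 0 := by
        funext i
        by_cases hi : i = ⟨t, by omega⟩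
        · subst hi; simp
        · have : i.val ≠ t := fun h => hi (Fin.ext h)
          simp only [hi, Function.update_of_ne, ne_eq, not_false_eq_true, hy]
          have : i.val < t + 1 ↔ i.val < t := by omega
          simp [this]
      rw [e1, e2] at h2
      push_cast
      calc _ = |(ψ (fun i => if i.val < t + 1 then n i else 0) - ψ y) + (ψ y - ψ 0)| := by ring_nf
        _ ≤ _ := (abs_add_le _ _).trans (by linarith)
  have := key d le_rfl
  have e : (fun i : Fin d => if i.val < d then n i else 0) = n := by
    funext i; simp [i.2]
  rwa [e] at this

/-- Discrete polynomials of degree `< p`. -/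
def Pol (d : ℕ) : ℕ → Submodule ℝ (Zd d → ℝ)
  | 0 => ⊥
  | p + 1 => ⨅ e : Zd d, (Pol d p).comap (Df e)

theorem mem_Pol_zero {d : ℕ} {q : Zd d → ℝ} : q ∈ Pol d 0 ↔ q = 0 := Submodule.mem_bot ℝ

theorem mem_Pol_succ {d p : ℕ} {q : Zd d → ℝ} : q ∈ Pol d (p + 1) ↔ ∀ e, Df e q ∈ Pol d p := by
  simp [Pol, Submodule.mem_iInf]

theorem Pol_Sh {d : ℕ} (p : ℕ) : ∀ {q : Zd d → ℝ} (e : Zd d), q ∈ Pol d p → Sh e q ∈ Pol d p := by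
  induction p with
  | zero => intro q e hq; rw [mem_Pol_zero] at *; rw [hq]; rfl
  | succ p ih =>
    intro q e hq
    rw [mem_Pol_succ] at *
    intro e'
    rw [Df_Sh]
    exact ih e (hq e')

theorem Pol_succ_mono {d : ℕ} (p : ℕ) : Pol d p ≤ Pol d (p + 1) := by
  induction p with
  | zero => exact bot_le
  | succ p ih =>
    intro q hq
    rw [mem_Pol_succ] at *
    exact fun e => ih (hq e)

theorem Pol_mono {d : ℕ} {p p' : ℕ} (h : p ≤ p') : Pol d p ≤ Pol d p' :=
  monotone_nat_of_le_succ Pol_succ_mono h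

theorem Pol_tinv {d : ℕ} (p : ℕ) : TInv (fun q => q ∈ Pol d p) where
  zero := Submodule.zero_mem _
  add _ _ := Submodule.add_mem _
  neg _ := Submodule.neg_mem _
  sh e _ := Pol_Sh p e

theorem Pol_of_bs {d p : ℕ} {q : Zd d → ℝ} (h : ∀ i, Df (bs i) q ∈ Pol d p) :
    q ∈ Pol d (p + 1) := by
  rw [mem_Pol_succ]
  apply (Pol_tinv p).all_dir (closure_bs d)
  rintro _ ⟨i, rfl⟩
  exact h i

theorem Pol_Dl {d p : ℕ} (l : List (Zd d)) : ∀ {q : Zd d → ℝ}, q ∈ Pol d (p + l.length) →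
    Dl l q ∈ Pol d p := by
  induction l with
  | nil => intro q hq; exact hq
  | cons e l ih =>
    intro q hq
    rw [Dl_cons, ← Dl_Df]
    apply ih
    rw [List.length_cons, ← add_assoc, mem_Pol_succ] at hq
    exact hq e

theorem Pol_growth {d : ℕ} (p : ℕ) : ∀ {q : Zd d → ℝ}, q ∈ Pol d (p + 1) →
    ∃ C : ℝ, 0 ≤ C ∧ ∀ n, |q n| ≤ C * aa n ^ p := by
  induction p with
  | zero =>
    intro q hq
    refine ⟨|q 0|, abs_nonneg _, fun n => ?_⟩
    have := path_bound q (fun _ => 0) (fun _ => le_rfl) (nr n) (fun i y _ => by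
      rw [mem_Pol_succ] at hq
      have := hq (bs i)
      rw [mem_Pol_zero] at this
      rw [this]; simp) n le_rfl
    simp only [Finset.sum_const_zero, mul_zero] at this
    have := abs_nonpos_iff.mp this
    rw [sub_eq_zero.mp this]; simp
  | succ p ih =>
    intro q hq
    have hq' : ∀ i, ∃ C : ℝ, 0 ≤ C ∧ ∀ n, |Df (bs i) q n| ≤ C * aa n ^ p :=
      fun i => ih (mem_Pol_succ.mp hq (bs i))
    choose C hC hCn using hq'
    set B := ∑ i, C i with hB
    have hB0 : 0 ≤ B := Finset.sum_nonneg fun i _ => hC i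
    have hCB : ∀ i, C i ≤ B := fun i =>
      Finset.single_le_sum (f := C) (fun i _ => hC i) (Finset.mem_univ i)
    refine ⟨|q 0| + d * B, by positivity, fun n => ?_⟩
    have ha := aa_pos n
    have h2 := two_le_aa n
    have := path_bound q (fun _ => B * aa n ^ p) (fun _ => by positivity) (nr n) (fun i y hy => by
      refine (hCn i y).trans ?_
      have h1 : aa y ≤ aa n := by unfold aa; have : (nr y:ℝ) ≤ nr n := by exact_mod_cast hy
                                  linarith
      have := pow_le_pow_left₀ (aa_pos y).le h1 p
      have := (aa_pos y).le
      exact mul_le_mul (hCB i) (by assumption) (by positivity) hB0) n le_rfl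
    rw [Finset.sum_const, Finset.card_range, nsmul_eq_mul] at this
    have h3 : |q n| ≤ |q 0| + |q n - q 0| := by
      have := abs_add_le (q 0) (q n - q 0)
      simpa using this
    have h4 : ((nr n + 1 : ℕ) : ℝ) ≤ aa n := by unfold aa; push_cast; linarith
    have h5 : (1:ℝ) ≤ aa n ^ (p + 1) := one_le_pow₀ (by linarith)
    calc |q n| ≤ |q 0| + |q n - q 0| := h3
      _ ≤ |q 0| * 1 + d * (((nr n + 1 : ℕ) : ℝ) * (B * aa n ^ p)) := by linarith
      _ ≤ |q 0| * aa n ^ (p + 1) + d * (aa n * (B * aa n ^ p)) := by gcongr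
      _ = _ := by rw [pow_succ]; ring

theorem taylor_rem {d : ℕ} (r : ℕ) (M : ℝ) (p : ℕ) : ∀ (ψ : Zd d → ℝ),
    (∀ l : List (Fin d), l.length < p → Dl (l.map bs) ψ 0 = 0) →
    (∀ l : List (Fin d), l.length = p → ∀ y, nr y ≤ r → |Dl (l.map bs) ψ y| ≤ M) →
    ∀ n, nr n ≤ r → |ψ n| ≤ (d * (r + 1)) ^ p * M := by
  induction p with
  | zero =>
    intro ψ _ h n hn
    simpa [Dl_nil] using h [] rfl n hn
  | succ p ih =>
    intro ψ h0 h n hn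
    have h1 : ∀ i y, nr y ≤ r → |Df (bs i) ψ y| ≤ (d * (r + 1)) ^ p * M := by
      intro i
      apply ih
      · intro l hl
        rw [Dl_Df, ← Dl_cons, ← List.map_cons]
        exact h0 _ (by simpa using hl)
      · intro l hl
        rw [Dl_Df, ← Dl_cons, ← List.map_cons]
        exact h _ (by simpa using hl)
    by_cases hd : d = 0
    · subst hd
      have hn0 : n = 0 := Subsingleton.elim _ _
      have := h0 [] (by simp)
      rw [List.map_nil, Dl_nil] at this
      rw [hn0, this]
      simp
    · have hnn : 0 ≤ (d * (r + 1) : ℝ) ^ p * M :=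
        (abs_nonneg _).trans (h1 ⟨0, by omega⟩ n hn)
      have := path_bound ψ (fun _ => (d * (r + 1)) ^ p * M) (fun _ => hnn) r h1 n hn
      have h00 := h0 [] (by simp)
      rw [List.map_nil, Dl_nil] at h00
      rw [h00, sub_zero, Finset.sum_const, Finset.card_range, nsmul_eq_mul] at this
      push_cast at this
      calc _ ≤ _ := this
        _ = _ := by rw [pow_succ]; ring

theorem Pol_inj {d p : ℕ} {q : Zd d → ℝ} (hq : q ∈ Pol d p)
    (h : ∀ l : List (Fin d), l.length < p → Dl (l.map bs) q 0 = 0) : q = 0 := by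
  funext n
  have := taylor_rem (nr n) 0 p q h (fun l hl y _ => by
    have : Dl (l.map bs) q ∈ Pol d 0 := Pol_Dl _ (by simpa [hl] using hq)
    rw [mem_Pol_zero.mp this]; simp) n le_rfl
  rw [mul_zero] at this
  exact abs_nonpos_iff.mp this

/-- Newton basis polynomials. -/
def pq {d : ℕ} (s : Multiset (Fin d)) (n : Zd d) : ℝ :=
  ((∏ i, Ring.choose (n i) (s.count i) : ℤ) : ℝ)

theorem Df_pq {d : ℕ} (i : Fin d) (s : Multiset (Fin d)) :
    Df (bs i) (pq s) = if i ∈ s then pq (s.erase i) else 0 := by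
  funext n
  have e : ∀ j ∈ Finset.univ.erase i, Ring.choose ((n + bs i) j) (s.count j)
      = Ring.choose (n j) (s.count j) := by
    intro j hj
    have : j ≠ i := Finset.ne_of_mem_erase hj
    simp [bs, this]
  rw [Df_apply]
  unfold pq
  rw [← Finset.mul_prod_erase Finset.univ _ (Finset.mem_univ i),
    ← Finset.mul_prod_erase Finset.univ (fun j => Ring.choose (n j) (s.count j))
      (Finset.mem_univ i), Finset.prod_congr rfl e]
  have h1 : (n + bs i) i = n i + 1 := by simp [bs]
  rw [h1]
  split_ifs with hi
  · have e2 : ∀ j ∈ Finset.univ.erase i, Ring.choose (n j) ((s.erase i).count j)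
      = Ring.choose (n j) (s.count j) := by
      intro j hj
      have : j ≠ i := Finset.ne_of_mem_erase hj
      rw [Multiset.count_erase_of_ne this]
    show _ = ((∏ j, Ring.choose (n j) ((s.erase i).count j) : ℤ) : ℝ)
    rw [← Finset.mul_prod_erase Finset.univ (fun j => Ring.choose (n j) ((s.erase i).count j))
      (Finset.mem_univ i), Finset.prod_congr rfl e2, Multiset.count_erase_self]
    obtain ⟨k, hk⟩ := Nat.exists_eq_succ_of_ne_zero (Multiset.count_ne_zero.mpr hi)
    rw [hk, Nat.succ_eq_add_one, Ring.choose_succ_succ, Nat.add_sub_cancel]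
    push_cast; ring
  · rw [Multiset.count_eq_zero.mpr hi, Ring.choose_zero_right, Ring.choose_zero_right]
    simp

theorem pq_zero {d : ℕ} (s : Multiset (Fin d)) : pq s 0 = if s = 0 then 1 else 0 := by
  unfold pq
  split_ifs with h
  · subst h; simp
  · obtain ⟨i, hi⟩ := Multiset.exists_mem_of_ne_zero h
    rw [Finset.prod_eq_zero (Finset.mem_univ i)]
    · simp
    · exact Ring.choose_zero_pos ℤ (Multiset.count_pos.mpr hi)

theorem pq_mem {d : ℕ} (k : ℕ) : ∀ s : Multiset (Fin d), s.card ≤ k → pq s ∈ Pol d (k + 1) := by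
  induction k with
  | zero =>
    intro s hs
    apply Pol_of_bs
    intro i
    have : s = 0 := Multiset.card_eq_zero.mp (by omega)
    rw [Df_pq, this]; simp
  | succ k ih =>
    intro s hs
    apply Pol_of_bs
    intro i
    rw [Df_pq]
    split_ifs with hi
    · apply ih
      have := Multiset.card_erase_of_mem hi
      rw [this]
      exact Nat.pred_le_iff.mpr hs
    · exact Submodule.zero_mem _

theorem Dl_pq {d : ℕ} (l : List (Fin d)) : ∀ s : Multiset (Fin d),
    Dl (l.map bs) (pq s) 0 = if (l : Multiset (Fin d)) = s then 1 else 0 := by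
  induction l with
  | nil => intro s; rw [List.map_nil, Dl_nil, pq_zero]; simp [eq_comm]
  | cons i l ih =>
    intro s
    rw [List.map_cons, Dl_cons, ← Dl_Df, Df_pq]
    by_cases hi : i ∈ s
    · rw [if_pos hi, ih]
      congr 1
      rw [← Multiset.cons_coe, eq_iff_iff]
      constructor
      · intro h; rw [h, Multiset.cons_erase hi]
      · intro h; rw [← h]; simp
    · rw [if_neg hi, map_zero, if_neg]
      · rfl
      · intro h; apply hi; rw [← h]; simp

/-- Taylor polynomial. -/
def TP {d : ℕ} (p : ℕ) (Ψ : Zd d → ℝ) : Zd d → ℝ :=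
  ∑ k ∈ Finset.range p, ∑ s : Sym (Fin d) k,
    (Dl ((s : Multiset (Fin d)).toList.map bs) Ψ 0) • pq (s : Multiset (Fin d))

theorem TP_mem {d p : ℕ} (Ψ : Zd d → ℝ) : TP p Ψ ∈ Pol d p := by
  refine Submodule.sum_mem _ fun k hk => Submodule.sum_mem _ fun s _ => Submodule.smul_mem _ _ ?_
  have := pq_mem k (s : Multiset (Fin d)) (by simp)
  exact Pol_mono (by simpa using hk) this

theorem TP_jet {d p : ℕ} (Ψ : Zd d → ℝ) (l : List (Fin d)) (hl : l.length < p) :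
    Dl (l.map bs) (TP p Ψ) 0 = Dl (l.map bs) Ψ 0 := by
  unfold TP
  simp only [map_sum, map_smul, Finset.sum_apply, Pi.smul_apply, Dl_pq, smul_eq_mul]
  rw [Finset.sum_eq_single l.length]
  · refine (Finset.sum_eq_single (⟨(l : Multiset (Fin d)), by simp⟩ : Sym (Fin d) l.length)
      ?_ ?_).trans ?_
    rotate_left 2
    · show (Dl ((l : Multiset (Fin d)).toList.map bs) Ψ 0) *
        (if (l : Multiset (Fin d)) = (l : Multiset (Fin d)) then (1:ℝ) else 0) = _
      rw [if_pos rfl, mul_one]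
      refine congrFun (Dl_perm ?_ Ψ) 0
      apply List.Perm.map
      rw [← Multiset.coe_eq_coe, Multiset.coe_toList]
    · intro s _ hs
      rw [if_neg, mul_zero]
      intro h
      apply hs
      apply Sym.ext
      simp [h]
    · intro h; exact absurd (Finset.mem_univ (α := Sym (Fin d) l.length) _) h
  · intro k _ hk
    apply Finset.sum_eq_zero
    intro s _
    rw [if_neg, mul_zero]
    intro h
    apply hk
    have := congrArg Multiset.card h
    simpa using this.symm
  · intro h
    simp at h
    omega

theorem taylor (d p : ℕ) : ∃ C : ℝ, 0 ≤ C ∧ ∀ Ψ : Zd d → ℝ, ∃ q ∈ Pol d p,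
    (∀ (n : Zd d) (M : ℝ), 0 ≤ M → (∀ l : List (Fin d), l.length = p → ∀ y, nr y ≤ nr n →
      |Dl (l.map bs) Ψ y| ≤ M) → |Ψ n - q n| ≤ C * aa n ^ p * M) ∧
    (∀ B : ℕ → ℝ, (∀ k, 0 ≤ B k) → (∀ l : List (Fin d), l.length < p → |Dl (l.map bs) Ψ 0| ≤ B l.length) →
      ∀ n, |q n| ≤ C * ∑ k ∈ Finset.range p, B k * aa n ^ k) := by
  have hg : ∀ (k : ℕ) (s : Sym (Fin d) k), ∃ C : ℝ, 0 ≤ C ∧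
      ∀ n, |pq (s : Multiset (Fin d)) n| ≤ C * aa n ^ k := fun k s =>
    Pol_growth k (pq_mem k _ (by simp))
  choose c hc hcn using hg
  set C1 : ℝ := ∑ k ∈ Finset.range p, ∑ s : Sym (Fin d) k, c k s with hC1
  have hC10 : 0 ≤ C1 := Finset.sum_nonneg fun k _ => Finset.sum_nonneg fun s _ => hc k s
  refine ⟨(d:ℝ) ^ p + C1, by positivity, fun Ψ => ⟨TP p Ψ, TP_mem Ψ, ?_, ?_⟩⟩
  · intro n M hM0 hM
    have h1 := taylor_rem (nr n) M p (Ψ - TP p Ψ) (fun l hl => by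
      rw [map_sub, Pi.sub_apply, TP_jet Ψ l hl, sub_self]) (fun l hl y hy => by
      have : Dl (l.map bs) (TP p Ψ) ∈ Pol d 0 := Pol_Dl _ (by simpa [hl] using TP_mem Ψ)
      rw [map_sub, mem_Pol_zero.mp this, sub_zero]
      exact hM l hl y hy) n le_rfl
    rw [Pi.sub_apply] at h1
    refine h1.trans ?_
    have h4 : ((nr n : ℝ) + 1) ≤ aa n := by unfold aa; linarith
    have := aa_pos n
    calc ((d:ℝ) * (nr n + 1)) ^ p * M ≤ (d * aa n) ^ p * M := by gcongr
        _ = d ^ p * aa n ^ p * M := by rw [mul_pow]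
        _ ≤ (d ^ p + C1) * aa n ^ p * M := by gcongr; linarith
  · intro B hB0 hB n
    have ha := aa_pos n
    have hterm : ∀ k ∈ Finset.range p, ∀ s : Sym (Fin d) k,
        |(Dl ((s : Multiset (Fin d)).toList.map bs) Ψ 0) * pq (s : Multiset (Fin d)) n| ≤
          c k s * (B k * aa n ^ k) := by
      intro k hk s
      have h1 := hB (s : Multiset (Fin d)).toList (by simpa using hk)
      have h2 : (s : Multiset (Fin d)).toList.length = k := by simp
      rw [h2] at h1
      rw [abs_mul]
      have := hcn k s n
      have h3 := hc k s
      calc _ ≤ B k * (c k s * aa n ^ k) := mul_le_mul h1 this (abs_nonneg _) ((abs_nonneg _).trans h1)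
        _ = _ := by ring
    have hcle : ∀ k ∈ Finset.range p, ∑ s : Sym (Fin d) k, c k s ≤ C1 := fun k hk =>
      Finset.single_le_sum (f := fun k => ∑ s : Sym (Fin d) k, c k s)
        (fun k _ => Finset.sum_nonneg fun s _ => hc k s) hk
    unfold TP
    rw [Finset.sum_apply, Finset.mul_sum]
    refine (Finset.abs_sum_le_sum_abs _ _).trans (Finset.sum_le_sum fun k hk => ?_)
    rw [Finset.sum_apply]
    refine (Finset.abs_sum_le_sum_abs _ _).trans ?_
    have hk0 : 0 ≤ B k * aa n ^ k := mul_nonneg (hB0 k) (by positivity)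
    calc _ ≤ ∑ s : Sym (Fin d) k, c k s * (B k * aa n ^ k) :=
          Finset.sum_le_sum fun s _ => by
            simpa only [Pi.smul_apply, smul_eq_mul] using hterm k hk s
      _ = (∑ s : Sym (Fin d) k, c k s) * (B k * aa n ^ k) := by rw [Finset.sum_mul]
      _ ≤ ((d:ℝ) ^ p + C1) * (B k * aa n ^ k) := by
          apply mul_le_mul_of_nonneg_right _ hk0
          have := hcle k hk
          have : (0:ℝ) ≤ (d:ℝ)^p := by positivity
          linarith

/-! ### The main convolution estimate -/

theorem unif_lists {d n : ℕ} {Φ : Zd d → ℝ} (hΦ : ∀ l, Dec (n + l.length) 0 (Dl l Φ)) (k : ℕ) :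
    ∃ B : ℝ, 0 ≤ B ∧ ∀ l : List (Fin d), l.length = k → ∀ z,
      |Dl (l.map bs) Φ z| ≤ B * wt z ^ (n + k) := by
  classical
  have hfin : {l : List (Fin d) | l.length = k}.Finite := List.finite_length_eq _ _
  choose B hB hBz using fun l : List (Fin d) => hΦ (l.map bs)
  refine ⟨∑ l ∈ hfin.toFinset, B l, Finset.sum_nonneg fun l _ => hB l, fun l hl z => ?_⟩
  have h1 := hBz l z
  have hw := wt_pos z
  rw [List.length_map, hl, pow_zero, mul_one] at h1
  refine h1.trans ?_
  have : B l ≤ ∑ l ∈ hfin.toFinset, B l :=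
    Finset.single_le_sum (f := B) (fun l _ => hB l) (by simpa using hl)
  gcongr

/-- bound of the Taylor polynomial in the far region -/
theorem q_bound {d : ℕ} (e p : ℕ) (x m : Zd d) (h : aa x ≤ 2 * aa m) (B : ℕ → ℝ)
    (hB : ∀ k, 0 ≤ B k) :
    ∑ k ∈ Finset.range p, B k * wt x ^ (e + k) * aa m ^ k ≤
      (2 ^ p * ∑ k ∈ Finset.range p, B k) * (wt x ^ (e + p) * aa x * (aa m ^ p * wt m)) := by
  rw [mul_assoc, Finset.sum_mul, Finset.mul_sum]
  refine Finset.sum_le_sum fun k hk => ?_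
  have hk := Finset.mem_range.mp hk
  obtain ⟨j, rfl⟩ : ∃ j, p = k + j + 1 := ⟨p - k - 1, by omega⟩
  have hx := wt_pos x
  have hm := wt_pos m
  have hax := aa_pos x
  have ham := aa_pos m
  have e1 : wt x ^ (e + (k + j + 1)) * aa x = wt x ^ (e + k) * wt x ^ j := by
    rw [← add_assoc, pow_succ, mul_assoc, wt_mul_aa, mul_one, ← add_assoc, pow_add]
  have e2 : aa m ^ (k + j + 1) * wt m = aa m ^ k * aa m ^ j := by
    rw [pow_succ, mul_assoc, aa_mul_wt, mul_one, pow_add]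
  rw [e1, e2]
  have e3 : (1:ℝ) ≤ 2 ^ (k + j + 1) * (wt x ^ j * aa m ^ j) := by
    have : 1 ≤ 2 * (wt x * aa m) := by
      have := mul_le_mul_of_nonneg_left h hx.le
      rw [wt_mul_aa] at this
      linarith
    have h2 : (1:ℝ) ≤ (2 * (wt x * aa m)) ^ j := one_le_pow₀ this
    rw [mul_pow, mul_pow] at h2
    have h3 : (2:ℝ) ^ j ≤ 2 ^ (k + j + 1) := pow_le_pow_right₀ (by norm_num) (by omega)
    have : 0 ≤ wt x ^ j * aa m ^ j := by positivity
    calc (1:ℝ) ≤ _ := h2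
      _ ≤ _ := by gcongr
  have hBk := hB k
  calc B k * wt x ^ (e + k) * aa m ^ k = B k * wt x ^ (e + k) * aa m ^ k * 1 := by ring
    _ ≤ B k * wt x ^ (e + k) * aa m ^ k * (2 ^ (k + j + 1) * (wt x ^ j * aa m ^ j)) := by gcongr
    _ = _ := by ring

theorem conv_pt {d e p α : ℕ} (he1 : 1 ≤ e) (hed : e ≤ d) {Φ g : Zd d → ℝ}
    (hΦ : ∀ l, Dec (e + l.length) 0 (Dl l Φ)) (hg : Dec (d + p) α g) :
    ∃ K : ℝ, 0 ≤ K ∧ ∀ x, ∃ q ∈ Pol d p, ∀ m, |g m * (Φ (x - m) - q (-m))| ≤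
      K * wt x ^ (e + p) * ((if aa m ≤ aa x then lg x ^ α * wt m ^ d else 0) +
        (if (aa x + 2) / 2 ≤ aa m then aa x * (wt m ^ (d + 1) * lg m ^ α) else 0) +
        (if aa (x - m) ≤ 2 * aa x then lg x ^ α * wt (x - m) ^ d else 0)) := by
  obtain ⟨CT, hCT, hT⟩ := taylor d p
  choose B hB hBl using unif_lists hΦ
  obtain ⟨Cg, hCg, hg⟩ := hg
  set S : ℝ := ∑ k ∈ Finset.range p, B k with hS
  have hS0 : 0 ≤ S := Finset.sum_nonneg fun k _ => hB k
  set Lc : ℝ := 1 + Real.log 3 / Real.log 2 with hLc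
  have hLc0 : 0 ≤ Lc := by
    have := log_two_pos
    have : 0 ≤ Real.log 3 := Real.log_nonneg (by norm_num)
    positivity
  set K1 : ℝ := Cg * CT * B p * 2 ^ (e + p) with hK1
  set K2 : ℝ := Cg * (CT * (2 ^ p * S)) with hK2
  set K3 : ℝ := Cg * B 0 * 2 ^ (d + p) * Lc ^ α * 2 ^ (d - e) with hK3
  set K4 : ℝ := Cg * B 0 * 2 ^ e * 2 ^ (p + e - 1) with hK4
  have hK10 : 0 ≤ K1 := by have := hB p; positivity
  have hK20 : 0 ≤ K2 := by positivity
  have hK30 : 0 ≤ K3 := by have := hB 0; positivity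
  have hK40 : 0 ≤ K4 := by have := hB 0; positivity
  refine ⟨K1 + K2 + K3 + K4, by positivity, fun x => ?_⟩
  obtain ⟨q, hq, hq1, hq2⟩ := hT (Sh x Φ)
  refine ⟨q, hq, fun m => ?_⟩
  have hx := wt_pos x
  have hm := wt_pos m
  have hxm := wt_pos (x - m)
  have hax := aa_pos x
  have ham := aa_pos m
  have hlx := lg_pos x
  have hlm := lg_pos m
  have hnn1 : 0 ≤ (if aa m ≤ aa x then lg x ^ α * wt m ^ d else 0) := by
    split_ifs <;> positivity
  have hnn2 : 0 ≤ (if (aa x + 2) / 2 ≤ aa m then aa x * (wt m ^ (d + 1) * lg m ^ α) else 0) := by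
    split_ifs <;> positivity
  have hnn3 : 0 ≤ (if aa (x - m) ≤ 2 * aa x then lg x ^ α * wt (x - m) ^ d else 0) := by
    split_ifs <;> positivity
  have hQ : 0 ≤ wt x ^ (e + p) := by positivity
  rw [abs_mul]
  have hgm := hg m
  have hΨ : Sh x Φ (-m) = Φ (x - m) := by rw [Sh_apply, neg_add_eq_sub]
  by_cases hnear : 2 * nr m ≤ nr x
  · have h1 : aa m ≤ aa x := by
      unfold aa
      have : (nr m : ℝ) ≤ nr x := by exact_mod_cast (by omega : nr m ≤ nr x)
      linarith
    have h2 := hq1 (-m) (B p * (2 * wt x) ^ (e + p)) (by have := hB p; positivity)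
      (fun l hl y hy => by
        rw [Dl_Sh, Sh_apply]
        refine (hBl p l hl _).trans ?_
        have : wt (y + x) ≤ 2 * wt x := by
          apply wt_le_of_aa
          rw [nr_neg] at hy
          have h3 : nr x ≤ nr (y + x) + nr y := by
            have := nr_sub (y + x) y
            simpa using this
          have h4 : nr x ≤ 2 * nr (y + x) := by omega
          unfold aa
          have : (nr x : ℝ) ≤ 2 * nr (y + x) := by exact_mod_cast h4
          linarith
        have := hB p
        have := wt_pos (y + x)
        gcongr)
    rw [hΨ, aa_neg] at h2
    have h3 : lg m ^ α ≤ lg x ^ α := by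
      have : lg m ≤ lg x := Real.log_le_log ham h1
      gcongr
    calc |g m| * |Φ (x - m) - q (-m)| ≤ (Cg * wt m ^ (d + p) * lg m ^ α) *
          (CT * aa m ^ p * (B p * (2 * wt x) ^ (e + p))) :=
            mul_le_mul hgm h2 (abs_nonneg _) (by positivity)
      _ = K1 * wt x ^ (e + p) * (lg m ^ α * (wt m ^ d * (wt m * aa m) ^ p)) := by
          rw [hK1, pow_add (wt m), mul_pow, mul_pow]; ring
      _ = K1 * wt x ^ (e + p) * (lg m ^ α * wt m ^ d) := by rw [wt_mul_aa]; simp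
      _ ≤ K1 * wt x ^ (e + p) * (lg x ^ α * wt m ^ d) := by gcongr
      _ = K1 * wt x ^ (e + p) * (if aa m ≤ aa x then lg x ^ α * wt m ^ d else 0) := by
          rw [if_pos h1]
      _ ≤ _ := by
          apply mul_le_mul _ (by linarith) hnn1 (by positivity)
          gcongr
          linarith
  · have hτ : (aa x + 2) / 2 ≤ aa m := by
      unfold aa
      have : (nr x : ℝ) ≤ 2 * nr m := by exact_mod_cast (by omega : nr x ≤ 2 * nr m)
      linarith
    have h2m : aa x ≤ 2 * aa m := by linarith
    have hwm : wt m ≤ 2 * wt x := wt_le_of_aa h2m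
    have h2 := hq2 (fun k => B k * wt x ^ (e + k)) (fun k => by have := hB k; positivity)
      (fun l _ => by
        rw [Dl_Sh, Sh_apply, zero_add]
        exact hBl l.length l rfl x) (-m)
    rw [aa_neg] at h2
    have h3 := h2.trans (mul_le_mul_of_nonneg_left (q_bound e p x m h2m B hB) hCT)
    have hgq : |g m| * |q (-m)| ≤ K2 * wt x ^ (e + p) *
        (if (aa x + 2) / 2 ≤ aa m then aa x * (wt m ^ (d + 1) * lg m ^ α) else 0) := by
      rw [if_pos hτ]
      calc |g m| * |q (-m)| ≤ (Cg * wt m ^ (d + p) * lg m ^ α) * (CT * ((2 ^ p * S) *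
            (wt x ^ (e + p) * aa x * (aa m ^ p * wt m)))) :=
              mul_le_mul hgm h3 (abs_nonneg _) (by positivity)
        _ = K2 * wt x ^ (e + p) * (aa x * ((wt m ^ (d + 1) * (wt m * aa m) ^ p) * lg m ^ α)) := by
            rw [hK2, pow_add (wt m), mul_pow]; ring
        _ = _ := by rw [wt_mul_aa]; simp
    have hΦ0 := hBl 0 [] rfl (x - m)
    rw [List.map_nil, Dl_nil, add_zero] at hΦ0
    have hB0 := hB 0
    have hgΦ : |g m| * |Φ (x - m)| ≤ K4 * wt x ^ (e + p) *
        (if (aa x + 2) / 2 ≤ aa m then aa x * (wt m ^ (d + 1) * lg m ^ α) else 0) +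
        K3 * wt x ^ (e + p) * 
        (if aa (x - m) ≤ 2 * aa x then lg x ^ α * wt (x - m) ^ d else 0) := by
      by_cases hmid : nr (x - m) ≤ 2 * nr x
      · have h4 : aa (x - m) ≤ 2 * aa x := by
          unfold aa
          have : (nr (x - m) : ℝ) ≤ 2 * nr x := by exact_mod_cast hmid
          linarith
        have h5 : aa m ≤ 3 * aa x := by
          have h6 : nr m ≤ nr x + nr (x - m) := by
            have := nr_sub x (x - m)
            simpa using this
          have : (nr m : ℝ) ≤ 3 * nr x := by exact_mod_cast (by omega : nr m ≤ 3 * nr x)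
          unfold aa; linarith
        have h6 : lg m ≤ Lc * lg x := lg_le_of_aa (by norm_num) h5
        have h7 : wt (x - m) ^ e ≤ wt (x - m) ^ d * (2 * aa x) ^ (d - e) := by
          have : wt (x - m) ^ e = wt (x - m) ^ d * aa (x - m) ^ (d - e) := by
            have e0 : wt (x - m) ^ d = wt (x - m) ^ e * wt (x - m) ^ (d - e) := by
              rw [← pow_add]; congr 1; omega
            rw [e0, mul_assoc, ← mul_pow, wt_mul_aa]; simp
          rw [this]
          have := aa_pos (x - m)
          gcongr
        have e1 : wt x ^ (d + p) * aa x ^ (d - e) = wt x ^ (e + p) := by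
          have : d + p = (e + p) + (d - e) := by omega
          rw [this, pow_add, mul_assoc, ← mul_pow, wt_mul_aa]; simp
        have : |g m| * |Φ (x - m)| ≤ K3 * wt x ^ (e + p) * 
          (if aa (x - m) ≤ 2 * aa x then lg x ^ α * wt (x - m) ^ d else 0) := by
          rw [if_pos h4]
          calc |g m| * |Φ (x - m)| ≤ (Cg * wt m ^ (d + p) * lg m ^ α) * (B 0 * wt (x - m) ^ e) :=
                mul_le_mul hgm hΦ0 (abs_nonneg _) (by positivity)
            _ ≤ (Cg * (2 * wt x) ^ (d + p) * (Lc * lg x) ^ α) *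
                (B 0 * (wt (x - m) ^ d * (2 * aa x) ^ (d - e))) := by gcongr
            _ = K3 * (wt x ^ (d + p) * aa x ^ (d - e)) * (lg x ^ α * wt (x - m) ^ d) := by
                rw [hK3, mul_pow, mul_pow, mul_pow]; ring
            _ = _ := by rw [e1]
        have h9 := mul_nonneg (mul_nonneg hK40 hQ) hnn2
        linarith
      · have h4 : wt (x - m) ≤ 2 * wt m := by
          apply wt_le_of_aa
          have h6 : nr m ≤ nr x + nr (x - m) := by
            have := nr_sub x (x - m)
            simpa using this
          have : (nr m : ℝ) ≤ 2 * nr (x - m) := by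
            exact_mod_cast (by omega : nr m ≤ 2 * nr (x - m))
          unfold aa; linarith
        have e0 : d + p + e = (d + 1) + (p + e - 1) := by omega
        have e1 : wt x ^ (p + e - 1) = wt x ^ (e + p) * aa x := by
          have : e + p = (p + e - 1) + 1 := by omega
          rw [this, pow_succ, mul_assoc, wt_mul_aa]; simp
        have : |g m| * |Φ (x - m)| ≤ K4 * wt x ^ (e + p) *
          (if (aa x + 2) / 2 ≤ aa m then aa x * (wt m ^ (d + 1) * lg m ^ α) else 0) := by
          rw [if_pos hτ]
          calc |g m| * |Φ (x - m)| ≤ (Cg * wt m ^ (d + p) * lg m ^ α) * (B 0 * wt (x - m) ^ e) :=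
                mul_le_mul hgm hΦ0 (abs_nonneg _) (by positivity)
            _ ≤ (Cg * wt m ^ (d + p) * lg m ^ α) * (B 0 * (2 * wt m) ^ e) := by gcongr
            _ = Cg * B 0 * 2 ^ e * lg m ^ α * wt m ^ (d + p + e) := by
                rw [mul_pow, pow_add (wt m) (d + p)]; ring
            _ = Cg * B 0 * 2 ^ e * lg m ^ α * (wt m ^ (d + 1) * wt m ^ (p + e - 1)) := by
                rw [e0, pow_add (wt m) (d + 1)]
            _ ≤ Cg * B 0 * 2 ^ e * lg m ^ α * (wt m ^ (d + 1) * (2 * wt x) ^ (p + e - 1)) := by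
                gcongr
            _ = _ := by rw [mul_pow, e1, hK4]; ring
        have h9 := mul_nonneg (mul_nonneg hK30 hQ) hnn3
        linarith
    have htri : |Φ (x - m) - q (-m)| ≤ |Φ (x - m)| + |q (-m)| := abs_sub _ _
    have h8 : |g m| * |Φ (x - m) - q (-m)| ≤ |g m| * |Φ (x - m)| + |g m| * |q (-m)| := by
      rw [← mul_add]
      exact mul_le_mul_of_nonneg_left htri (abs_nonneg _)
    refine h8.trans ((add_le_add hgΦ hgq).trans ?_)
    generalize (if aa m ≤ aa x then lg x ^ α * wt m ^ d else 0) = I1 at *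
    generalize (if (aa x + 2) / 2 ≤ aa m then aa x * (wt m ^ (d + 1) * lg m ^ α) else 0) = I2 at *
    generalize (if aa (x - m) ≤ 2 * aa x then lg x ^ α * wt (x - m) ^ d else 0) = I3 at *
    generalize wt x ^ (e + p) = Q at *
    clear_value K1 K2 K3 K4
    have n1 := mul_nonneg hQ hnn1
    have n2 := mul_nonneg hQ hnn2
    have n3 := mul_nonneg hQ hnn3
    have m1 := mul_nonneg hK10 n1
    have m2 := mul_nonneg hK20 n1
    have m3 := mul_nonneg hK30 n1
    have m4 := mul_nonneg hK40 n1
    have m5 := mul_nonneg hK10 n2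
    have m6 := mul_nonneg hK30 n2
    have m7 := mul_nonneg hK10 n3
    have m8 := mul_nonneg hK20 n3
    have m9 := mul_nonneg hK40 n3
    linarith

/-- vanishing moments -/
def Mom {d : ℕ} (p : ℕ) (g : Zd d → ℝ) : Prop :=
  ∀ q ∈ Pol d p, HasSum (fun m => g m * q (-m)) 0

theorem Dec.convsub {d n α : ℕ} {Φ : Zd d → ℝ} (h : Dec n α Φ) (x : Zd d) :
    Dec n α (fun m => Φ (x - m)) := by
  have := ((Dec.tinv n α).sh x _ h).refl
  have e : (fun m => Φ (x - m)) = fun m => Sh x Φ (-m) := by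
    funext m; rw [Sh_apply, neg_add_eq_sub]
  rw [e]; exact this

theorem conv_summable {d e p α : ℕ} (he1 : 1 ≤ e) {Φ g : Zd d → ℝ}
    (hΦ : Dec e 0 Φ) (hg : Dec (d + p) α g) (x : Zd d) : Summable fun m => g m * Φ (x - m) := by
  have := hg.mul (hΦ.convsub x)
  exact Dec.summable (this.mono (by omega))

theorem conv_main {d e p α : ℕ} (he1 : 1 ≤ e) (hed : e ≤ d) {Φ g : Zd d → ℝ}
    (hΦ : ∀ l, Dec (e + l.length) 0 (Dl l Φ)) (hg : Dec (d + p) α g) (hm : Mom p g) :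
    Dec (e + p) (α + 1) (fun x => ∑' m, g m * Φ (x - m)) := by
  classical
  obtain ⟨K, hK, hpt⟩ := conv_pt he1 hed hΦ hg
  obtain ⟨C1, hC1, hS1⟩ := S1 d
  obtain ⟨C3, hC3, hS3⟩ := S3 d α
  have hl2 := log_two_pos
  refine ⟨K * (C1 + 2 * C3 * (Real.log 2)⁻¹ + 2 * C1), by positivity, fun x => ?_⟩
  obtain ⟨q, hq, hb⟩ := hpt x
  have hsum : HasSum (fun m => g m * (Φ (x - m) - q (-m))) (∑' m, g m * Φ (x - m)) := by
    have h0 : Dec e 0 Φ := hΦ []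
    have h1 := (conv_summable he1 h0 hg x).hasSum.sub (hm q hq)
    rw [sub_zero] at h1
    have e1 : (fun m => g m * (Φ (x - m) - q (-m))) =
        fun m => g m * Φ (x - m) - g m * q (-m) := by funext m; ring
    rw [e1]
    exact h1
  have hx := wt_pos x
  have hax := aa_pos x
  have hax2 := two_le_aa x
  have hlx := lg_pos x
  have hb2 : ∀ F : Finset (Zd d), |∑ m ∈ F, g m * (Φ (x - m) - q (-m))| ≤
      K * (C1 + 2 * C3 * (Real.log 2)⁻¹ + 2 * C1) * wt x ^ (e + p) * lg x ^ (α + 1) := by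
    intro F
    refine (Finset.abs_sum_le_sum_abs _ _).trans ((Finset.sum_le_sum fun m _ => hb m).trans ?_)
    rw [← Finset.mul_sum, Finset.sum_add_distrib, Finset.sum_add_distrib, ← Finset.sum_filter,
      ← Finset.sum_filter, ← Finset.sum_filter, ← Finset.mul_sum, ← Finset.mul_sum,
      ← Finset.mul_sum]
    have a1 := hS1 F (aa x) hax2
    have a2 := hS3 F ((aa x + 2) / 2) (by linarith)
    have a3 : ∑ m ∈ F.filter (fun m => aa (x - m) ≤ 2 * aa x), wt (x - m) ^ d ≤
        C1 * (2 * lg x) := by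
      have := hS1 (F.image fun m => x - m) (2 * aa x) (by linarith)
      rw [Finset.filter_image, Finset.sum_image (by intro a _ b _ h; simpa using h)] at this
      refine this.trans ?_
      have h3 := log_mul_le (K := 2) (by norm_num) hax2
      rw [div_self hl2.ne'] at h3
      have : Real.log (2 * aa x) ≤ 2 * lg x := by unfold lg; linarith
      gcongr
    have b2 : ((aa x + 2) / 2)⁻¹ ≤ 2 * wt x := by
      unfold wt
      rw [inv_le_iff_one_le_mul₀ (by linarith)]
      have : (aa x)⁻¹ * aa x = 1 := inv_mul_cancel₀ hax.ne'
      have : 0 < (aa x)⁻¹ := by positivity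
      nlinarith
    have b3 : Real.log ((aa x + 2) / 2) ≤ lg x := Real.log_le_log (by linarith) (by linarith)
    have b4 : 0 ≤ Real.log ((aa x + 2) / 2) := Real.log_nonneg (by linarith)
    have a2' := a2.trans (show C3 * ((aa x + 2) / 2)⁻¹ * Real.log ((aa x + 2) / 2) ^ α ≤
      C3 * (2 * wt x) * lg x ^ α by gcongr)
    have b5 : lg x ^ α ≤ (Real.log 2)⁻¹ * lg x ^ (α + 1) := by
      rw [pow_succ]
      have h1 := log_two_le_lg x
      have : 1 ≤ (Real.log 2)⁻¹ * lg x := by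
        rw [← div_eq_inv_mul, le_div_iff₀ hl2]; linarith
      have h2 : 0 < lg x ^ α := by positivity
      nlinarith
    have c1 : lg x ^ α * ∑ m ∈ F.filter (fun m => aa m ≤ aa x), wt m ^ d ≤
        C1 * lg x ^ (α + 1) := by
      calc _ ≤ lg x ^ α * (C1 * lg x) := by gcongr; exact a1
        _ = _ := by ring
    have c2 : aa x * ∑ m ∈ F.filter (fun m => (aa x + 2) / 2 ≤ aa m), wt m ^ (d + 1) * lg m ^ α ≤
        2 * C3 * (Real.log 2)⁻¹ * lg x ^ (α + 1) := by
      calc _ ≤ aa x * (C3 * (2 * wt x) * lg x ^ α) := by gcongr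
        _ = 2 * C3 * lg x ^ α * (aa x * wt x) := by ring
        _ = 2 * C3 * lg x ^ α := by rw [aa_mul_wt, mul_one]
        _ ≤ 2 * C3 * ((Real.log 2)⁻¹ * lg x ^ (α + 1)) := by gcongr
        _ = _ := by ring
    have c3 : lg x ^ α * ∑ m ∈ F.filter (fun m => aa (x - m) ≤ 2 * aa x), wt (x - m) ^ d ≤
        2 * C1 * lg x ^ (α + 1) := by
      calc _ ≤ lg x ^ α * (C1 * (2 * lg x)) := by gcongr
        _ = _ := by ring
    calc _ ≤ K * wt x ^ (e + p) * (C1 * lg x ^ (α + 1) +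
            2 * C3 * (Real.log 2)⁻¹ * lg x ^ (α + 1) + 2 * C1 * lg x ^ (α + 1)) := by gcongr
      _ = _ := by ring
  have hten : Tendsto (fun F : Finset (Zd d) => |∑ m ∈ F, g m * (Φ (x - m) - q (-m))|) atTop
      (𝓝 |∑' m, g m * Φ (x - m)|) := (continuous_abs.tendsto _).comp hsum
  exact le_of_tendsto' hten hb2

/-! ### Cutoff functions -/

def sqn {d : ℕ} (m : Zd d) : ℝ := ∑ i, (m i : ℝ) ^ 2

def hh (s : ℝ) : ℝ := (max 0 (1 - s)) ^ 2

def eta {d : ℕ} (r : ℝ) (m : Zd d) : ℝ := hh (sqn m / r ^ 2)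

theorem abs_coord {d : ℕ} (m : Zd d) (i : Fin d) : |(m i : ℝ)| ≤ nr m := by
  have h := le_nr m i
  have : |(m i : ℝ)| = ((m i).natAbs : ℝ) := by
    rw [Nat.cast_natAbs]; push_cast; rfl
  rw [this]; exact_mod_cast h

theorem sqn_nonneg {d : ℕ} (m : Zd d) : 0 ≤ sqn m := Finset.sum_nonneg fun _ _ => by positivity

theorem nr_sq_le {d : ℕ} (m : Zd d) : (nr m : ℝ) ^ 2 ≤ sqn m := by
  by_cases h : (Finset.univ : Finset (Fin d)).Nonempty
  · obtain ⟨i, _, hi⟩ := Finset.exists_mem_eq_sup Finset.univ h (fun i => (m i).natAbs)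
    have : (nr m : ℝ) = |(m i : ℝ)| := by
      unfold nr; rw [hi, Nat.cast_natAbs]; push_cast; rfl
    rw [this, sq_abs]
    exact Finset.single_le_sum (f := fun i => (m i : ℝ) ^ 2) (fun _ _ => by positivity)
      (Finset.mem_univ i)
  · have : nr m = 0 := by
      unfold nr
      rw [Finset.not_nonempty_iff_eq_empty.mp h]; rfl
    rw [this]; simpa using sqn_nonneg m

theorem hh_nonneg (s : ℝ) : 0 ≤ hh s := sq_nonneg _

theorem hh_le_one {s : ℝ} (h : 0 ≤ s) : hh s ≤ 1 := by
  unfold hh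
  have h1 : max 0 (1 - s) ≤ 1 := max_le (by norm_num) (by linarith)
  have h0 : 0 ≤ max 0 (1 - s) := le_max_left _ _
  nlinarith

theorem hh_zero {s : ℝ} (h : 1 ≤ s) : hh s = 0 := by
  unfold hh; rw [max_eq_left (by linarith)]; simp

theorem hh_lip {s t : ℝ} (hs : 0 ≤ s) (ht : 0 ≤ t) : |hh s - hh t| ≤ 2 * |s - t| := by
  unfold hh
  have h1 : |max 0 (1 - s) - max 0 (1 - t)| ≤ |s - t| := by
    have := abs_max_sub_max_le_abs (1 - s) (1 - t) 0
    rw [max_comm, max_comm 0 (1 - t)]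
    refine this.trans (le_of_eq ?_)
    rw [abs_sub_comm]; congr 1; ring
  have a1 : max 0 (1 - s) ≤ 1 := max_le (by norm_num) (by linarith)
  have a0 : 0 ≤ max 0 (1 - s) := le_max_left _ _
  have b1 : max 0 (1 - t) ≤ 1 := max_le (by norm_num) (by linarith)
  have b0 : 0 ≤ max 0 (1 - t) := le_max_left _ _
  rw [sq_sub_sq, abs_mul, abs_of_nonneg (by linarith)]
  have := abs_nonneg (max 0 (1 - s) - max 0 (1 - t))
  nlinarith

theorem hh_taylor (s t : ℝ) :
    |hh s - hh t - (-2 * max 0 (1 - t)) * (s - t)| ≤ (s - t) ^ 2 := by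
  unfold hh
  rw [abs_le]
  rcases le_total 0 (1 - s) with h1 | h1 <;> rcases le_total 0 (1 - t) with h2 | h2 <;>
    simp only [max_eq_left, max_eq_right, h1, h2] <;> constructor <;> nlinarith

theorem eta_nonneg {d : ℕ} (r : ℝ) (m : Zd d) : 0 ≤ eta r m := hh_nonneg _

theorem eta_le_one {d : ℕ} (r : ℝ) (m : Zd d) : eta r m ≤ 1 :=
  hh_le_one (div_nonneg (sqn_nonneg m) (sq_nonneg r))

theorem eta_supp {d : ℕ} {r : ℝ} (hr : 1 ≤ r) {m : Zd d} (h : r ≤ nr m) : eta r m = 0 := by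
  apply hh_zero
  rw [le_div_iff₀ (by positivity)]
  have := nr_sq_le m
  nlinarith

theorem eta_tendsto {d : ℕ} (m : Zd d) : Tendsto (fun r : ℝ => eta r m) atTop (𝓝 1) := by
  have h1 : Tendsto (fun r : ℝ => sqn m / r ^ 2) atTop (𝓝 0) :=
    Tendsto.div_atTop tendsto_const_nhds (tendsto_pow_atTop (by norm_num))
  have hc : Continuous hh := by unfold hh; fun_prop
  have := (hc.tendsto 0).comp h1
  have e : hh 0 = 1 := by simp [hh]
  rw [e] at this
  exact this

theorem sqn_diff {d : ℕ} (e m : Zd d) {c r : ℝ} (hr : 1 ≤ r) (hm : (nr m : ℝ) ≤ c * r) :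
    |sqn (m + e) - sqn m| ≤ d * ((2 * c + nr e) * nr e) * r := by
  unfold sqn
  rw [← Finset.sum_sub_distrib]
  refine (Finset.abs_sum_le_sum_abs _ _).trans ?_
  have : ∀ i ∈ Finset.univ, |(((m + e) i : ℤ) : ℝ) ^ 2 - (m i : ℝ) ^ 2| ≤
      (2 * c + nr e) * nr e * r := by
    intro i _
    have h1 := abs_coord m i
    have h2 := abs_coord e i
    have e1 : (((m + e) i : ℤ) : ℝ) ^ 2 - (m i : ℝ) ^ 2 = (2 * m i + e i) * e i := by
      simp only [Pi.add_apply]; push_cast; ring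
    rw [e1, abs_mul]
    have h3 : |2 * (m i : ℝ) + e i| ≤ 2 * (c * r) + nr e := by
      refine (abs_add_le _ _).trans ?_
      rw [abs_mul, abs_two]; linarith
    have hn : (0:ℝ) ≤ nr e := Nat.cast_nonneg _
    have h4 : 2 * (c * r) + nr e ≤ (2 * c + nr e) * r := by nlinarith
    calc _ ≤ ((2 * c + nr e) * r) * nr e :=
          mul_le_mul (h3.trans h4) h2 (abs_nonneg _) ((abs_nonneg _).trans (h3.trans h4))
      _ = _ := by ring
  refine (Finset.sum_le_sum this).trans (le_of_eq ?_)
  rw [Finset.sum_const, Finset.card_univ, Fintype.card_fin, nsmul_eq_mul]; ring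

theorem eta_df {d : ℕ} (e : Zd d) : ∃ C : ℝ, 0 ≤ C ∧ ∀ r : ℝ, 1 ≤ r → ∀ m,
    |Df e (eta r) m| ≤ C / r := by
  refine ⟨2 * (d * ((2 * (1 + nr e) + nr e) * nr e)), by positivity, fun r hr m => ?_⟩
  have hr0 : 0 < r := by linarith
  rw [Df_apply]
  have hn : (0:ℝ) ≤ nr e := Nat.cast_nonneg _
  by_cases h : (nr m : ℝ) ≤ (1 + nr e) * r
  · have h1 := sqn_diff e m hr h
    unfold eta
    refine (hh_lip (div_nonneg (sqn_nonneg _) (sq_nonneg r))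
      (div_nonneg (sqn_nonneg _) (sq_nonneg r))).trans ?_
    rw [← sub_div, abs_div, abs_of_nonneg (sq_nonneg r)]
    have : |sqn (m + e) - sqn m| / r ^ 2 ≤ (d * ((2 * (1 + nr e) + nr e) * nr e)) / r := by
      rw [div_le_div_iff₀ (by positivity) hr0]
      calc _ ≤ (d * ((2 * (1 + nr e) + nr e) * nr e) * r) * r := by gcongr
        _ = _ := by ring
    calc _ ≤ 2 * ((d * ((2 * (1 + nr e) + nr e) * nr e)) / r) := by gcongr
      _ = _ := by ring
  · push Not at h
    have h1 : r + nr e ≤ nr m := by nlinarith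
    have h2 : (nr m : ℝ) ≤ nr (m + e) + nr e := by
      have := nr_sub (m + e) e
      rw [add_sub_cancel_right] at this
      exact_mod_cast this
    rw [eta_supp hr (by linarith), eta_supp hr (by linarith), sub_zero, abs_zero]
    positivity

theorem eta_dd {d : ℕ} (a b : Zd d) : ∃ C : ℝ, 0 ≤ C ∧ ∀ r : ℝ, 1 ≤ r → ∀ m,
    |Df a (Df b (eta r)) m| ≤ C / r ^ 2 := by
  set c : ℝ := 1 + nr a + nr b with hc
  have hc0 : 0 ≤ c := by positivity
  set k : Zd d → ℝ := fun e => d * ((2 * c + nr e) * nr e) with hk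
  set S : ℝ := ∑ i, 2 * |(a i : ℝ)| * |(b i : ℝ)| with hS
  have hS0 : 0 ≤ S := Finset.sum_nonneg fun _ _ => by positivity
  refine ⟨2 * S + (k a) ^ 2 + (k b) ^ 2 + (k (a + b)) ^ 2, by positivity, fun r hr m => ?_⟩
  have hr0 : 0 < r := by linarith
  have hna : (0:ℝ) ≤ nr a := Nat.cast_nonneg _
  have hnb : (0:ℝ) ≤ nr b := Nat.cast_nonneg _
  have eD : Df a (Df b (eta r)) m = eta r (m + (a + b)) - eta r (m + a) - eta r (m + b) + eta r m := by
    simp only [Df_apply, add_assoc]; ring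
  rw [eD]
  by_cases h : (nr m : ℝ) ≤ c * r
  · set s0 := sqn m / r ^ 2 with hs0
    set h' := -2 * max 0 (1 - s0) with hh'
    have hb' : |h'| ≤ 2 := by
      have h1 : max 0 (1 - s0) ≤ 1 := max_le (by norm_num)
        (by have := div_nonneg (sqn_nonneg m) (sq_nonneg r); linarith)
      have h0 : 0 ≤ max 0 (1 - s0) := le_max_left _ _
      rw [hh', abs_le]; constructor <;> linarith
    have key : ∀ e, |eta r (m + e) - eta r m - h' * (sqn (m + e) / r ^ 2 - s0)| ≤
        (k e) ^ 2 / r ^ 2 := by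
      intro e
      refine (hh_taylor _ _).trans ?_
      have h1 := sqn_diff e m hr h
      rw [← sub_div, div_pow, div_le_div_iff₀ (by positivity) (by positivity)]
      have h2 : (sqn (m + e) - sqn m) ^ 2 ≤ (k e * r) ^ 2 := by
        rw [← sq_abs]
        exact pow_le_pow_left₀ (abs_nonneg _) h1 2
      calc _ ≤ (k e * r) ^ 2 * r ^ 2 := by gcongr
        _ = _ := by ring
    have k1 := key a
    have k2 := key b
    have k3 := key (a + b)
    have hsec : |sqn (m + (a + b)) - sqn (m + a) - sqn (m + b) + sqn m| ≤ S := by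
      unfold sqn
      rw [← Finset.sum_sub_distrib, ← Finset.sum_sub_distrib, ← Finset.sum_add_distrib]
      refine (Finset.abs_sum_le_sum_abs _ _).trans (Finset.sum_le_sum fun i _ => le_of_eq ?_)
      rw [mul_assoc, ← abs_mul, ← abs_two, ← abs_mul]
      congr 1
      simp only [Pi.add_apply]; push_cast
      ring
    have e2 : eta r (m + (a + b)) - eta r (m + a) - eta r (m + b) + eta r m =
        (eta r (m + (a + b)) - eta r m - h' * (sqn (m + (a + b)) / r ^ 2 - s0)) -
        (eta r (m + a) - eta r m - h' * (sqn (m + a) / r ^ 2 - s0)) -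
        (eta r (m + b) - eta r m - h' * (sqn (m + b) / r ^ 2 - s0)) +
        h' * ((sqn (m + (a + b)) - sqn (m + a) - sqn (m + b) + sqn m) / r ^ 2) := by
      rw [hs0]; ring
    have k4 : |h' * ((sqn (m + (a + b)) - sqn (m + a) - sqn (m + b) + sqn m) / r ^ 2)| ≤
        2 * S / r ^ 2 := by
      rw [abs_mul, abs_div, abs_of_nonneg (sq_nonneg r), mul_div_assoc]
      gcongr
    rw [e2]
    refine (abs_add_le _ _).trans ?_
    have := (abs_sub (eta r (m + (a + b)) - eta r m - h' * (sqn (m + (a + b)) / r ^ 2 - s0) -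
        (eta r (m + a) - eta r m - h' * (sqn (m + a) / r ^ 2 - s0)))
        (eta r (m + b) - eta r m - h' * (sqn (m + b) / r ^ 2 - s0)))
    have := (abs_sub (eta r (m + (a + b)) - eta r m - h' * (sqn (m + (a + b)) / r ^ 2 - s0))
        (eta r (m + a) - eta r m - h' * (sqn (m + a) / r ^ 2 - s0)))
    have e5 : (2 * S + k a ^ 2 + k b ^ 2 + k (a + b) ^ 2) / r ^ 2 = 2 * S / r ^ 2 +
        k a ^ 2 / r ^ 2 + k b ^ 2 / r ^ 2 + k (a + b) ^ 2 / r ^ 2 := by ring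
    rw [e5]
    linarith
  · push Not at h
    have h1 : r + nr a + nr b ≤ nr m := by nlinarith
    have h2 : ∀ e, (nr m : ℝ) ≤ nr (m + e) + nr e := by
      intro e
      have := nr_sub (m + e) e
      rw [add_sub_cancel_right] at this
      exact_mod_cast this
    have h3 : (nr (a + b) : ℝ) ≤ nr a + nr b := by exact_mod_cast nr_add a b
    rw [eta_supp hr (by linarith [h2 (a + b)]), eta_supp hr (by linarith [h2 a]),
      eta_supp hr (by linarith [h2 b]), eta_supp hr (by linarith)]
    simp only [sub_zero, add_zero, abs_zero]
    positivity

theorem eta_finite {d : ℕ} {r : ℝ} (hr : 1 ≤ r) : (Function.support (eta (d := d) r)).Finite := by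
  apply (finite_aa_le (d := d) (r + 2)).subset
  intro m hm
  by_contra h
  apply hm
  apply eta_supp hr
  have : ¬ aa m ≤ r + 2 := h
  unfold aa at this
  linarith

theorem hs_congr {ι : Type*} {f g : ι → ℝ} {s : ℝ} (h : HasSum f s) (hfg : ∀ m, f m = g m) :
    HasSum g s := (funext hfg : f = g) ▸ h

/-- summation by parts against a finitely supported function -/
theorem hasSum_shift {d : ℕ} {f : Zd d → ℝ} {s : ℝ} (h : HasSum f s) (e : Zd d) :
    HasSum (fun m => f (m + e)) s := by
  have := (Equiv.addRight e).hasSum_iff.mpr h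
  exact this

theorem tele {d α : ℕ} {E : Zd d → ℝ} (hE : Dec d α E) (ρ : Zd d) (hs : Summable (Df ρ E)) :
    HasSum (Df ρ E) 0 := by
  classical
  have h0 : ∑' m, Df ρ E m = 0 := by
    have lim1 : Tendsto (fun r : ℝ => ∑' m, eta r m * Df ρ E m) atTop (𝓝 (∑' m, Df ρ E m)) := by
      refine tendsto_tsum_of_dominated_convergence (bound := fun m => |Df ρ E m|) hs.abs ?_ ?_
      · intro m
        have := (eta_tendsto m).mul_const (Df ρ E m)
        rwa [one_mul] at this
      · filter_upwards with r m
        rw [Real.norm_eq_abs, abs_mul, abs_of_nonneg (eta_nonneg r m)]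
        have := eta_le_one r m
        have := abs_nonneg (Df ρ E m)
        nlinarith
    have lim2 : Tendsto (fun r : ℝ => ∑' m, eta r m * Df ρ E m) atTop (𝓝 0) := by
      obtain ⟨Ce, hCe, heta⟩ := eta_df (-ρ)
      obtain ⟨C1, hC1, hS1⟩ := S1 d
      obtain ⟨CE, hCE, hE⟩ := hE
      set A : ℝ := 3 + nr ρ with hA
      have hn : (0:ℝ) ≤ nr ρ := Nat.cast_nonneg _
      have hlim : Tendsto (fun r : ℝ => CE * Ce * C1 * A * (Real.log (A * r) ^ (α + 1) / (A * r)))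
          atTop (𝓝 0) := by
        have h1 : Tendsto (fun x : ℝ => Real.log x ^ (α + 1) / x) atTop (𝓝 0) :=
          (Real.isLittleO_pow_log_id_atTop (n := α + 1)).tendsto_div_nhds_zero
        have h2 : Tendsto (fun r : ℝ => A * r) atTop atTop :=
          tendsto_id.const_mul_atTop (by linarith)
        have := (h1.comp h2).const_mul (CE * Ce * C1 * A)
        rw [mul_zero] at this
        exact this
      refine squeeze_zero_norm' ?_ hlim
      filter_upwards [eventually_ge_atTop (1:ℝ)] with r hr
      have hr0 : 0 < r := by linarith
      have hAr : 2 ≤ A * r := by nlinarith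
      -- summation by parts
      have hfin : (Function.support (fun m => eta r m * E (m + ρ))).Finite :=
        (eta_finite hr).subset (Function.support_mul_subset_left _ _)
      have hfin2 : (Function.support (fun m => eta r m * E m)).Finite :=
        (eta_finite hr).subset (Function.support_mul_subset_left _ _)
      have s1 : HasSum (fun m => eta r m * E (m + ρ)) (∑' m, eta r m * E (m + ρ)) :=
        (summable_of_hasFiniteSupport hfin).hasSum
      have s2 : HasSum (fun m => eta r m * E m) (∑' m, eta r m * E m) :=
        (summable_of_hasFiniteSupport hfin2).hasSum
      have s3 := hasSum_shift s1 (-ρ)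
      have s4 : HasSum (fun m => eta r m * Df ρ E m)
          (∑' m, eta r m * E (m + ρ) - ∑' m, eta r m * E m) := by
        have := s1.sub s2
        refine hs_congr this fun m => ?_
        rw [Df_apply]; ring
      have s5 : HasSum (fun m => Df (-ρ) (eta r) m * E m)
          (∑' m, eta r m * E (m + ρ) - ∑' m, eta r m * E m) := by
        have := s3.sub s2
        simp only [neg_add_cancel_right] at this
        refine hs_congr this fun m => ?_
        rw [Df_apply]; ring
      rw [s4.tsum_eq]
      have hten : Tendsto (fun F : Finset (Zd d) => |∑ m ∈ F, Df (-ρ) (eta r) m * E m|) atTop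
        (𝓝 |∑' m, eta r m * E (m + ρ) - ∑' m, eta r m * E m|) := (continuous_abs.tendsto _).comp s5
      refine le_of_tendsto' hten fun F => ?_
      refine (Finset.abs_sum_le_sum_abs _ _).trans ?_
      have hterm : ∀ m ∈ F, |Df (-ρ) (eta r) m * E m| ≤
          if aa m ≤ A * r then (CE * Ce / r * Real.log (A * r) ^ α) * wt m ^ d else 0 := by
        intro m _
        rw [abs_mul]
        have hw := wt_pos m
        have hl := lg_pos m
        split_ifs with h
        · have h1 : lg m ≤ Real.log (A * r) := Real.log_le_log (aa_pos m) h
          calc _ ≤ (Ce / r) * (CE * wt m ^ d * lg m ^ α) :=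
                mul_le_mul (heta r hr m) (hE m) (abs_nonneg _) (by positivity)
            _ ≤ (Ce / r) * (CE * wt m ^ d * Real.log (A * r) ^ α) := by gcongr
            _ = _ := by ring
        · have hm : A * r < nr m + 2 := not_le.mp h
          have h3 : r + nr ρ ≤ nr m := by nlinarith
          have h2 : (nr m : ℝ) ≤ nr (m + -ρ) + nr ρ := by
            have := nr_sub (m + -ρ) (-ρ)
            rw [add_sub_cancel_right, nr_neg] at this
            exact_mod_cast this
          rw [Df_apply, eta_supp hr (by linarith), eta_supp hr (by linarith)]
          simp
      refine (Finset.sum_le_sum hterm).trans ?_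
      rw [← Finset.sum_filter, ← Finset.mul_sum]
      have hL : 0 ≤ Real.log (A * r) := Real.log_nonneg (by linarith)
      have hA0 : 0 < A := by linarith
      calc _ ≤ (CE * Ce / r * Real.log (A * r) ^ α) * (C1 * Real.log (A * r)) := by
            gcongr; exact hS1 F _ hAr
        _ = _ := by rw [pow_succ]; field_simp
    exact tendsto_nhds_unique lim1 lim2
  rw [← h0]
  exact hs.hasSum

/-! ### Moments -/

theorem Dec.mul_pol {d n P α : ℕ} {F q : Zd d → ℝ} (hF : Dec (n + P) α F)
    (hq : q ∈ Pol d (P + 1)) : Dec n α (fun m => F m * q (-m)) := by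
  obtain ⟨C, hC, hF⟩ := hF
  obtain ⟨C', hC', hq⟩ := Pol_growth P hq
  refine ⟨C * C', by positivity, fun m => ?_⟩
  have hw := wt_pos m
  have hl := lg_pos m
  have ha := aa_pos m
  have h1 := hq (-m)
  rw [aa_neg] at h1
  rw [abs_mul]
  calc _ ≤ (C * wt m ^ (n + P) * lg m ^ α) * (C' * aa m ^ P) :=
        mul_le_mul (hF m) h1 (abs_nonneg _) (by positivity)
    _ = C * C' * (wt m ^ n * (wt m * aa m) ^ P) * lg m ^ α := by
        rw [pow_add, mul_pow]; ring
    _ = _ := by rw [wt_mul_aa]; ring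

theorem mom_step {d P α : ℕ} {F : Zd d → ℝ} {ρ : Zd d} (hF : Dec (d + P) α F)
    (hDF : Dec (d + P + 1) α (Df ρ F)) (hm : Mom P F) : Mom (P + 1) (Df ρ F) := by
  intro q hq
  have hE : Dec d α (fun m => F m * q (-m)) := hF.mul_pol hq
  have hS : Summable (fun m => Df ρ F m * q (-m)) := by
    have : Dec (d + 1) α (fun m => Df ρ F m * q (-m)) := by
      apply Dec.mul_pol (P := P) _ hq
      have e : d + 1 + P = d + P + 1 := by omega
      rw [e]; exact hDF
    exact this.summable
  have h1 := hasSum_shift (hm _ (mem_Pol_succ.mp hq ρ)) ρ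
  have h2 : HasSum (Df ρ (fun m => F m * q (-m))) 0 := by
    apply tele hE
    have := hS.sub h1.summable
    refine this.congr fun m => ?_
    simp only [Df_apply]
    have : -(m + ρ) + ρ = -m := by abel
    rw [this]; ring
  have := h2.add h1
  rw [add_zero] at this
  refine hs_congr this fun m => ?_
  simp only [Df_apply]
  have : -(m + ρ) + ρ = -m := by abel
  rw [this]; ring

theorem mom_list {d p α : ℕ} {F : Zd d → ℝ} (hm : Mom p F) (l : List (Zd d)) :
    (∀ l', l' <:+ l → Dec (d + p + l'.length) α (Dl l' F)) → Mom (p + l.length) (Dl l F) := by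
  induction l with
  | nil => intro _; exact hm
  | cons e l ih =>
    intro h
    have ih' := ih fun l' hl' => h l' (hl'.trans (List.suffix_cons e l))
    rw [List.length_cons, ← add_assoc, Dl_cons]
    apply mom_step (α := α) _ _ ih'
    · have := h l (List.suffix_cons e l)
      rwa [add_assoc] at this
    · have := h (e :: l) (List.suffix_refl _)
      rwa [List.length_cons, ← add_assoc, add_assoc d, Dl_cons] at this

/-- The discrete delta. -/
def del {d : ℕ} : Zd d → ℝ := Pi.single 0 1

theorem del_finite {d : ℕ} : (Function.support (del (d := d))).Finite := by
  apply (Set.finite_singleton (0 : Zd d)).subset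
  intro m hm
  by_contra h
  exact hm (by simp only [del]; exact Pi.single_eq_of_ne h 1)

theorem del_dec {d : ℕ} (n α : ℕ) (l : List (Zd d)) : Dec n α (Dl l (del (d := d))) :=
  (Dec.of_finite n α del_finite).dl l

theorem del_hasSum {d : ℕ} (l : List (Zd d)) (q : Zd d → ℝ) : ∀ x,
    HasSum (fun m => Dl l del m * q (x - m)) (Dl l q x) := by
  induction l with
  | nil =>
    intro x
    have := hasSum_single (f := fun m => Dl [] del m * q (x - m)) 0 (fun m hm => by
      simp only [Dl_nil, del]; rw [Pi.single_eq_of_ne hm]; simp)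
    simpa [Dl_nil, del] using this
  | cons e l ih =>
    intro x
    have h1 := hasSum_shift (ih (x + e)) e
    have := h1.sub (ih x)
    show HasSum _ (Dl l q (x + e) - Dl l q x)
    refine hs_congr this fun m => ?_
    have e1 : x + e - (m + e) = x - m := by abel
    rw [Dl_cons, Df_apply, e1]; ring

theorem pol_summable {d p α : ℕ} {f : Zd d → ℝ} (hf : Dec (d + p) α f) {q : Zd d → ℝ}
    (hq : q ∈ Pol d p) : Summable fun m => f m * q (-m) := by
  cases p with
  | zero =>
    rw [mem_Pol_zero.mp hq]
    simpa using summable_zero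
  | succ p =>
    have : Dec (d + 1) α (fun m => f m * q (-m)) := by
      apply Dec.mul_pol (P := p) _ hq
      have e : d + 1 + p = d + (p + 1) := by omega
      rw [e]; exact hf
    exact this.summable

abbrev tup {d i : ℕ} (σv : Fin i → Fin d) : List (Zd d) := List.ofFn fun m => bs (σv m)

theorem tup_perm {d i : ℕ} (σv : Fin i → Fin d) (π : Equiv.Perm (Fin i)) (f : Zd d → ℝ) :
    Dl (tup (σv ∘ π)) f = Dl (tup σv) f := by
  apply Dl_perm
  exact Equiv.Perm.ofFn_comp_perm π (fun m => bs (σv m))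

theorem symmetrize {d i : ℕ} (b0 : (Fin i → Fin d) → ℝ) : ∃ b : (Fin i → Fin d) → ℝ,
    (∀ (π : Equiv.Perm (Fin i)) σv, b (σv ∘ π) = b σv) ∧
    ∀ f : Zd d → ℝ, ∑ σv, b σv • Dl (tup σv) f = ∑ σv, b0 σv • Dl (tup σv) f := by
  refine ⟨fun σv => ((i.factorial : ℝ))⁻¹ * ∑ π : Equiv.Perm (Fin i), b0 (σv ∘ π), ?_, ?_⟩
  · intro π σv
    show _ * _ = _ * _
    congr 1
    exact Fintype.sum_equiv (Equiv.mulLeft π) _ _ (fun τ => by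
      simp only [Equiv.coe_mulLeft, Equiv.Perm.coe_mul]; rfl)
  · intro f
    have key : ∀ π : Equiv.Perm (Fin i), ∑ σv, b0 (σv ∘ π) • Dl (tup σv) f =
        ∑ σv, b0 σv • Dl (tup σv) f := by
      intro π
      refine Fintype.sum_equiv (Equiv.arrowCongr π.symm (Equiv.refl (Fin d))) _ _ (fun σv => ?_)
      have : (Equiv.arrowCongr π.symm (Equiv.refl (Fin d))) σv = σv ∘ π := by
        funext m; simp [Equiv.arrowCongr]
      rw [this, tup_perm]
    simp only [mul_smul, Finset.sum_smul]
    rw [← Finset.smul_sum, Finset.sum_comm]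
    simp only [key]
    rw [Finset.sum_const, Finset.card_univ, Fintype.card_perm, Fintype.card_fin, ← Nat.cast_smul_eq_nsmul ℝ,
      smul_smul, inv_mul_cancel₀ (by positivity), one_smul]

theorem exists_b {d p α : ℕ} {f : Zd d → ℝ} (hf : Dec (d + p) α f) :
    ∃ b : (i : ℕ) → (Fin i → Fin d) → ℝ,
      (∀ i (π : Equiv.Perm (Fin i)) σv, b i (σv ∘ π) = b i σv) ∧
      Mom p (f - ∑ i ∈ Finset.range p, ∑ σv : Fin i → Fin d, b i σv • Dl (tup σv) del) := by
  classical
  let lam : Pol d p →ₗ[ℝ] ℝ :=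
    { toFun := fun q => ∑' m, f m * (q : Zd d → ℝ) (-m)
      map_add' := by
        intro q q'
        rw [← (pol_summable hf q.2).tsum_add (pol_summable hf q'.2)]
        congr 1; funext m
        simp only [Submodule.coe_add, Pi.add_apply]; ring
      map_smul' := by
        intro c q
        rw [RingHom.id_apply, smul_eq_mul, ← tsum_mul_left]
        congr 1; funext m
        simp only [Submodule.coe_smul, Pi.smul_apply, smul_eq_mul]; ring }
  let L : (Σ i : Fin p, (Fin i → Fin d)) → (Pol d p →ₗ[ℝ] ℝ) := fun s =>
    (LinearMap.proj (0 : Zd d)) ∘ₗ (Dl (tup s.2)) ∘ₗ (Pol d p).subtype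
  have hker : ⨅ s, LinearMap.ker (L s) ≤ LinearMap.ker lam := by
    intro q hq
    have hq0 : (q : Zd d → ℝ) = 0 := by
      apply Pol_inj q.2
      intro l hl
      rw [Submodule.mem_iInf] at hq
      have := hq ⟨⟨l.length, hl⟩, l.get⟩
      rw [LinearMap.mem_ker] at this
      have e : tup (l.get) = l.map bs := by
        unfold tup
        rw [← List.ofFn_get (l.map bs)]
        apply List.ext_get <;> simp
      have h2 : Dl (tup l.get) (q : Zd d → ℝ) 0 = 0 := this
      rwa [e] at h2
    have : q = 0 := Subtype.ext hq0
    rw [this]; exact Submodule.zero_mem _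
  have hspan := mem_span_of_iInf_ker_le_ker hker
  obtain ⟨c, hc⟩ := (Submodule.mem_span_range_iff_exists_fun ℝ).mp hspan
  let b0 : (i : ℕ) → (Fin i → Fin d) → ℝ := fun i σv =>
    if h : i < p then c ⟨⟨i, h⟩, σv⟩ else 0
  choose b hbsym hbeq using fun i => symmetrize (b0 i)
  refine ⟨b, hbsym, ?_⟩
  intro q hq
  have h1 := (pol_summable hf hq).hasSum
  have h2 : HasSum (fun m => (∑ i ∈ Finset.range p, ∑ σv : Fin i → Fin d,
      b i σv • Dl (tup σv) del) m * q (-m)) (∑ i ∈ Finset.range p, ∑ σv : Fin i → Fin d,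
      b i σv * Dl (tup σv) q 0) := by
    have : ∀ m, (∑ i ∈ Finset.range p, ∑ σv : Fin i → Fin d,
      b i σv • Dl (tup σv) del) m * q (-m) = ∑ i ∈ Finset.range p, ∑ σv : Fin i → Fin d,
      b i σv * (Dl (tup σv) del m * q (0 - m)) := by
      intro m
      simp only [Finset.sum_apply, Pi.smul_apply, smul_eq_mul, Finset.sum_mul, zero_sub, mul_assoc]
    simp only [this]
    exact hasSum_sum fun i _ => hasSum_sum fun σv _ => (del_hasSum (tup σv) q 0).mul_left _
  have h3 : ∑' m, f m * q (-m) = ∑ i ∈ Finset.range p, ∑ σv : Fin i → Fin d,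
      b i σv * Dl (tup σv) q 0 := by
    have e1 : lam ⟨q, hq⟩ = ∑' m, f m * q (-m) := rfl
    rw [← e1, ← hc]
    rw [LinearMap.sum_apply, Fintype.sum_sigma, ← Fin.sum_univ_eq_sum_range
      (fun i => ∑ σv : Fin i → Fin d, b i σv * Dl (tup σv) q 0) p]
    refine Finset.sum_congr rfl fun i _ => ?_
    have h4 := congrFun (hbeq i q) 0
    simp only [Finset.sum_apply, Pi.smul_apply, smul_eq_mul] at h4
    rw [h4]
    refine Finset.sum_congr rfl fun σv _ => ?_
    simp only [b0, i.2, dif_pos]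
    rfl
  have := h1.sub h2
  rw [h3, sub_self] at this
  refine hs_congr this fun m => ?_
  rw [Pi.sub_apply, sub_mul]

/-! ### Cutoff errors -/

theorem coarse {d : ℕ} {f : Zd d → ℝ} (hf : Tendsto f cofinite (𝓝 0)) {ε : ℝ} (hε : 0 < ε) :
    ∃ K : ℝ, 0 ≤ K ∧ ∀ m, |f m| ≤ ε + K * wt m ^ 2 := by
  have h1 : ∀ᶠ m in cofinite, |f m| < ε := by
    have := (Metric.tendsto_nhds.mp hf) ε hε
    simpa using this
  rw [eventually_cofinite] at h1
  set F := h1.toFinset with hF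
  refine ⟨∑ m ∈ F, |f m| * aa m ^ 2, Finset.sum_nonneg fun m _ => by positivity, fun m => ?_⟩
  by_cases h : |f m| < ε
  · have : 0 ≤ (∑ m ∈ F, |f m| * aa m ^ 2) * wt m ^ 2 :=
      mul_nonneg (Finset.sum_nonneg fun m _ => by positivity) (sq_nonneg _)
    linarith
  · have hm : m ∈ F := by rw [hF, Set.Finite.mem_toFinset]; exact h
    have h2 : |f m| * aa m ^ 2 ≤ ∑ m ∈ F, |f m| * aa m ^ 2 :=
      Finset.single_le_sum (f := fun m => |f m| * aa m ^ 2) (fun m _ => by positivity) hm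
    have h3 : |f m| = |f m| * aa m ^ 2 * wt m ^ 2 := by
      rw [mul_assoc, ← mul_pow, aa_mul_wt]; ring
    have h4 : |f m| * aa m ^ 2 * wt m ^ 2 ≤ (∑ m ∈ F, |f m| * aa m ^ 2) * wt m ^ 2 :=
      mul_le_mul_of_nonneg_right h2 (sq_nonneg _)
    linarith

theorem growth {d : ℕ} {V : Zd d → ℝ} (hV0 : V 0 = 0)
    (hV : ∀ e, Tendsto (Df e V) cofinite (𝓝 0)) {ε : ℝ} (hε : 0 < ε) :
    ∃ K : ℝ, 0 ≤ K ∧ ∀ m, |V m| ≤ ε * aa m + K := by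
  set ε' : ℝ := ε / (d + 1) with hε'
  have hε'0 : 0 < ε' := by positivity
  choose K hK0 hK using fun i : Fin d => coarse (hV (bs i)) hε'0
  set M := ∑ i, K i with hM
  have hM0 : 0 ≤ M := Finset.sum_nonneg fun i _ => hK0 i
  have hsum : Summable fun k : ℕ => 1 / ((k : ℝ) + 2) ^ 2 := by
    have := (summable_nat_add_iff 2).mpr (Real.summable_one_div_nat_pow.mpr (le_refl 2))
    simpa using this
  set T := ∑' k : ℕ, 1 / ((k : ℝ) + 2) ^ 2 with hT
  have hT0 : 0 ≤ T := tsum_nonneg fun k => by positivity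
  refine ⟨d * (M * T), by positivity, fun m => ?_⟩
  have hp := path_bound V (fun k => ε' + M * (1 / ((k : ℝ) + 2) ^ 2)) (fun k => by positivity) (nr m)
    (fun i y hy => ?_) m le_rfl
  · rw [hV0, sub_zero] at hp
    refine hp.trans ?_
    rw [Finset.sum_add_distrib, Finset.sum_const, Finset.card_range, nsmul_eq_mul,
      ← Finset.mul_sum, mul_add]
    have h1 : ∑ k ∈ Finset.range (nr m + 1), 1 / ((k : ℝ) + 2) ^ 2 ≤ T :=
      hsum.sum_le_tsum _ fun k _ => by positivity
    have h2 : (d : ℝ) * (((nr m + 1 : ℕ) : ℝ) * ε') ≤ ε * aa m := by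
      have e1 : ε = ε' * (d + 1) := by rw [hε']; field_simp
      rw [e1]; push_cast; unfold aa
      have : (0:ℝ) ≤ nr m := Nat.cast_nonneg _
      have : (0:ℝ) ≤ d := Nat.cast_nonneg _
      have h3 : (d : ℝ) * (nr m + 1) ≤ (d + 1) * (nr m + 2) := by nlinarith
      nlinarith
    have h3 : (d : ℝ) * (M * ∑ k ∈ Finset.range (nr m + 1), 1 / ((k : ℝ) + 2) ^ 2) ≤ d * (M * T) := by
      gcongr
    linarith
  · refine (hK i y).trans ?_
    have h1 : K i ≤ M := Finset.single_le_sum (fun i _ => hK0 i) (Finset.mem_univ i)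
    have h2 : wt y ^ 2 ≤ 1 / (((y i).natAbs : ℝ) + 2) ^ 2 := by
      unfold wt aa
      rw [inv_pow, ← one_div]
      have : ((y i).natAbs : ℝ) ≤ nr y := by exact_mod_cast le_nr y i
      gcongr
    have := mul_le_mul h1 h2 (sq_nonneg _) hM0
    linarith

theorem prod_dd {d : ℕ} (a b : Zd d) (η V : Zd d → ℝ) (m : Zd d) :
    Df a (Df b (η * V)) m - η m * Df a (Df b V) m =
      Df a η m * Df b V (m + a) + Df b η m * Df a V (m + b)
      + Df a (Df b η) m * V (m + (a + b)) := by
  simp only [Df_apply, Pi.mul_apply, add_assoc, add_comm b a]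
  ring

theorem eta_far {d : ℕ} {r : ℝ} (hr : 1 ≤ r) {B : ℝ} {e m : Zd d} (hB : 3 + (nr e : ℝ) ≤ B)
    (h : ¬ aa m ≤ B * r) : eta r (m + e) = 0 := by
  have hm : B * r < nr m + 2 := not_le.mp h
  have hn : (0:ℝ) ≤ nr e := Nat.cast_nonneg _
  have h3 : r + nr e ≤ nr m := by nlinarith
  have h2 : (nr m : ℝ) ≤ nr (m + e) + nr e := by
    have := nr_sub (m + e) e
    rw [add_sub_cancel_right] at this
    exact_mod_cast this
  exact eta_supp hr (by linarith)

theorem Sh_tendsto {d : ℕ} {f : Zd d → ℝ} (hf : Tendsto f cofinite (𝓝 0)) (a : Zd d) :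
    Tendsto (fun m => f (m + a)) cofinite (𝓝 0) :=
  hf.comp (Function.Injective.tendsto_cofinite (add_left_injective a))

theorem err {d : ℕ} {V Ψ : Zd (d + 1) → ℝ} (hV0 : V 0 = 0)
    (hV : ∀ e, Tendsto (Df e V) cofinite (𝓝 0)) (hΨ : Dec d 0 Ψ) (a b : Zd (d + 1)) :
    Tendsto (fun r : ℝ => ∑' m, Ψ m *
      (Df a (Df b (eta r * V)) m - eta r m * Df a (Df b V) m)) atTop (𝓝 0) := by
  classical
  obtain ⟨CΨ, hCΨ, hΨ⟩ := hΨ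
  obtain ⟨C1, hC1, he1⟩ := eta_df a
  obtain ⟨C2, hC2, he2⟩ := eta_df b
  obtain ⟨C3, hC3, he3⟩ := eta_dd a b
  obtain ⟨CS, hCS, hS⟩ := S2 d
  set T := ∑' m : Zd (d + 1), wt m ^ (d + 2) with hT
  have hTs : Summable fun m : Zd (d + 1) => wt m ^ (d + 2) := by
    simpa using summable_wt (d + 1) 0
  have hT0 : 0 ≤ T := tsum_nonneg fun m => by have := wt_pos m; positivity
  set B : ℝ := 3 + nr a + nr b with hB
  have hna : (0:ℝ) ≤ nr a := Nat.cast_nonneg _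
  have hnb : (0:ℝ) ≤ nr b := Nat.cast_nonneg _
  have hab : (nr (a + b) : ℝ) ≤ nr a + nr b := by exact_mod_cast nr_add a b
  have hB0 : 0 < B := by linarith
  set Q : ℝ := CΨ * (C1 + C2 + C3 * (B * B)) * CS * B with hQ
  have hQ0 : 0 ≤ Q := by positivity
  have key : ∀ ε : ℝ, 0 < ε → ∃ K : ℝ, ∀ r : ℝ, 1 ≤ r → |∑' m, Ψ m *
      (Df a (Df b (eta r * V)) m - eta r m * Df a (Df b V) m)| ≤ ε * Q + K / r := by
    intro ε hε
    obtain ⟨K1, hK1, hb1⟩ := coarse (Sh_tendsto (hV b) a) hε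
    obtain ⟨K2, hK2, hb2⟩ := coarse (Sh_tendsto (hV a) b) hε
    obtain ⟨K3, hK3, hb3⟩ := growth hV0 hV hε
    refine ⟨CΨ * C3 * K3 * CS * B + CΨ * (C1 * K1 + C2 * K2) * T, fun r hr => ?_⟩
    have hr0 : 0 < r := by linarith
    set f : Zd (d + 1) → ℝ := fun m => Ψ m *
      (Df a (Df b (eta r * V)) m - eta r m * Df a (Df b V) m) with hf
    have hz : ∀ m, ¬ aa m ≤ B * r → f m = 0 := by
      intro m hm
      have z1 := eta_far (e := a) hr (by linarith) hm
      have z2 := eta_far (e := b) hr (by linarith) hm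
      have z3 := eta_far (e := a + b) hr (by linarith) hm
      have z0 := eta_far (e := 0) hr (by rw [nr_zero]; push_cast; linarith) hm
      rw [add_zero] at z0
      simp only [hf, Df_apply, Pi.mul_apply, add_assoc, z0, z1, z2, z3]
      ring
    have hfin : (Function.support f).Finite := by
      apply (finite_aa_le (B * r)).subset
      intro m hm
      by_contra h
      exact hm (hz m h)
    have s5 : HasSum f (∑' m, f m) := (summable_of_hasFiniteSupport hfin).hasSum
    have hten : Tendsto (fun F : Finset (Zd (d + 1)) => |∑ m ∈ F, f m|) atTop
        (𝓝 |∑' m, f m|) := (continuous_abs.tendsto _).comp s5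
    refine le_of_tendsto' hten fun F => ?_
    refine (Finset.abs_sum_le_sum_abs _ _).trans ?_
    set P : ℝ := CΨ * ((C1 + C2) * ε / r + C3 * (ε * (B * (B * r)) + K3) / r ^ 2) with hP
    have hP0 : 0 ≤ P := by positivity
    set P' : ℝ := CΨ * (C1 * K1 + C2 * K2) / r with hP'
    have hP'0 : 0 ≤ P' := by positivity
    have hterm : ∀ m ∈ F, |f m| ≤ (if aa m ≤ B * r then P * wt m ^ d else 0) + P' * wt m ^ (d + 2) := by
      intro m _
      have hw := wt_pos m
      split_ifs with h
      · simp only [hf]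
        rw [abs_mul, prod_dd]
        have t1 : |Df a (eta r) m * Df b V (m + a)| ≤ C1 / r * (ε + K1 * wt m ^ 2) := by
          rw [abs_mul]
          exact mul_le_mul (he1 r hr m) (hb1 m) (abs_nonneg _) (by positivity)
        have t2 : |Df b (eta r) m * Df a V (m + b)| ≤ C2 / r * (ε + K2 * wt m ^ 2) := by
          rw [abs_mul]
          exact mul_le_mul (he2 r hr m) (hb2 m) (abs_nonneg _) (by positivity)
        have t3 : |Df a (Df b (eta r)) m * V (m + (a + b))| ≤ C3 / r ^ 2 * (ε * (B * (B * r)) + K3) := by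
          rw [abs_mul]
          refine mul_le_mul (he3 r hr m) ((hb3 _).trans ?_) (abs_nonneg _) (by positivity)
          have h1 := aa_add_le m (a + b)
          have h2 : (1 + (nr (a + b) : ℝ)) * aa m ≤ B * (B * r) :=
            mul_le_mul (by linarith) h (aa_pos m).le hB0.le
          have := mul_le_mul_of_nonneg_left (h1.trans h2) hε.le
          linarith
        have t0 : |Ψ m| ≤ CΨ * wt m ^ d := by simpa using hΨ m
        have tt := (abs_add_le (Df a (eta r) m * Df b V (m + a) + Df b (eta r) m * Df a V (m + b))
          (Df a (Df b (eta r)) m * V (m + (a + b)))).trans (add_le_add_left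
            (abs_add_le (Df a (eta r) m * Df b V (m + a)) (Df b (eta r) m * Df a V (m + b))) _)
        have tt2 := tt.trans (add_le_add (add_le_add t1 t2) t3)
        refine (mul_le_mul t0 tt2 (abs_nonneg _) (by positivity)).trans (le_of_eq ?_)
        rw [hP, hP', pow_add]
        field_simp
        ring
      · rw [hz m h, abs_zero]
        positivity
    refine (Finset.sum_le_sum hterm).trans ?_
    rw [Finset.sum_add_distrib, ← Finset.sum_filter, ← Finset.mul_sum, ← Finset.mul_sum]
    have h1 := hS F (B * r) (by nlinarith)
    have h2 : ∑ m ∈ F, wt m ^ (d + 2) ≤ T :=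
      hTs.sum_le_tsum _ fun m _ => by have := wt_pos m; positivity
    calc _ ≤ P * (CS * (B * r)) + P' * T := by gcongr
      _ = _ := by
        rw [hP, hP', hQ]; field_simp; ring
  rw [Metric.tendsto_nhds]
  intro δ hδ
  obtain ⟨K, hK⟩ := key (δ / (2 * (Q + 1))) (by positivity)
  have hlim : Tendsto (fun r : ℝ => K / r) atTop (𝓝 0) := tendsto_const_nhds.div_atTop tendsto_id
  filter_upwards [eventually_ge_atTop (1:ℝ), hlim.eventually_lt_const (half_pos hδ)] with r hr hr2
  rw [Real.dist_eq, sub_zero]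
  refine (hK r hr).trans_lt ?_
  have : δ / (2 * (Q + 1)) * Q ≤ δ / 2 := by
    rw [div_mul_eq_mul_div, div_le_div_iff₀ (by positivity) (by norm_num)]
    nlinarith
  linarith

/-! ### The operator in coordinates and the representation formula -/

def Hs {d N : ℕ} (R : Finset (Zd d)) (C : Zd d → Zd d → Fin N → Fin N → ℝ)
    (U : Fin N → Zd d → ℝ) (i : Fin N) : Zd d → ℝ :=
  ∑ σ ∈ R, ∑ ρ ∈ R, ∑ j, C σ ρ i j • Df (-σ) (Df ρ (U j))

theorem Hs_apply {d N : ℕ} (R : Finset (Zd d)) (C : Zd d → Zd d → Fin N → Fin N → ℝ)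
    (U : Fin N → Zd d → ℝ) (i : Fin N) (m : Zd d) :
    Hs R C U i m = ∑ σ ∈ R, ∑ ρ ∈ R, ∑ j, C σ ρ i j * Df (-σ) (Df ρ (U j)) m := by
  simp only [Hs, Finset.sum_apply, Pi.smul_apply, smul_eq_mul]

theorem Hs_Dl {d N : ℕ} (R : Finset (Zd d)) (C : Zd d → Zd d → Fin N → Fin N → ℝ)
    (U : Fin N → Zd d → ℝ) (i : Fin N) (l : List (Zd d)) :
    Hs R C (fun j => Dl l (U j)) i = Dl l (Hs R C U i) := by
  simp only [Hs, map_sum, map_smul, Dl_Df]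

theorem Hs_sub {d N : ℕ} (R : Finset (Zd d)) (C : Zd d → Zd d → Fin N → Fin N → ℝ)
    (U V : Fin N → Zd d → ℝ) (i : Fin N) :
    Hs R C (fun j => U j - V j) i = Hs R C U i - Hs R C V i := by
  simp only [Hs, map_sub, smul_sub, Finset.sum_sub_distrib]

theorem Hs_smul {d N : ℕ} (R : Finset (Zd d)) (C : Zd d → Zd d → Fin N → Fin N → ℝ)
    (U : Fin N → Zd d → ℝ) (c : ℝ) (i : Fin N) :
    Hs R C (fun j => c • U j) i = c • Hs R C U i := by
  simp only [Hs, map_smul, Finset.smul_sum]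
  refine Finset.sum_congr rfl fun σ _ => Finset.sum_congr rfl fun ρ _ =>
    Finset.sum_congr rfl fun j _ => smul_comm _ _ _

theorem Hs_add {d N : ℕ} (R : Finset (Zd d)) (C : Zd d → Zd d → Fin N → Fin N → ℝ)
    (U V : Fin N → Zd d → ℝ) (i : Fin N) :
    Hs R C (fun j => U j + V j) i = Hs R C U i + Hs R C V i := by
  simp only [Hs, map_add, smul_add, Finset.sum_add_distrib]

theorem Hs_sum {d N : ℕ} {ι : Type*} (R : Finset (Zd d)) (C : Zd d → Zd d → Fin N → Fin N → ℝ)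
    (s : Finset ι) (U : ι → Fin N → Zd d → ℝ) (i : Fin N) :
    Hs R C (fun j => ∑ t ∈ s, U t j) i = ∑ t ∈ s, Hs R C (U t) i := by
  classical
  induction s using Finset.induction_on with
  | empty => simp [Hs]
  | insert a s ha ih =>
    simp only [Finset.sum_insert ha]
    rw [Hs_add, ih]

theorem fs_sh {d : ℕ} {ψ : Zd d → ℝ} (h : (Function.support ψ).Finite) (a : Zd d) :
    (Function.support (fun m => ψ (m + a))).Finite := by
  have := h.preimage (f := fun m => m + a) ((add_left_injective a).injOn)
  exact this

theorem fs_df {d : ℕ} {ψ : Zd d → ℝ} (h : (Function.support ψ).Finite) (a : Zd d) :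
    (Function.support (Df a ψ)).Finite :=
  ((fs_sh h a).union h).subset (Function.support_sub _ _)

theorem fs_mul {d : ℕ} {ψ : Zd d → ℝ} (h : (Function.support ψ).Finite) (φ : Zd d → ℝ) :
    (Function.support (fun m => φ m * ψ m)).Finite :=
  h.subset (Function.support_mul_subset_right _ _)

theorem sbp1 {d : ℕ} {ψ : Zd d → ℝ} (h : (Function.support ψ).Finite) (φ : Zd d → ℝ) (a : Zd d) :
    ∑' m, φ m * Df a ψ m = ∑' m, Df (-a) φ m * ψ m := by
  have s1 : Summable fun m => φ m * ψ (m + a) :=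
    summable_of_hasFiniteSupport (fs_mul (fs_sh h a) φ)
  have s2 : Summable fun m => φ m * ψ m := summable_of_hasFiniteSupport (fs_mul h φ)
  have s3 : HasSum (fun m => φ (m + -a) * ψ m) (∑' m, φ m * ψ (m + a)) := by
    have := hasSum_shift s1.hasSum (-a)
    simpa only [neg_add_cancel_right] using this
  have h1 : HasSum (fun m => φ m * Df a ψ m) (∑' m, φ m * ψ (m + a) - ∑' m, φ m * ψ m) :=
    hs_congr (s1.hasSum.sub s2.hasSum) fun m => by rw [Df_apply]; ring
  have h2 : HasSum (fun m => Df (-a) φ m * ψ m) (∑' m, φ m * ψ (m + a) - ∑' m, φ m * ψ m) :=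
    hs_congr (s3.sub s2.hasSum) fun m => by rw [Df_apply]; ring
  rw [h1.tsum_eq, h2.tsum_eq]

theorem sbp2 {d : ℕ} {ψ : Zd d → ℝ} (h : (Function.support ψ).Finite) (φ : Zd d → ℝ) (σ ρ : Zd d) :
    ∑' m, φ m * Df (-σ) (Df ρ ψ) m = ∑' m, Df (-ρ) (Df σ φ) m * ψ m := by
  rw [sbp1 (fs_df h ρ), sbp1 h, neg_neg]

theorem adj {d N : ℕ} (R : Finset (Zd d)) (C : Zd d → Zd d → Fin N → Fin N → ℝ)
    (hC : ∀ σ ρ i j, C σ ρ i j = C ρ σ j i) (φ ψ : Fin N → Zd d → ℝ)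
    (hψ : ∀ k, (Function.support (ψ k)).Finite) :
    ∑' m, ∑ k, φ k m * Hs R C ψ k m = ∑' m, ∑ k, Hs R C φ k m * ψ k m := by
  classical
  set T : Finset (Fin N × Zd d × Zd d × Fin N) := Finset.univ ×ˢ R ×ˢ R ×ˢ Finset.univ with hT
  have e1 : ∀ m, ∑ k, φ k m * Hs R C ψ k m =
      ∑ t ∈ T, C t.2.1 t.2.2.1 t.1 t.2.2.2 * (φ t.1 m * Df (-t.2.1) (Df t.2.2.1 (ψ t.2.2.2)) m) := by
    intro m
    rw [hT]
    simp only [Hs_apply, Finset.mul_sum, Finset.sum_product]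
    refine Finset.sum_congr rfl fun k _ => Finset.sum_congr rfl fun σ _ =>
      Finset.sum_congr rfl fun ρ _ => Finset.sum_congr rfl fun j _ => by ring
  have e2 : ∀ m, ∑ k, Hs R C φ k m * ψ k m =
      ∑ t ∈ T, C t.2.1 t.2.2.1 t.1 t.2.2.2 * (Df (-t.2.2.1) (Df t.2.1 (φ t.1)) m * ψ t.2.2.2 m) := by
    intro m
    have : ∑ k, Hs R C φ k m * ψ k m = ∑ t ∈ T,
        C t.2.1 t.2.2.1 t.1 t.2.2.2 * Df (-t.2.1) (Df t.2.2.1 (φ t.2.2.2)) m * ψ t.1 m := by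
      rw [hT]
      simp only [Hs_apply, Finset.sum_mul, Finset.sum_product]
    rw [this]
    refine Finset.sum_nbij' (fun t => (t.2.2.2, t.2.2.1, t.2.1, t.1))
      (fun t => (t.2.2.2, t.2.2.1, t.2.1, t.1)) ?_ ?_ ?_ ?_ ?_
    · rintro ⟨k, σ, ρ, j⟩ h
      simp only [hT, Finset.mem_product, Finset.mem_univ, true_and, and_true] at h ⊢
      exact ⟨h.2, h.1⟩
    · rintro ⟨k, σ, ρ, j⟩ h
      simp only [hT, Finset.mem_product, Finset.mem_univ, true_and, and_true] at h ⊢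
      exact ⟨h.2, h.1⟩
    · rintro ⟨k, σ, ρ, j⟩ _; rfl
    · rintro ⟨k, σ, ρ, j⟩ _; rfl
    · rintro ⟨k, σ, ρ, j⟩ _
      simp only
      rw [hC σ ρ k j]; ring
  simp only [e1, e2]
  rw [Summable.tsum_finsetSum, Summable.tsum_finsetSum]
  · refine Finset.sum_congr rfl fun t _ => ?_
    rw [tsum_mul_left, tsum_mul_left, sbp2 (hψ _)]
  · intro t _
    exact (summable_of_hasFiniteSupport (fs_mul (hψ _) _)).mul_left _
  · intro t _
    exact (summable_of_hasFiniteSupport (fs_mul (fs_df (fs_df (hψ _) _) _) _)).mul_left _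

/-- left inverse property of the Green's function -/
theorem left_inv {d N : ℕ} (R : Finset (Zd d)) (C : Zd d → Zd d → Fin N → Fin N → ℝ)
    (hC : ∀ σ ρ i j, C σ ρ i j = C ρ σ j i) (G : Fin N → Fin N → Zd d → ℝ)
    (hG : ∀ k i, Hs R C (fun j => G j k) i = if i = k then del else 0)
    (ψ : Fin N → Zd d → ℝ) (hψ : ∀ k, (Function.support (ψ k)).Finite) (i : Fin N) (ℓ : Zd d) :
    HasSum (fun m => ∑ k, G k i (-(ℓ - m)) * Hs R C ψ k m) (ψ i ℓ) := by
  have hfs : ∀ k, (Function.support (Hs R C ψ k)).Finite := by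
    intro k
    unfold Hs
    refine (Set.Finite.subset (Set.Finite.biUnion R.finite_toSet fun σ _ =>
      Set.Finite.biUnion R.finite_toSet fun ρ _ =>
      Set.finite_iUnion fun j => fs_df (fs_df (hψ j) ρ) (-σ)) ?_)
    intro m hm
    by_contra h
    apply hm
    simp only [Finset.sum_apply, Pi.smul_apply, smul_eq_mul]
    refine Finset.sum_eq_zero fun σ hσ => Finset.sum_eq_zero fun ρ hρ =>
      Finset.sum_eq_zero fun j _ => ?_
    simp only [Set.mem_iUnion, not_exists] at h
    have := h σ hσ ρ hρ j
    rw [Function.mem_support, not_not] at this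
    rw [this, mul_zero]
  have hs : Summable (fun m => ∑ k, G k i (-(ℓ - m)) * Hs R C ψ k m) :=
    summable_sum fun k _ => summable_of_hasFiniteSupport (fs_mul (hfs k) (fun m => G k i (-(ℓ - m))))
  have key : ∑' m, ∑ k, G k i (-(ℓ - m)) * Hs R C ψ k m = ψ i ℓ := by
    rw [adj R C hC (fun k m => G k i (-(ℓ - m))) ψ hψ]
    have e1 : ∀ k, Hs R C (fun k m => G k i (-(ℓ - m))) k = Sh (-ℓ) (if k = i then del else 0) := by
      intro k
      rw [← hG i k]
      have : (fun k m => G k i (-(ℓ - m))) = fun k => Sh (-ℓ) (G k i) := by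
        funext k m
        rw [Sh_apply]; congr 1; abel
      rw [this]
      simp only [Hs, map_sum, map_smul, Df_Sh]
    have e2 : ∀ m, ∑ k, Hs R C (fun k m => G k i (-(ℓ - m))) k m * ψ k m =
        del (m - ℓ) * ψ i m := by
      intro m
      rw [Finset.sum_eq_single i]
      · rw [e1, if_pos rfl, Sh_apply, sub_eq_add_neg]
      · intro k _ hk
        rw [e1, if_neg hk, map_zero]; simp
      · simp
    simp only [e2]
    rw [tsum_eq_single ℓ]
    · simp [del]
    · intro m hm
      have : m - ℓ ≠ 0 := sub_ne_zero.mpr hm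
      simp only [del]; rw [Pi.single_eq_of_ne this, zero_mul]
  rw [← key]
  exact hs.hasSum

theorem rep {d N α : ℕ} (hd : 1 ≤ d) (R : Finset (Zd (d + 1)))
    (C : Zd (d + 1) → Zd (d + 1) → Fin N → Fin N → ℝ)
    (hC : ∀ σ ρ i j, C σ ρ i j = C ρ σ j i) (G : Fin N → Fin N → Zd (d + 1) → ℝ)
    (hG : ∀ k i, Hs R C (fun j => G j k) i = if i = k then del else 0)
    (hGd : ∀ e k i, Dec d 0 (Df e (G k i)))
    (W : Fin N → Zd (d + 1) → ℝ) (hW : ∀ j e, Tendsto (Df e (W j)) cofinite (𝓝 0))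
    (hg : ∀ k, Dec (d + 1) α (Hs R C W k)) (e : Zd (d + 1)) (i : Fin N) (ℓ : Zd (d + 1)) :
    Df e (W i) ℓ = ∑ k, ∑' m, Hs R C W k m * Df e (fun x => G k i (-x)) (ℓ - m) := by
  classical
  set V : Fin N → Zd (d + 1) → ℝ := fun j m => W j m - W j 0 with hV
  have hDV : ∀ a j, Df a (V j) = Df a (W j) := by
    intro a j; funext m; simp only [Df_apply, hV]; ring
  have hHV : ∀ k, Hs R C V k = Hs R C W k := by
    intro k; simp only [Hs, hDV]
  have hV0 : ∀ j, V j 0 = 0 := fun j => by simp [hV]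
  set Φ : Fin N → Zd (d + 1) → ℝ := fun k => Df e (fun x => G k i (-x)) with hΦ
  have hΦd : ∀ k, Dec d 0 (Φ k) := by
    intro k
    rw [hΦ]
    simp only [Df_refl]
    exact (hGd (-e) k i).refl
  set T : Finset (Fin N × Zd (d + 1) × Zd (d + 1) × Fin N) :=
    Finset.univ ×ˢ R ×ˢ R ×ˢ Finset.univ with hT
  set Er : ℝ → Fin N → Zd (d + 1) → Zd (d + 1) → Zd (d + 1) → ℝ := fun r j σ ρ m =>
    Df (-σ) (Df ρ (eta r * V j)) m - eta r m * Df (-σ) (Df ρ (V j)) m with hEr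
  -- the limit of the right side
  have lim1 : Tendsto (fun r : ℝ => (∑ k, ∑' m, eta r m * (Hs R C W k m * Φ k (ℓ - m))) +
      ∑ t ∈ T, C t.2.1 t.2.2.1 t.1 t.2.2.2 * ∑' m, Φ t.1 (ℓ - m) * Er r t.2.2.2 t.2.1 t.2.2.1 m)
      atTop (𝓝 ((∑ k, ∑' m, Hs R C W k m * Φ k (ℓ - m)) + ∑ t ∈ T, C t.2.1 t.2.2.1 t.1 t.2.2.2 * 0)) := by
    refine Tendsto.add (tendsto_finsetSum _ fun k _ => ?_) (tendsto_finsetSum _ fun t _ => ?_)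
    · have hs : Summable fun m => Hs R C W k m * Φ k (ℓ - m) :=
        conv_summable (p := 0) hd (hΦd k) (hg k) ℓ
      refine tendsto_tsum_of_dominated_convergence (bound := fun m => |Hs R C W k m * Φ k (ℓ - m)|)
        hs.abs ?_ ?_
      · intro m
        have := (eta_tendsto m).mul_const (Hs R C W k m * Φ k (ℓ - m))
        rwa [one_mul] at this
      · filter_upwards with r m
        rw [Real.norm_eq_abs, abs_mul, abs_of_nonneg (eta_nonneg r m)]
        have := eta_le_one r m
        have := abs_nonneg (Hs R C W k m * Φ k (ℓ - m))
        nlinarith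
    · refine Tendsto.const_mul _ ?_
      exact err (hV0 _) (fun a => by rw [hDV]; exact hW _ a) ((hΦd t.1).convsub ℓ) _ _
  -- the limit of the left side
  have lim2 : Tendsto (fun r : ℝ => Df e (eta r * V i) ℓ) atTop (𝓝 (Df e (W i) ℓ)) := by
    have h1 := (eta_tendsto (ℓ + e)).mul_const (V i (ℓ + e))
    have h2 := (eta_tendsto ℓ).mul_const (V i ℓ)
    have h3 := h1.sub h2
    rw [one_mul, one_mul] at h3
    rw [← hDV]
    exact h3
  have heq : (fun r : ℝ => (∑ k, ∑' m, eta r m * (Hs R C W k m * Φ k (ℓ - m))) +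
      ∑ t ∈ T, C t.2.1 t.2.2.1 t.1 t.2.2.2 * ∑' m, Φ t.1 (ℓ - m) * Er r t.2.2.2 t.2.1 t.2.2.1 m)
      =ᶠ[atTop] (fun r : ℝ => Df e (eta r * V i) ℓ) := by
    filter_upwards [eventually_ge_atTop (1:ℝ)] with r hr
    have hfs0 : ∀ f : Zd (d + 1) → ℝ, (Function.support (fun m => eta r m * f m)).Finite :=
      fun f => (eta_finite hr).subset (Function.support_mul_subset_left _ _)
    have hfs : ∀ j, (Function.support ((eta r * V j : Zd (d + 1) → ℝ))).Finite :=
      fun j => hfs0 (V j)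
    have l1 := left_inv R C hC G hG (fun j => eta r * V j) hfs i (ℓ + e)
    have l2 := left_inv R C hC G hG (fun j => eta r * V j) hfs i ℓ
    have l3 := l1.sub l2
    have s1 : ∀ k, Summable fun m => eta r m * (Hs R C W k m * Φ k (ℓ - m)) :=
      fun k => summable_of_hasFiniteSupport (hfs0 _)
    have s2 : ∀ k j σ ρ, Summable fun m => Φ k (ℓ - m) * Er r j σ ρ m := by
      intro k j σ ρ
      refine summable_of_hasFiniteSupport (fs_mul ?_ _)
      exact ((fs_df (fs_df (hfs j) ρ) (-σ)).union (hfs0 _)).subset (Function.support_sub _ _)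
    have l4 : HasSum (fun m => (∑ k, eta r m * (Hs R C W k m * Φ k (ℓ - m))) +
      ∑ t ∈ T, C t.2.1 t.2.2.1 t.1 t.2.2.2 * (Φ t.1 (ℓ - m) * Er r t.2.2.2 t.2.1 t.2.2.1 m))
      ((∑ k, ∑' m, eta r m * (Hs R C W k m * Φ k (ℓ - m))) +
      ∑ t ∈ T, C t.2.1 t.2.2.1 t.1 t.2.2.2 * ∑' m, Φ t.1 (ℓ - m) * Er r t.2.2.2 t.2.1 t.2.2.1 m) :=
      (hasSum_sum fun k _ => (s1 k).hasSum).add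
        (hasSum_sum fun t _ => (s2 t.1 t.2.2.2 t.2.1 t.2.2.1).hasSum.mul_left _)
    have l5 := hs_congr l4 (g := fun m => ∑ k, G k i (-(ℓ + e - m)) * Hs R C (fun j => eta r * V j) k m -
      ∑ k, G k i (-(ℓ - m)) * Hs R C (fun j => eta r * V j) k m) (fun m => ?_)
    · rw [l5.unique l3, Df_apply]
    · rw [hT, ← Finset.sum_sub_distrib]
      simp only [Finset.sum_product]
      rw [← Finset.sum_add_distrib]
      refine Finset.sum_congr rfl fun k _ => ?_
      have e1 : G k i (-(ℓ + e - m)) - G k i (-(ℓ - m)) = Φ k (ℓ - m) := by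
        simp only [hΦ, Df_apply]
        congr 3; abel
      rw [← sub_mul, e1, Hs_apply R C (fun j => eta r * V j), ← hHV, Hs_apply]
      simp only [Finset.mul_sum, Finset.sum_mul, ← Finset.sum_add_distrib, hEr]
      refine Finset.sum_congr rfl fun σ _ => Finset.sum_congr rfl fun ρ _ =>
        Finset.sum_congr rfl fun j _ => by ring
  have := tendsto_nhds_unique (lim1.congr' heq) lim2
  rw [← this]
  simp [hΦ]

theorem Dl_tendsto {d : ℕ} {f : Zd d → ℝ} (hf : Tendsto f cofinite (𝓝 0)) (l : List (Zd d)) :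
    Tendsto (Dl l f) cofinite (𝓝 0) := by
  induction l with
  | nil => exact hf
  | cons e l ih =>
    have := (Sh_tendsto ih e).sub ih
    rw [sub_zero] at this
    exact this

theorem green_refl {d n : ℕ} {G : Zd d → ℝ} (hG : ∀ e l, Dec (n + l.length) 0 (Dl l (Df e G)))
    (e : Zd d) (l : List (Zd d)) : Dec (n + l.length) 0 (Dl l (Df e (fun x => G (-x)))) := by
  rw [Df_refl, Dl_refl]
  have := (hG (-e) (l.map fun e => -e)).refl
  rwa [List.length_map] at this

theorem coreA {d N p α : ℕ} (hd : 1 ≤ d) (R : Finset (Zd (d + 1)))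
    (C : Zd (d + 1) → Zd (d + 1) → Fin N → Fin N → ℝ)
    (hC : ∀ σ ρ i j, C σ ρ i j = C ρ σ j i) (G : Fin N → Fin N → Zd (d + 1) → ℝ)
    (hG : ∀ k i, Hs R C (fun j => G j k) i = if i = k then del else 0)
    (hGd : ∀ k i e l, Dec (d + l.length) 0 (Dl l (Df e (G k i))))
    (W : Fin N → Zd (d + 1) → ℝ) (hW : ∀ j e, Tendsto (Df e (W j)) cofinite (𝓝 0))
    (hg : ∀ k, Dec (d + 1 + p) α (Hs R C W k)) (hm : ∀ k, Mom p (Hs R C W k)) (i : Fin N) :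
    (∀ e, Dec (d + p) (α + 1) (Df e (W i))) ∧
    (∀ a e, Dec (d + 1 + p) (α + 1) (Df a (Df e (W i)))) := by
  have hr := rep hd R C hC G hG (fun e k i => hGd k i e []) W hW (fun k => (hg k).mono (by omega))
  have hΦ : ∀ k e l, Dec (d + l.length) 0 (Dl l (Df e (fun x => G k i (-x)))) :=
    fun k e l => green_refl (hGd k i) e l
  refine ⟨fun e => ?_, fun a e => ?_⟩
  · have e1 : Df e (W i) = ∑ k, fun ℓ => ∑' m, Hs R C W k m * Df e (fun x => G k i (-x)) (ℓ - m) := by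
      funext ℓ
      rw [Finset.sum_apply]; exact hr e i ℓ
    rw [e1]
    exact Dec.sum fun k _ => conv_main hd (by omega) (hΦ k e) (hg k) (hm k)
  · have e1 : Df a (Df e (W i)) = ∑ k, fun ℓ => ∑' m, Hs R C W k m *
        Df a (Df e (fun x => G k i (-x))) (ℓ - m) := by
      funext ℓ
      rw [Finset.sum_apply, Df_apply, hr e i (ℓ + a), hr e i ℓ, ← Finset.sum_sub_distrib]
      refine Finset.sum_congr rfl fun k _ => ?_
      have hs : ∀ x, Summable fun m => Hs R C W k m * Df e (fun x => G k i (-x)) (x - m) :=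
        fun x => conv_summable hd (hΦ k e []) (hg k) x
      rw [← Summable.tsum_sub (hs _) (hs _)]
      refine tsum_congr fun m => ?_
      rw [Df_apply a, ← mul_sub, sub_add_eq_add_sub]
    rw [e1]
    refine Dec.sum fun k _ => conv_main (e := d + 1) (by omega) le_rfl (fun l => ?_) (hg k) (hm k)
    have := hΦ k e (l ++ [a])
    rw [Dl_append, List.length_append] at this
    have e2 : d + 1 + l.length = d + (l.length + [a].length) := by simp; omega
    rw [e2]; exact this

theorem coreB {d N p α : ℕ} (hd : 1 ≤ d) (R : Finset (Zd (d + 1)))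
    (C : Zd (d + 1) → Zd (d + 1) → Fin N → Fin N → ℝ)
    (hC : ∀ σ ρ i j, C σ ρ i j = C ρ σ j i) (G : Fin N → Fin N → Zd (d + 1) → ℝ)
    (hG : ∀ k i, Hs R C (fun j => G j k) i = if i = k then del else 0)
    (hGd : ∀ k i e l, Dec (d + l.length) 0 (Dl l (Df e (G k i))))
    (U : Fin N → Zd (d + 1) → ℝ) (hU : ∀ j e, Tendsto (Df e (U j)) cofinite (𝓝 0))
    (hf : ∀ k, Dec (d + 1 + p) α (Hs R C U k)) :
    ∃ b : (n : ℕ) → Fin N → (Fin n → Fin (d + 1)) → ℝ,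
      (∀ n k (π : Equiv.Perm (Fin n)) σv, b n k (σv ∘ π) = b n k σv) ∧
      ∀ W : Fin N → Zd (d + 1) → ℝ,
      (∀ i, W i = U i - ∑ n ∈ Finset.range p, ∑ k, ∑ σv, b n k σv • Dl (tup σv) (G i k)) →
      ∀ i, (∀ e, Dec (d + p) (α + 1) (Df e (W i))) ∧
        (∀ a e, Dec (d + 1 + p) (α + 1) (Df a (Df e (W i)))) ∧
        (∀ l0 : List (Zd (d + 1)),
          (∀ l', l' <:+ l0 → ∀ k, Dec (d + 1 + p + l'.length) α (Dl l' (Hs R C U k))) →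
          ∀ a e, Dec (d + 1 + p + l0.length) (α + 1) (Df a (Df e (Dl l0 (W i))))) := by
  choose b hb1 hb2 using fun k => exists_b (hf k)
  refine ⟨fun n k => b k n, fun n k π σv => hb1 k n π σv, fun W hWd i => ?_⟩
  have hHW : ∀ i, Hs R C W i = Hs R C U i -
      ∑ n ∈ Finset.range p, ∑ σv, b i n σv • Dl (tup σv) del := by
    intro i
    rw [funext hWd, Hs_sub, Hs_sum]
    congr 1
    refine Finset.sum_congr rfl fun n _ => ?_
    rw [Hs_sum]
    rw [Finset.sum_eq_single i]
    · rw [Hs_sum]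
      refine Finset.sum_congr rfl fun σv _ => ?_
      rw [Hs_smul, Hs_Dl, hG, if_pos rfl]
    · intro k _ hk
      rw [Hs_sum]
      refine Finset.sum_eq_zero fun σv _ => ?_
      rw [Hs_smul, Hs_Dl, hG, if_neg (Ne.symm hk), map_zero, smul_zero]
    · simp
  have hW : ∀ j e, Tendsto (Df e (W j)) cofinite (𝓝 0) := by
    intro j e
    rw [hWd j, map_sub, map_sum]
    have : Tendsto (∑ n ∈ Finset.range p, Df e (∑ k, ∑ σv, b k n σv • Dl (tup σv) (G j k)))
        cofinite (𝓝 0) := by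
      refine Dec.tendsto hd ?_
      refine Dec.sum fun n _ => ?_
      rw [map_sum]
      refine Dec.sum fun k _ => ?_
      rw [map_sum]
      refine Dec.sum fun σv _ => ?_
      rw [map_smul]
      refine Dec.smul ?_ _
      rw [← Dl_Df]
      exact (hGd j k e _).mono (by omega)
    have h := (hU j e).sub this
    rw [sub_zero] at h
    exact h
  have hgl : ∀ (l : List (Zd (d + 1))) k, Dec (d + 1 + p + l.length) α (Dl l (Hs R C U k)) →
      Dec (d + 1 + p + l.length) α (Dl l (Hs R C W k)) := by
    intro l k h
    rw [hHW, map_sub]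
    refine h.sub ?_
    rw [map_sum]
    refine Dec.sum fun n _ => ?_
    rw [map_sum]
    refine Dec.sum fun σv _ => ?_
    rw [map_smul, ← Dl_append]
    exact (del_dec _ _ _).smul _
  have hg : ∀ k, Dec (d + 1 + p) α (Hs R C W k) := fun k => hgl [] k (hf k)
  have hm : ∀ k, Mom p (Hs R C W k) := by
    intro k
    rw [hHW]; exact hb2 k
  have hA := coreA hd R C hC G hG hGd W hW hg hm i
  refine ⟨hA.1, hA.2, fun l0 hl0 a e => ?_⟩
  have hA2 := (coreA (p := p + l0.length) (α := α) hd R C hC G hG hGd (fun j => Dl l0 (W j))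
    (fun j e => by rw [← Dl_Df]; exact Dl_tendsto (hW j e) l0) (fun k => ?_) (fun k => ?_) i).2 a e
  · rw [add_assoc (d + 1)]; exact hA2
  · rw [Hs_Dl, ← add_assoc]
    exact hgl l0 k (hl0 l0 (List.suffix_refl _) k)
  · rw [Hs_Dl]
    exact mom_list (hm k) l0 fun l' hl' => hgl l' k (hl0 l' hl' k)

/-! ### Transfer to coordinates -/

def Pt {d : ℕ} (s : Fin d → Vec d) (z : Zd d) : Vec d := ∑ i, (z i : ℝ) • s i

theorem Pt_add {d : ℕ} (s : Fin d → Vec d) (x y : Zd d) : Pt s (x + y) = Pt s x + Pt s y := by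
  simp only [Pt, Pi.add_apply, Int.cast_add, add_smul, Finset.sum_add_distrib]

def PtHom {d : ℕ} (s : Fin d → Vec d) : Zd d →+ Vec d := AddMonoidHom.mk' (Pt s) (Pt_add s)

theorem Pt_zero {d : ℕ} (s : Fin d → Vec d) : Pt s 0 = 0 := map_zero (PtHom s)

theorem Pt_neg {d : ℕ} (s : Fin d → Vec d) (x : Zd d) : Pt s (-x) = -Pt s x := map_neg (PtHom s) x

theorem Pt_sum {d : ℕ} (s : Fin d → Vec d) {ι : Type*} (t : Finset ι) (x : ι → Zd d) :
    Pt s (∑ i ∈ t, x i) = ∑ i ∈ t, Pt s (x i) := map_sum (PtHom s) x t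

theorem Pt_zsmul {d : ℕ} (s : Fin d → Vec d) (n : ℤ) (x : Zd d) : Pt s (n • x) = (n : ℝ) • Pt s x := by
  have : Pt s (n • x) = n • Pt s x := map_zsmul (PtHom s) n x
  rw [this, Int.cast_smul_eq_zsmul]

theorem Pt_bs {d : ℕ} (s : Fin d → Vec d) (i : Fin d) : Pt s (bs i) = s i := by
  unfold Pt bs
  rw [Finset.sum_eq_single i]
  · simp
  · intro j _ hj
    rw [Pi.single_eq_of_ne hj]; simp
  · simp

theorem Pt_inj {d : ℕ} {s : Fin d → Vec d} (hs : LinearIndependent ℝ s) :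
    Function.Injective (Pt s) := by
  intro x y h
  have h1 := (Fintype.linearIndependent_iff.mp hs) (fun i => ((x i : ℝ) - y i)) (by
    simp only [sub_smul, Finset.sum_sub_distrib]
    exact sub_eq_zero.mpr h)
  funext i
  have := h1 i
  have : (x i : ℝ) = y i := by linarith
  exact_mod_cast this

theorem abs_le_enorm {n : ℕ} (v : Vec n) (i : Fin n) : |v i| ≤ enorm v := by
  unfold enorm
  apply Real.le_sqrt_of_sq_le
  rw [sq_abs]
  exact Finset.single_le_sum (f := fun i => v i ^ 2) (fun _ _ => sq_nonneg _) (Finset.mem_univ i)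

theorem sqrt_sum_le {ι : Type*} (t : Finset ι) (f : ι → ℝ) (hf : ∀ i, 0 ≤ f i) :
    Real.sqrt (∑ i ∈ t, f i ^ 2) ≤ ∑ i ∈ t, f i := by
  rw [Real.sqrt_le_left (Finset.sum_nonneg fun i _ => hf i)]
  exact Finset.sum_sq_le_sq_sum_of_nonneg fun i _ => hf i

theorem enorm_le_sum {n : ℕ} (v : Vec n) : enorm v ≤ ∑ i, |v i| := by
  have := sqrt_sum_le Finset.univ (fun i => |v i|) (fun i => abs_nonneg _)
  simp only [sq_abs] at this
  exact this

theorem enorm_nonneg' {n : ℕ} (v : Vec n) : 0 ≤ enorm v := Real.sqrt_nonneg _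

theorem two_le_ang {n : ℕ} (v : Vec n) : 2 ≤ ang v := by
  unfold ang; linarith [enorm_nonneg' v]

theorem ang_comp {d : ℕ} {s : Fin d → Vec d} (hs : LinearIndependent ℝ s) :
    ∃ K : ℝ, 1 ≤ K ∧ ∀ z, aa z ≤ K * ang (Pt s z) ∧ ang (Pt s z) ≤ K * aa z := by
  let L : (Fin d → ℝ) →ₗ[ℝ] Vec d := Fintype.linearCombination ℝ s
  have hL : ∀ z : Zd d, L (fun i => (z i : ℝ)) = Pt s z := fun z => by
    simp only [L, Fintype.linearCombination_apply, Pt]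
  have hker : LinearMap.ker L = ⊥ := by
    rw [LinearMap.ker_eq_bot']
    intro x hx
    funext i
    exact (Fintype.linearIndependent_iff.mp hs) x hx i
  obtain ⟨K1, hK1, hanti⟩ := LinearMap.exists_antilipschitzWith L hker
  set K2 : ℝ := ∑ i, ∑ j, |s j i| with hK2
  have hK20 : 0 ≤ K2 := Finset.sum_nonneg fun i _ => Finset.sum_nonneg fun j _ => abs_nonneg _
  have hK10 : (0:ℝ) ≤ K1 := K1.coe_nonneg
  refine ⟨1 + K1 + K2, by linarith, fun z => ⟨?_, ?_⟩⟩
  · have h1 := hanti.le_mul_dist 0 (fun i => (z i : ℝ))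
    rw [map_zero, dist_zero_left, dist_zero_left, hL] at h1
    have h2 : ‖Pt s z‖ ≤ enorm (Pt s z) := by
      rw [pi_norm_le_iff_of_nonneg (enorm_nonneg' _)]
      intro i
      exact abs_le_enorm _ i
    have h3 : (nr z : ℝ) ≤ ‖(fun i => (z i : ℝ))‖ := by
      have : nr z ≤ ⌊‖(fun i => (z i : ℝ))‖⌋₊ := by
        rw [nr_le]
        intro i
        apply Nat.le_floor
        have := norm_le_pi_norm (fun i => (z i : ℝ)) i
        refine le_trans (le_of_eq ?_) this
        rw [Nat.cast_natAbs, Real.norm_eq_abs]; push_cast; rfl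
      exact (Nat.cast_le.mpr this).trans (Nat.floor_le (norm_nonneg _))
    have h4 : (K1:ℝ) * ‖Pt s z‖ ≤ K1 * enorm (Pt s z) := by gcongr
    have := enorm_nonneg' (Pt s z)
    unfold aa ang
    nlinarith
  · have h1 := enorm_le_sum (Pt s z)
    have h2 : ∑ i, |Pt s z i| ≤ nr z * K2 := by
      rw [hK2, Finset.mul_sum]
      refine Finset.sum_le_sum fun i _ => ?_
      rw [Finset.mul_sum]
      unfold Pt
      rw [Finset.sum_apply]
      refine (Finset.abs_sum_le_sum_abs _ _).trans (Finset.sum_le_sum fun j _ => ?_)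
      rw [Pi.smul_apply, smul_eq_mul, abs_mul]
      exact mul_le_mul_of_nonneg_right (abs_coord z j) (abs_nonneg _)
    have : (0:ℝ) ≤ nr z := Nat.cast_nonneg _
    unfold aa ang
    nlinarith

theorem bridge1 {d : ℕ} {s : Fin d → Vec d} {K : ℝ} (hK1 : 1 ≤ K)
    (hK : ∀ z, aa z ≤ K * ang (Pt s z) ∧ ang (Pt s z) ≤ K * aa z) {n α : ℕ} {F : Zd d → ℝ} {c : ℝ}
    (h : ∀ z, |F z| ≤ c * ang (Pt s z) ^ (-(n : ℝ)) * Real.log (ang (Pt s z)) ^ α) : Dec n α F := by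
  have hL0 : 0 ≤ Real.log K := Real.log_nonneg hK1
  have hl2 := log_two_pos
  set L : ℝ := 1 + Real.log K / Real.log 2 with hL
  have hL1 : 0 ≤ L := by positivity
  refine ⟨|c| * K ^ n * L ^ α, by positivity, fun z => ?_⟩
  have ha := two_le_ang (Pt s z)
  have ha0 : 0 < ang (Pt s z) := by linarith
  have hw := wt_pos z
  have h1 : ang (Pt s z) ^ (-(n : ℝ)) ≤ K ^ n * wt z ^ n := by
    rw [Real.rpow_neg ha0.le, Real.rpow_natCast, ← mul_pow, ← inv_pow]
    refine pow_le_pow_left₀ (by positivity) ?_ n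
    unfold wt
    rw [← div_eq_mul_inv, inv_eq_one_div, div_le_div_iff₀ ha0 (aa_pos z), one_mul]
    exact (hK z).1
  have h2 : Real.log (ang (Pt s z)) ≤ L * lg z :=
    (Real.log_le_log ha0 (hK z).2).trans (log_mul_le hK1 (two_le_aa z))
  have h0 : 0 ≤ Real.log (ang (Pt s z)) := Real.log_nonneg (by linarith)
  calc |F z| ≤ c * ang (Pt s z) ^ (-(n : ℝ)) * Real.log (ang (Pt s z)) ^ α := h z
    _ ≤ |c| * (K ^ n * wt z ^ n) * (L * lg z) ^ α := by
      have := le_abs_self c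
      gcongr
    _ = _ := by rw [mul_pow]; ring

theorem bridge2 {d : ℕ} {s : Fin d → Vec d} {K : ℝ} (hK1 : 1 ≤ K)
    (hK : ∀ z, aa z ≤ K * ang (Pt s z) ∧ ang (Pt s z) ≤ K * aa z) {n α : ℕ} {F : Zd d → ℝ}
    (h : Dec n α F) :
    ∃ c, ∀ z, |F z| ≤ c * (ang (Pt s z) ^ (-(n : ℝ)) * Real.log (ang (Pt s z)) ^ α) := by
  obtain ⟨c, hc, h⟩ := h
  have hL0 : 0 ≤ Real.log K := Real.log_nonneg hK1
  have hl2 := log_two_pos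
  set L : ℝ := 1 + Real.log K / Real.log 2 with hL
  have hL1 : 0 ≤ L := by positivity
  refine ⟨c * K ^ n * L ^ α, fun z => ?_⟩
  have ha := two_le_ang (Pt s z)
  have ha0 : 0 < ang (Pt s z) := by linarith
  have hw := wt_pos z
  have h1 : wt z ^ n ≤ K ^ n * ang (Pt s z) ^ (-(n : ℝ)) := by
    rw [Real.rpow_neg ha0.le, Real.rpow_natCast, ← inv_pow, ← mul_pow]
    refine pow_le_pow_left₀ hw.le ?_ n
    unfold wt
    rw [← div_eq_mul_inv, inv_eq_one_div, div_le_div_iff₀ (aa_pos z) ha0, one_mul]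
    exact (hK z).2
  have h2 : lg z ≤ L * Real.log (ang (Pt s z)) :=
    (Real.log_le_log (aa_pos z) (hK z).1).trans (log_mul_le hK1 ha)
  have h0 : 0 ≤ Real.log (ang (Pt s z)) := Real.log_nonneg (by linarith)
  have hl := lg_pos z
  calc |F z| ≤ c * wt z ^ n * lg z ^ α := h z
    _ ≤ c * (K ^ n * ang (Pt s z) ^ (-(n : ℝ))) * (L * Real.log (ang (Pt s z))) ^ α := by
      gcongr
    _ = _ := by rw [mul_pow]; ring

theorem sum_finset_succ {j : ℕ} (F : Finset (Fin (j + 1)) → ℝ) :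
    ∑ S, F S = ∑ S : Finset (Fin j), F (S.map (Fin.succEmb j)) +
      ∑ S : Finset (Fin j), F (insert 0 (S.map (Fin.succEmb j))) := by
  have h0 : (0 : Fin (j + 1)) ∉ (Finset.univ : Finset (Fin j)).map (Fin.succEmb j) := by simp
  have hu : (Finset.univ : Finset (Finset (Fin (j + 1)))) =
      (insert 0 ((Finset.univ : Finset (Fin j)).map (Fin.succEmb j))).powerset := by
    rw [← Finset.powerset_univ, Fin.univ_succ]; simp [Finset.map_eq_image]
  have hp : ((Finset.univ : Finset (Fin j)).map (Fin.succEmb j)).powerset =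
      (Finset.univ : Finset (Finset (Fin j))).map (Finset.mapEmbedding (Fin.succEmb j)).toEmbedding := by
    ext S
    simp only [Finset.mem_powerset, Finset.mem_map, Finset.mem_univ, true_and]
    rw [Finset.subset_map_iff]
    constructor
    · rintro ⟨u, _, rfl⟩; exact ⟨u, rfl⟩
    · rintro ⟨u, rfl⟩; exact ⟨u, Finset.subset_univ _, rfl⟩
  rw [hu, Finset.sum_powerset_insert h0, hp, Finset.sum_map, Finset.sum_map]
  rfl

theorem Dl_ofFn {d j : ℕ} (τ : Fin j → Zd d) (f : Zd d → ℝ) (z : Zd d) :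
    Dl (List.ofFn τ) f z = ∑ S : Finset (Fin j), (-1 : ℝ) ^ (j - S.card) * f (z + ∑ i ∈ S, τ i) := by
  induction j generalizing z with
  | zero =>
    have : (Finset.univ : Finset (Finset (Fin 0))) = {∅} := by decide
    rw [this]; simp [Dl_nil]
  | succ j ih =>
    rw [List.ofFn_succ, Dl_cons, Df_apply, ih, ih, sum_finset_succ, sub_eq_add_neg,
      ← Finset.sum_neg_distrib]
    conv_rhs => rw [add_comm]
    congr 1
    · refine Finset.sum_congr rfl fun S _ => ?_
      have h0 : (0 : Fin (j + 1)) ∉ S.map (Fin.succEmb j) := by simp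
      rw [Finset.card_insert_of_notMem h0, Finset.card_map, Finset.sum_insert h0, Finset.sum_map,
        Nat.add_sub_add_right, add_assoc]
      rfl
    · refine Finset.sum_congr rfl fun S _ => ?_
      have hc : S.card ≤ j := by simpa using Finset.card_le_univ S
      rw [Finset.card_map, Finset.sum_map, Nat.sub_add_comm hc, pow_succ]
      simp

theorem Dmulti_Pt {d N j : ℕ} (s : Fin d → Vec d) (τ : Fin j → Zd d) (u : Vec d → Vec N) (z : Zd d)
    (i : Fin N) : Dmulti (fun m => Pt s (τ m)) u (Pt s z) i =
      Dl (List.ofFn τ) (fun z => u (Pt s z) i) z := by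
  rw [Dl_ofFn]
  unfold Dmulti
  rw [Finset.sum_apply]
  refine Finset.sum_congr rfl fun S _ => ?_
  rw [Pi.smul_apply, smul_eq_mul, Pt_add, Pt_sum]

def Rz {d : ℕ} (s : Fin d → Vec d) (hs : LinearIndependent ℝ s) (R : Finset (Vec d)) : Finset (Zd d) :=
  R.preimage (Pt s) (Pt_inj hs).injOn

theorem mem_Rz {d : ℕ} {s : Fin d → Vec d} {hs : LinearIndependent ℝ s} {R : Finset (Vec d)}
    {z : Zd d} : z ∈ Rz s hs R ↔ Pt s z ∈ R := by simp [Rz]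

theorem sum_Rz {d : ℕ} {M : Type*} [AddCommMonoid M] {s : Fin d → Vec d}
    {hs : LinearIndependent ℝ s} {R : Finset (Vec d)}
    (hR : ∀ ρ ∈ R, ∃ z, Pt s z = ρ) (F : Vec d → M) :
    ∑ ρ ∈ R, F ρ = ∑ z ∈ Rz s hs R, F (Pt s z) := by
  unfold Rz
  rw [Finset.sum_preimage (Pt s) R (Pt_inj hs).injOn F]
  intro x hx hx2
  exact absurd (hR x hx) hx2

theorem Hop_Pt {d N : ℕ} {s : Fin d → Vec d}
    {hs : LinearIndependent ℝ s} {R : Finset (Vec d)}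
    (hR : ∀ ρ ∈ R, ∃ z, Pt s z = ρ) (C : Vec d → Vec d → Fin N → Fin N → ℝ) (u : Vec d → Vec N)
    (z : Zd d) (i : Fin N) :
    Hop d N R C u (Pt s z) i =
      Hs (Rz s hs R) (fun σ ρ => C (Pt s σ) (Pt s ρ)) (fun j z => u (Pt s z) j) i z := by
  rw [Hs_apply]
  unfold Hop
  rw [sum_Rz (hs := hs) hR, Finset.sum_apply]
  refine Finset.sum_congr rfl fun σ _ => ?_
  rw [sum_Rz (hs := hs) hR, Finset.sum_apply]
  refine Finset.sum_congr rfl fun ρ _ => ?_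
  simp only [Pi.sub_apply, mulV, D1, Df_apply, ← Finset.sum_sub_distrib, ← mul_sub]
  refine Finset.sum_congr rfl fun j _ => ?_
  simp only [Pt_add, Pt_neg, sub_eq_add_neg]

theorem closure_Rz {d : ℕ} {s : Fin d → Vec d}
    {hs : LinearIndependent ℝ s} {R : Finset (Vec d)}
    (hR : ∀ ρ ∈ R, ∃ z, Pt s z = ρ)
    (hspan : ∀ z, ∃ c : Vec d → ℤ, Pt s z = ∑ ρ ∈ R, (c ρ : ℝ) • ρ) :
    AddSubgroup.closure (Rz s hs R : Set (Zd d)) = ⊤ := by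
  rw [eq_top_iff]
  intro x _
  obtain ⟨c, hc⟩ := hspan x
  rw [sum_Rz (hs := hs) hR] at hc
  have : x = ∑ z ∈ Rz s hs R, c (Pt s z) • z := by
    apply Pt_inj hs
    rw [hc, Pt_sum]
    exact Finset.sum_congr rfl fun z _ => (Pt_zsmul s _ _).symm
  rw [this]
  exact AddSubgroup.sum_mem _ fun z hz =>
    AddSubgroup.zsmul_mem _ (AddSubgroup.subset_closure hz) _

theorem Dmulti_le_DnormJ {d N : ℕ} {R : Finset (Vec d)} (u : Vec d → Vec N) {j : ℕ}
    (ρs : Fin j → {x // x ∈ R}) (x : Vec d) :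
    enorm (Dmulti (fun i => (ρs i : Vec d)) u x) ≤ DnormJ R j u x := by
  unfold DnormJ
  apply Real.le_sqrt_of_sq_le
  generalize hF : (fun ρs : Fin j → {x // x ∈ R} =>
    (enorm (Dmulti (fun i => (ρs i : Vec d)) u x)) ^ 2) = F
  have h0 : ∀ r, 0 ≤ F r := fun r => by rw [← hF]; exact sq_nonneg _
  have h1 : (enorm (Dmulti (fun i => (ρs i : Vec d)) u x)) ^ 2 = F ρs := by rw [← hF]
  rw [h1]
  exact Finset.single_le_sum (fun r _ => h0 r) (Finset.mem_univ ρs)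

theorem comp_le_DnormJ {d N : ℕ} {s : Fin d → Vec d} {R : Finset (Vec d)} (u : Vec d → Vec N)
    (l : List (Zd d)) (hl : ∀ e ∈ l, Pt s e ∈ R) (z : Zd d) (i : Fin N) :
    |Dl l (fun z => u (Pt s z) i) z| ≤ DnormJ R l.length u (Pt s z) := by
  have h1 := Dmulti_Pt s l.get u z i
  rw [List.ofFn_get] at h1
  rw [← h1]
  refine (abs_le_enorm _ i).trans ?_
  exact Dmulti_le_DnormJ u (R := R) (fun m => ⟨Pt s (l.get m), hl _ (List.get_mem l m)⟩) (Pt s z)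

theorem DnormJ_bound {d N : ℕ} {s : Fin d → Vec d} {R : Finset (Vec d)}
    (hR : ∀ ρ ∈ R, ∃ z, Pt s z = ρ) {K : ℝ} (hK1 : 1 ≤ K)
    (hK : ∀ z, aa z ≤ K * ang (Pt s z) ∧ ang (Pt s z) ≤ K * aa z) {n β : ℕ} (j : ℕ)
    (w : Vec d → Vec N)
    (h : ∀ l : List (Zd d), l.length = j → (∀ e ∈ l, Pt s e ∈ R) → ∀ i,
      Dec n β (Dl l (fun z => w (Pt s z) i))) :
    ∃ c, ∀ z, DnormJ R j w (Pt s z) ≤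
      c * ang (Pt s z) ^ (-(n : ℝ)) * Real.log (ang (Pt s z)) ^ β := by
  choose τ hτ using fun ρ : {x // x ∈ R} => hR ρ.1 ρ.2
  have h1 : ∀ (ρs : Fin j → {x // x ∈ R}) (i : Fin N),
      Dec n β (Dl (List.ofFn fun m => τ (ρs m)) (fun z => w (Pt s z) i)) := by
    intro ρs i
    refine h _ (List.length_ofFn) ?_ i
    intro e he
    rw [List.mem_ofFn] at he
    obtain ⟨m, rfl⟩ := he
    rw [hτ]; exact (ρs m).2
  choose c hc using fun ρs i => bridge2 hK1 hK (h1 ρs i)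
  refine ⟨∑ ρs, ∑ i, c ρs i, fun z => ?_⟩
  unfold DnormJ
  refine (sqrt_sum_le _ _ fun ρs => enorm_nonneg' _).trans ?_
  rw [mul_assoc, Finset.sum_mul]
  refine Finset.sum_le_sum fun ρs _ => ?_
  refine (enorm_le_sum _).trans ?_
  rw [Finset.sum_mul]
  refine Finset.sum_le_sum fun i _ => ?_
  have := hc ρs i z
  rw [← Dmulti_Pt] at this
  simpa only [hτ] using this

theorem tendsto_tinv {d : ℕ} : TInv (fun f : Zd d → ℝ => Tendsto f cofinite (𝓝 0)) where
  zero := tendsto_const_nhds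
  add f g hf hg := by
    have := Tendsto.add hf hg
    rw [add_zero] at this
    exact this
  neg f hf := by
    have := Tendsto.neg hf
    rw [neg_zero] at this
    exact this
  sh e f hf := Sh_tendsto hf e

theorem h1_tendsto {d N : ℕ} {s : Fin d → Vec d} {R : Finset (Vec d)} {u : Vec d → Vec N}
    (h : Summable fun z => Dnorm1Sq R u (Pt s z)) (ρ : Zd d) (hρ : Pt s ρ ∈ R) (j : Fin N) :
    Tendsto (Df ρ (fun z => u (Pt s z) j)) cofinite (𝓝 0) := by
  have h1 : Tendsto (fun z => Real.sqrt (Dnorm1Sq R u (Pt s z))) cofinite (𝓝 0) := by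
    have := (Real.continuous_sqrt.tendsto 0).comp h.tendsto_cofinite_zero
    rwa [Real.sqrt_zero] at this
  refine squeeze_zero_norm (fun z => ?_) h1
  rw [Real.norm_eq_abs]
  apply Real.le_sqrt_of_sq_le
  unfold Dnorm1Sq
  refine le_trans ?_ (Finset.single_le_sum (f := fun ρ => (enorm (D1 ρ u (Pt s z))) ^ 2)
    (fun _ _ => sq_nonneg _) hρ)
  refine pow_le_pow_left₀ (abs_nonneg _) ?_ 2
  have := abs_le_enorm (D1 (Pt s ρ) u (Pt s z)) j
  rw [Df_apply, Pt_add]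
  exact this

theorem Pt_lattice {d : ℕ} (A : Matrix (Fin d) (Fin d) ℝ) {s : Fin d → Vec d}
    (hs : ∀ i, s i ∈ Lattice d A) (y : Zd d) : ∃ z, latticePt d A z = Pt s y := by
  choose t ht using hs
  refine ⟨∑ i, y i • t i, ?_⟩
  funext a
  unfold Pt
  rw [Finset.sum_apply]
  simp only [← ht, latticePt, Finset.sum_apply, Pi.smul_apply, smul_eq_mul, Int.cast_sum,
    Int.cast_mul, Finset.mul_sum]
  rw [Finset.sum_comm]
  refine Finset.sum_congr rfl fun i _ => Finset.sum_congr rfl fun j _ => ?_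
  ring

theorem DnormJ_le_mat {d N : ℕ} (R : Finset (Vec d)) (j : ℕ)
    (G : Vec d → Fin N → Fin N → ℝ) (k : Fin N) (x : Vec d) :
    DnormJ R j (col G k) x ≤ DnormJmat R j G x := by
  unfold DnormJmat
  apply Real.le_sqrt_of_sq_le
  exact Finset.single_le_sum (f := fun k => (DnormJ R j (col G k) x) ^ 2)
    (fun _ _ => sq_nonneg _) (Finset.mem_univ k)

/-- Theorem: truncated multipole expansion with localized remainder. -/
theorem multipole_expansion_remainder
    (d N : ℕ) (hd : 2 ≤ d)
    (A : Matrix (Fin d) (Fin d) ℝ) (hA : IsUnit A.det)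
    (R : Finset (Vec d)) (hR0 : (0 : Vec d) ∉ R)
    (hRlat : ∀ ρ ∈ R, ρ ∈ Lattice d A)
    (hRsym : ∀ ρ ∈ R, -ρ ∈ R)
    (hRspan : ∀ x ∈ Lattice d A, ∃ c : Vec d → ℤ, x = ∑ ρ ∈ R, (c ρ : ℝ) • ρ)
    (C : Vec d → Vec d → Fin N → Fin N → ℝ)
    (hCsym : ∀ σ ρ i j, C σ ρ i j = C ρ σ j i)
    (hCpt : ∀ σ ρ, C σ ρ = C (-σ) (-ρ))
    (hstab : IsStable d N A R C)
    (G : Vec d → Fin N → Fin N → ℝ) (hG : IsLatticeGreen d N A R C G)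
    (s : Fin d → Vec d) (hslat : ∀ i, s i ∈ Lattice d A)
    (hsind : LinearIndependent ℝ s)
    (hsspan : ∀ x ∈ Lattice d A, ∃ z : Fin d → ℤ, x = ∑ i, (z i : ℝ) • s i)
    (u : Vec d → Vec N) (hu : InH1 A R u)
    (p α : ℕ) (c : ℝ) (hc : 0 < c)
    (hbound : ∀ z : Fin d → ℤ,
      enorm (Hop d N R C u (latticePt d A z)) ≤
        c * ang (latticePt d A z) ^ (-(d : ℝ) - p) *
          Real.log (ang (latticePt d A z)) ^ α) :
    ∃ b : (i : ℕ) → Fin N → (Fin i → Fin d) → ℝ,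
      (∀ (i : ℕ) (k : Fin N), SymArr (b i k)) ∧
      (∀ j : ℕ, j = 1 ∨ j = 2 → ∃ Cj : ℝ, ∀ z : Fin d → ℤ,
          DnormJ R j
            (fun ℓ => u ℓ -
              ∑ i ∈ Finset.range p, ∑ k : Fin N, multipole d N s i (b i k) (col G k) ℓ)
            (latticePt d A z) ≤
            Cj * ang (latticePt d A z) ^ ((2 : ℝ) - d - p - j) *
              Real.log (ang (latticePt d A z)) ^ (α + 1)) ∧
      (∀ j : ℕ, 3 ≤ j →
        (∀ m : ℕ, 1 ≤ m → m ≤ j - 2 → ∀ z : Fin d → ℤ,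
            DnormJ R m (Hop d N R C u) (latticePt d A z) ≤
              c * ang (latticePt d A z) ^ (-(d : ℝ) - p - m) *
                Real.log (ang (latticePt d A z)) ^ α) →
        ∃ Cj : ℝ, ∀ z : Fin d → ℤ,
          DnormJ R j
            (fun ℓ => u ℓ -
              ∑ i ∈ Finset.range p, ∑ k : Fin N, multipole d N s i (b i k) (col G k) ℓ)
            (latticePt d A z) ≤
            Cj * ang (latticePt d A z) ^ ((2 : ℝ) - d - p - j) *
              Real.log (ang (latticePt d A z)) ^ (α + 1)) := by
  obtain ⟨d, rfl⟩ : ∃ d', d = d' + 1 := ⟨d - 1, by omega⟩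
  have hd1 : 1 ≤ d := by omega
  have hκ0 : ∀ z, ∃ y, latticePt (d + 1) A z = Pt s y := fun z => hsspan _ ⟨z, rfl⟩
  choose κ hκ using hκ0
  have hlam0 : ∀ y, ∃ z, latticePt (d + 1) A z = Pt s y := Pt_lattice A hslat
  choose lam hlam using hlam0
  have hlam_inj : Function.Injective lam := by
    intro x y h
    apply Pt_inj hsind
    rw [← hlam, ← hlam, h]
  have hR : ∀ ρ ∈ R, ∃ z, Pt s z = ρ := by
    intro ρ hρ
    obtain ⟨z, hz⟩ := hsspan ρ (hRlat ρ hρ)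
    exact ⟨z, hz.symm⟩
  have hcl : AddSubgroup.closure (Rz s hsind R : Set (Zd (d + 1))) = ⊤ := by
    apply closure_Rz hR
    intro z
    exact hRspan _ ⟨lam z, hlam z⟩
  obtain ⟨K, hK1, hK⟩ := ang_comp hsind
  have hsum : Summable fun z => Dnorm1Sq R u (Pt s z) := by
    have := hu.comp_injective hlam_inj
    refine this.congr fun z => ?_
    simp only [Function.comp, hlam]
  -- the data on the integer lattice
  let Rz' := Rz s hsind R
  let C' : Zd (d + 1) → Zd (d + 1) → Fin N → Fin N → ℝ := fun σ ρ => C (Pt s σ) (Pt s ρ)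
  let G' : Fin N → Fin N → Zd (d + 1) → ℝ := fun i k z => G (Pt s z) i k
  let U : Fin N → Zd (d + 1) → ℝ := fun j z => u (Pt s z) j
  have hHU : ∀ k, Hs Rz' C' U k = fun z => Hop (d + 1) N R C u (Pt s z) k := fun k => by
    funext z; exact (Hop_Pt (hs := hsind) hR C u z k).symm
  have hU : ∀ j e, Tendsto (Df e (U j)) cofinite (𝓝 0) := by
    intro j e
    refine tendsto_tinv.all_dir hcl ?_ e
    intro ρ hρ
    exact h1_tendsto hsum ρ (mem_Rz.1 hρ) j
  have hGH : ∀ k i, Hs Rz' C' (fun j => G' j k) i = if i = k then del else 0 := by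
    intro k i
    funext z
    have h1 := Hop_Pt (hs := hsind) hR C (col G k) z i
    have h2 := hG.1 k (lam z)
    rw [hlam] at h2
    rw [h2] at h1
    refine Eq.trans h1.symm ?_
    by_cases hz : z = 0
    · subst hz
      rw [Pt_zero, if_pos rfl]
      by_cases hik : i = k
      · subst hik; simp [del]
      · simp [hik]
    · have : Pt s z ≠ 0 := fun h => hz (Pt_inj hsind (h.trans (Pt_zero s).symm))
      rw [if_neg this]
      by_cases hik : i = k
      · simp [hik, del, hz]
      · simp [hik]
  have hGd : ∀ k i e l, Dec (d + l.length) 0 (Dl l (Df e (G' k i))) := by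
    intro k i e l
    rw [Dl_Df, ← Dl_cons]
    obtain ⟨cj, hcj⟩ := hG.2 (l.length + 1) (by omega)
    refine (Dec.tinv _ 0).all_lists hcl (l.length + 1) ?_ (e :: l) rfl
    intro l' hl' hl'R
    apply bridge1 hK1 hK (c := cj)
    intro z
    have h1 := comp_le_DnormJ (R := R) (col G i) l' (fun e he => mem_Rz.1 (hl'R e he)) z k
    have h2 := hcj (lam z)
    rw [hlam] at h2
    rw [hl'] at h1
    have h3 := (h1.trans (DnormJ_le_mat R (l.length + 1) G i (Pt s z))).trans h2
    rw [pow_zero, mul_one]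
    refine le_trans h3 (le_of_eq ?_)
    congr 2
    push_cast; ring
  have hf : ∀ k, Dec (d + 1 + p) α (Hs Rz' C' U k) := by
    intro k
    apply bridge1 hK1 hK (c := c)
    intro z
    have h2 := hbound (lam z)
    rw [hlam] at h2
    rw [hHU]
    refine ((abs_le_enorm _ k).trans h2).trans (le_of_eq ?_)
    congr 3
    push_cast; ring
  obtain ⟨b, hb, hW⟩ := coreB hd1 Rz' C' (fun σ ρ i j => hCsym _ _ i j) G' hGH hGd U hU hf
  refine ⟨b, fun i k => hb i k, ?_⟩
  generalize hw : (fun ℓ => u ℓ -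
    ∑ i ∈ Finset.range p, ∑ k : Fin N, multipole (d + 1) N s i (b i k) (col G k) ℓ) = w
  have hWw := hW (fun i z => w (Pt s z) i) (by
    intro i
    funext z
    rw [← hw]
    simp only [Pi.sub_apply, Finset.sum_apply, multipole, Pi.smul_apply, U]
    congr 1
    refine Finset.sum_congr rfl fun n _ => Finset.sum_congr rfl fun k _ =>
      Finset.sum_congr rfl fun σv _ => ?_
    congr 1
    have := Dmulti_Pt s (fun m => bs (σv m)) (col G k) z i
    simp only [Pt_bs] at this
    exact this)
  have key : ∀ (j n : ℕ), (2 : ℝ) - ((d + 1 : ℕ) : ℝ) - p - j = -(n : ℝ) →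
      (∀ l : List (Zd (d + 1)), l.length = j → (∀ e ∈ l, Pt s e ∈ R) → ∀ i,
        Dec n (α + 1) (Dl l (fun z => w (Pt s z) i))) →
      ∃ Cj : ℝ, ∀ z : Fin (d + 1) → ℤ, DnormJ R j w (latticePt (d + 1) A z) ≤
        Cj * ang (latticePt (d + 1) A z) ^ ((2 : ℝ) - ((d + 1 : ℕ) : ℝ) - p - j) *
          Real.log (ang (latticePt (d + 1) A z)) ^ (α + 1) := by
    intro j n hjn h
    obtain ⟨Cj, hCj⟩ := DnormJ_bound hR hK1 hK j w h
    refine ⟨Cj, fun z => ?_⟩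
    rw [hκ, hjn]
    exact hCj _
  refine ⟨?_, ?_⟩
  · rintro j (rfl | rfl)
    · apply key 1 (d + p) (by push_cast; ring)
      intro l hl _ i
      obtain ⟨a, rfl⟩ := List.length_eq_one_iff.1 hl
      exact (hWw i).1 a
    · apply key 2 (d + 1 + p) (by push_cast; ring)
      intro l hl _ i
      obtain ⟨a, e, rfl⟩ := List.length_eq_two.1 hl
      exact (hWw i).2.1 a e
  · intro j hj hm
    apply key j (d + 1 + p + (j - 2)) (by push_cast [Nat.cast_sub (show 2 ≤ j by omega)]; ring)
    intro l hl hlR i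
    rcases l with _ | ⟨a, _ | ⟨e, l0⟩⟩
    · simp only [List.length_nil] at hl; omega
    · simp only [List.length_cons, List.length_nil] at hl; omega
    · have hl0 : l0.length = j - 2 := by simp only [List.length_cons] at hl; omega
      rw [← hl0]
      refine (hWw i).2.2 l0 ?_ a e
      intro l' hl' k
      by_cases h0 : l'.length = 0
      · rw [List.length_eq_zero_iff] at h0
        subst h0
        exact hf k
      · apply bridge1 hK1 hK (c := c)
        intro z
        have h2 := hm l'.length (by omega) (by rw [← hl0]; exact hl'.length_le) (lam z)
        rw [hlam] at h2
        rw [hHU]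
        refine ((comp_le_DnormJ (R := R) (Hop (d + 1) N R C u) l' (fun x hx =>
          hlR x (by simp [hl'.subset hx])) z k).trans h2).trans (le_of_eq ?_)
        congr 3
        push_cast; ring

end Defect
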